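/- arXiv:2307.06453 — 4 statements merged into one kernel-verified Lean document; each statement's English description precedes it below -/
import Mathlib

section
/- Let (p_n) be a sequence in [0,1] such that n·p_n·(1−p_n) → ∞ as n → ∞. Then for every ε > 0, with high probability the binomial random digraph D ~ 𝔻(n, p_n) has a bisection which is an ε-almost-majority colouring. -/
open MeasureTheory Filter

/-- Bernoulli measure on `Bool` with parameter `p`. -/
noncomputable def bernoulliM (p : ℝ) : Measure Bool :=
  (Real.toNNReal p) • Measure.dirac true + (Real.toNNReal (1 - p)) • Measure.dirac false

instance (p : ℝ) : IsFiniteMeasure (bernoulliM p) := by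
  unfold bernoulliM; infer_instance

/-- The binomial random digraph measure `𝔻(n,p)`: each of the `n(n-1)` possible arcs
(ordered pairs of distinct vertices) is present independently with probability `p`
(the diagonal entries of the matrix are ignored, via `DiAdj`). -/
noncomputable def diMeasure (n : ℕ) (p : ℝ) : Measure (Fin n → Fin n → Bool) :=
  Measure.pi fun _ => Measure.pi fun _ => bernoulliM p

/-- The arc relation of the digraph encoded by the matrix `A`. -/
def DiAdj {n : ℕ} (A : Fin n → Fin n → Bool) (v w : Fin n) : Prop :=
  v ≠ w ∧ A v w = true

/-- A vertex `v` is *majority-coloured* with respect to the colouring `c` if at most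
half of its out-neighbours have the same colour as `v`. -/
def MajorityAt {n : ℕ} {α : Type*} (A : Fin n → Fin n → Bool) (c : Fin n → α) (v : Fin n) :
    Prop :=
  2 * ({w | DiAdj A v w ∧ c w = c v} : Set (Fin n)).ncard ≤
    ({w | DiAdj A v w} : Set (Fin n)).ncard

/-- A red-blue colouring of `Fin n` is a *bisection* if its two colour classes
differ in size by at most 1. -/
def IsBisection {n : ℕ} (c : Fin n → Bool) : Prop :=
  |(({v | c v = true} : Set (Fin n)).ncard : ℤ) -
    (({v | c v = false} : Set (Fin n)).ncard : ℤ)| ≤ 1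

/-! The out-neighbourhoods of distinct vertices are independent, so for a fixed bisection the events
that the vertices are majority-coloured are independent too. Each has probability at least `1/2`,
by exchanging the two colour classes, and by a Fourier anticoncentration bound a tie is rare: its
probability is at most some `δ → 0`. Hence for two bisections agreeing on `k` vertices, both are
majority colourings with probability at most `a ^ k * b ^ (n - k)`, where `a + b ≤ 1/2 + 6 δ`, and
so at most `(1/2 + 6 δ) ^ n / (n choose k)` by the binomial theorem. The second moment method then
gives a bisection majority-colouring every vertex with probability at least
`1 / ((n + 1) ^ 2 * (1 + 12 δ) ^ n)`, a subexponentially small quantity. Resampling the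
out-neighbourhood of one vertex changes the least possible number of non-majority-coloured vertices
by at most one, so McDiarmid's inequality bounds both tails by `exp (-ε ^ 2 n / 2)` at distance
`ε n / 2` from the mean. The lower tail forces the mean below `ε n / 2`, since the minimum is zero
with larger probability than that, and the upper tail then keeps it below `ε n` with high
probability.
-/

namespace MajorityBisection

open ProbabilityTheory Finset
open scoped NNReal Real

section AntiConcentration

theorem integral_exp_int_mul_I (k : ℤ) :
    ∫ t in (-π)..π, Complex.exp (k * Complex.I * t) = if k = 0 then (2 * π : ℂ) else 0 := by
  split_ifs with hk
  · simp [hk, two_mul]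
  · have hexp : Complex.exp (k * Complex.I * π) = Complex.exp (k * Complex.I * (-π : ℝ)) :=
      Complex.exp_eq_exp_iff_exists_int.2 ⟨k, by push_cast; ring⟩
    rw [integral_exp_mul_complex (mul_ne_zero (Int.cast_ne_zero.2 hk) Complex.I_ne_zero), hexp,
      sub_self, zero_div]

theorem two_pi_mul_measureReal_eq_le_integral_norm_charFun {Ω : Type*} [MeasurableSpace Ω]
    {P : Measure Ω} [IsProbabilityMeasure P] {X : Ω → ℤ} (hX : Measurable X) (j : ℤ) :
    2 * π * P.real {ω | X ω = j} ≤ ∫ t in (-π)..π, ‖charFun (P.map fun ω ↦ (X ω : ℝ)) t‖ := by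
  let e (t : ℝ) (ω : Ω) : ℂ := Complex.exp (((X ω - j : ℤ) : ℂ) * Complex.I * t)
  have he : Integrable (Function.uncurry e) ((volume.restrict (Set.uIoc (-π) π)).prod P) := by
    have : IsFiniteMeasure (volume.restrict (Set.uIoc (-π) π)) := by
      rw [Set.uIoc]; infer_instance
    have hcast : Measurable fun ω ↦ ((X ω - j : ℤ) : ℂ) :=
      (measurable_of_countable _).comp (hX.sub_const j)
    refine Integrable.of_bound (C := 1) (Measurable.aestronglyMeasurable ?_)
      (.of_forall fun z ↦ by simp [e, Function.uncurry, Complex.norm_exp])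
    exact (((hcast.comp measurable_snd).mul_const _).mul (by fun_prop)).cexp
  have hfourier (t : ℝ) : ∫ ω, e t ω ∂P =
      Complex.exp (-j * Complex.I * t) * charFun (P.map fun ω ↦ (X ω : ℝ)) t := by
    rw [charFun_apply_real, integral_map (by fun_prop) (by fun_prop), ← integral_const_mul]
    congr 1 with ω
    rw [← Complex.exp_add]
    simp only [e]
    push_cast
    ring_nf
  have hinv : ∫ t in (-π)..π, ∫ ω, e t ω ∂P = (2 * π * P.real {ω | X ω = j} : ℝ) := by
    rw [intervalIntegral_integral_swap he]
    simp only [e, integral_exp_int_mul_I, sub_eq_zero]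
    have := integral_indicator_const (μ := P) (2 * π : ℂ) (hX (measurableSet_singleton j))
    simpa [Set.indicator_apply, Set.preimage, mul_comm] using this
  calc 2 * π * P.real {ω | X ω = j} = ‖∫ t in (-π)..π, ∫ ω, e t ω ∂P‖ := by
        rw [hinv, Complex.norm_of_nonneg (by positivity)]
    _ ≤ ∫ t in (-π)..π, ‖∫ ω, e t ω ∂P‖ :=
        intervalIntegral.norm_integral_le_integral_norm (by linarith [Real.pi_pos])
    _ = ∫ t in (-π)..π, ‖charFun (P.map fun ω ↦ (X ω : ℝ)) t‖ := by
        simp [hfourier, Complex.norm_exp]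

theorem norm_charFun_map_bool_le (μ : Measure Bool) [IsProbabilityMeasure μ] {a t : ℝ}
    (ha : |a| = 1) (ht : |t| ≤ π) :
    ‖charFun (μ.map fun b ↦ if b then a else 0) t‖ ≤
      Real.exp (-(2 * (μ.real {true} * μ.real {false}) / π ^ 2) * t ^ 2) := by
  set p := μ.real {true}
  set q := μ.real {false}
  have hpq : p + q = 1 := by
    have := sum_measureReal_singleton (μ := μ) univ
    rwa [Fintype.sum_bool, coe_univ, probReal_univ] at this
  have hchar : charFun (μ.map fun b ↦ if b then a else 0) t =
      (q + p * Real.cos (t * a) : ℝ) + (p * Real.sin (t * a) : ℝ) * Complex.I := by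
    rw [charFun_apply_real, integral_map (by fun_prop) (by fun_prop),
      integral_fintype (.of_finite)]
    simp [Complex.exp_mul_I, p, q]
    ring
  have hcos := Real.cos_le_one_sub_mul_cos_sq (x := t * a) (by rwa [abs_mul, ha, mul_one])
  have ha2 : a ^ 2 = 1 := by rw [← sq_abs, ha, one_pow]
  refine le_of_sq_le_sq ?_ (Real.exp_pos _).le
  rw [hchar, ← Complex.normSq_eq_norm_sq, Complex.normSq_add_mul_I, ← Real.exp_nat_mul]
  calc (q + p * Real.cos (t * a)) ^ 2 + (p * Real.sin (t * a)) ^ 2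
      = 1 - 2 * (p * q) * (1 - Real.cos (t * a)) := by
        linear_combination p ^ 2 * Real.sin_sq_add_cos_sq (t * a) + (p + q + 1) * hpq
    _ ≤ 1 - 2 * (p * q) * (2 / π ^ 2 * (t * a) ^ 2) := by
        gcongr
        linarith only [hcos]
    _ ≤ Real.exp (-(2 * (p * q) * (2 / π ^ 2 * (t * a) ^ 2))) := by
        linarith [Real.add_one_le_exp (-(2 * (p * q) * (2 / π ^ 2 * (t * a) ^ 2)))]
    _ = _ := by
        rw [mul_pow, ha2]
        push_cast
        ring_nf

theorem norm_charFun_map_signed_sum_le {ι : Type*} [Fintype ι] (μ : Measure Bool)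
    [IsProbabilityMeasure μ] {a : ι → ℝ} (ha : ∀ i, |a i| = 1) {t : ℝ} (ht : |t| ≤ π) :
    ‖charFun ((Measure.pi fun _ : ι ↦ μ).map fun r ↦ ∑ i, if r i then a i else 0) t‖ ≤
      Real.exp (-(2 * (Fintype.card ι * (μ.real {true} * μ.real {false})) / π ^ 2) * t ^ 2) := by
  have hindep : iIndepFun (fun i (r : ι → Bool) ↦ if r i then a i else 0)
      (Measure.pi fun _ : ι ↦ μ) :=
    iIndepFun_pi (X := fun i (x : Bool) ↦ if x then a i else 0)
      fun i ↦ (measurable_of_finite _).aemeasurable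
  have hmarginal (i : ι) : (Measure.pi fun _ : ι ↦ μ).map (fun r ↦ if r i then a i else 0) =
      μ.map fun x ↦ if x then a i else 0 := by
    have heval := measurePreserving_eval (fun _ : ι ↦ μ) i
    conv_rhs => rw [← heval.map_eq, Measure.map_map (measurable_of_finite _) heval.measurable]
    rfl
  rw [hindep.charFun_map_fun_sum_eq_prod fun i ↦ (measurable_of_finite _).aemeasurable,
    prod_apply, norm_prod]
  simp only [hmarginal]
  calc ∏ i, ‖charFun (μ.map fun x ↦ if x then a i else 0) t‖
      ≤ ∏ _ : ι, Real.exp (-(2 * (μ.real {true} * μ.real {false}) / π ^ 2) * t ^ 2) :=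
        prod_le_prod (fun _ _ ↦ norm_nonneg _)
          fun i _ ↦ norm_charFun_map_bool_le μ (ha i) ht
    _ = _ := by
        rw [prod_const, ← Real.exp_nat_mul, card_univ]
        ring_nf

theorem measureReal_pi_signed_sum_eq_le {ι : Type*} [Fintype ι] {μ : Measure Bool}
    [IsProbabilityMeasure μ] {a : ι → ℤ} (ha : ∀ i, |a i| = 1) (j : ℤ)
    (hpos : 0 < Fintype.card ι * (μ.real {true} * μ.real {false})) :
    (Measure.pi fun _ : ι ↦ μ).real {r | (∑ i, if r i then a i else 0) = j} ≤
      √(π / (8 * (Fintype.card ι * (μ.real {true} * μ.real {false})))) := by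
  set P := Measure.pi fun _ : ι ↦ μ
  set b := Fintype.card ι * (μ.real {true} * μ.real {false})
  have hexp : Integrable fun t : ℝ ↦ Real.exp (-(2 * b / π ^ 2) * t ^ 2) :=
    integrable_exp_neg_mul_sq (by positivity)
  have hnorm (t : ℝ) (ht : t ∈ Set.Icc (-π) π) :
      ‖charFun (P.map fun r ↦ ((∑ i, if r i then a i else 0 : ℤ) : ℝ)) t‖ ≤
        Real.exp (-(2 * b / π ^ 2) * t ^ 2) := by
    push_cast
    exact norm_charFun_map_signed_sum_le μ (fun i ↦ by exact_mod_cast ha i) (abs_le.2 ht)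
  have hcont : Continuous (charFun (P.map fun r ↦ ((∑ i, if r i then a i else 0 : ℤ) : ℝ))) :=
    continuous_charFun
  refine le_of_mul_le_mul_left ?_ Real.two_pi_pos
  calc 2 * π * P.real {r | (∑ i, if r i then a i else 0) = j}
      ≤ ∫ t in (-π)..π, ‖charFun (P.map fun r ↦ ((∑ i, if r i then a i else 0 : ℤ) : ℝ)) t‖ :=
        two_pi_mul_measureReal_eq_le_integral_norm_charFun (measurable_of_finite _) j
    _ ≤ ∫ t in (-π)..π, Real.exp (-(2 * b / π ^ 2) * t ^ 2) :=
        intervalIntegral.integral_mono_on (by linarith [Real.pi_pos])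
          (hcont.norm.intervalIntegrable _ _) hexp.intervalIntegrable hnorm
    _ ≤ ∫ t, Real.exp (-(2 * b / π ^ 2) * t ^ 2) := by
        rw [intervalIntegral.integral_of_le (by linarith [Real.pi_pos])]
        exact setIntegral_le_integral hexp (.of_forall fun t ↦ (Real.exp_pos _).le)
    _ = √((2 * π) ^ 2 * (π / (8 * b))) := by
        rw [integral_gaussian]
        congr 1
        field_simp
        ring
    _ = 2 * π * √(π / (8 * b)) := by
        rw [Real.sqrt_mul (by positivity), Real.sqrt_sq (by positivity)]

end AntiConcentration

section BoundedDifferences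

theorem hasSubgaussianMGF_prod_add {α β : Type*} [MeasurableSpace α] [MeasurableSpace β]
    {μ : Measure α} {ν : Measure β} [SFinite μ] [SFinite ν] {X : α × β → ℝ} {Y : β → ℝ}
    {cX cY : ℝ≥0} (hXm : Measurable X) (hYm : Measurable Y)
    (hX : ∀ b, HasSubgaussianMGF (fun a ↦ X (a, b)) cX μ) (hY : HasSubgaussianMGF Y cY ν) :
    HasSubgaussianMGF (fun z ↦ X z + Y z.2) (cX + cY) (μ.prod ν) := by
  have hsplit (t : ℝ) (b : β) :
      ∫ a, Real.exp (t * (X (a, b) + Y b)) ∂μ =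
        mgf (fun a ↦ X (a, b)) μ t * Real.exp (t * Y b) := by
    simp only [mul_add, Real.exp_add, integral_mul_const, mgf]
  have hfiber (t : ℝ) (b : β) :
      mgf (fun a ↦ X (a, b)) μ t * Real.exp (t * Y b) ≤
        Real.exp (cX * t ^ 2 / 2) * Real.exp (t * Y b) :=
    mul_le_mul_of_nonneg_right ((hX b).mgf_le t) (Real.exp_pos _).le
  have hmeas (t : ℝ) : Measurable fun z : α × β ↦ Real.exp (t * (X z + Y z.2)) := by fun_prop
  have hint (t : ℝ) : Integrable (fun z : α × β ↦ Real.exp (t * (X z + Y z.2))) (μ.prod ν) := by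
    refine (integrable_prod_iff' (hmeas t).aestronglyMeasurable).2 ⟨.of_forall fun b ↦ ?_, ?_⟩
    · simpa only [mul_add, Real.exp_add] using ((hX b).integrable_exp_mul t).mul_const _
    · refine ((hY.integrable_exp_mul t).const_mul (Real.exp (cX * t ^ 2 / 2))).mono'
        (hmeas t).norm.stronglyMeasurable.integral_prod_left'.aestronglyMeasurable
        (.of_forall fun b ↦ ?_)
      simp only [Real.norm_eq_abs, Real.abs_exp, hsplit,
        abs_of_nonneg (mul_nonneg mgf_nonneg (Real.exp_pos _).le)]
      exact hfiber t b
  refine ⟨hint, fun t ↦ ?_⟩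
  calc mgf (fun z ↦ X z + Y z.2) (μ.prod ν) t
      = ∫ b, mgf (fun a ↦ X (a, b)) μ t * Real.exp (t * Y b) ∂ν := by
        rw [mgf, integral_prod_symm _ (hint t)]
        simp only [hsplit]
    _ ≤ ∫ b, Real.exp (cX * t ^ 2 / 2) * Real.exp (t * Y b) ∂ν :=
        integral_mono (by simpa only [hsplit] using (hint t).integral_prod_right)
          ((hY.integrable_exp_mul t).const_mul _) (hfiber t)
    _ = Real.exp (cX * t ^ 2 / 2) * mgf Y ν t := integral_const_mul _ _
    _ ≤ Real.exp (cX * t ^ 2 / 2) * Real.exp (cY * t ^ 2 / 2) := by gcongr; exact hY.mgf_le t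
    _ = Real.exp ((cX + cY : ℝ≥0) * t ^ 2 / 2) := by rw [← Real.exp_add]; push_cast; ring_nf

theorem hasSubgaussianMGF_of_le_add {α : Type*} [MeasurableSpace α] {μ : Measure α}
    [IsProbabilityMeasure μ] {f : α → ℝ} (hf : Measurable f) {c : ℝ≥0}
    (hc : ∀ a b, f a ≤ f b + c) :
    HasSubgaussianMGF (fun a ↦ f a - ∫ b, f b ∂μ) ((c / 2) ^ 2) μ := by
  have : Nonempty α := μ.nonempty_of_neZero
  have hlb (a : α) : f a - c ∈ lowerBounds (Set.range f) := by
    rintro _ ⟨b, rfl⟩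
    linarith [hc a b]
  have hmem (a : α) : f a ∈ Set.Icc (⨅ b, f b) ((⨅ b, f b) + c) :=
    ⟨ciInf_le ⟨_, hlb a⟩ a, by linarith [le_ciInf fun b ↦ hlb a ⟨b, rfl⟩]⟩
  simpa using hasSubgaussianMGF_of_mem_Icc (μ := μ) hf.aemeasurable (.of_forall hmem)

theorem integrable_of_le_add {α : Type*} [MeasurableSpace α] {μ : Measure α}
    [IsProbabilityMeasure μ] {f : α → ℝ} (hf : Measurable f) {c : ℝ≥0}
    (hc : ∀ a b, f a ≤ f b + c) : Integrable f μ := by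
  simpa only [Pi.add_def, sub_add_cancel] using
    (hasSubgaussianMGF_of_le_add (μ := μ) hf hc).integrable.add (integrable_const (∫ b, f b ∂μ))

theorem hasSubgaussianMGF_prod_of_le_add {α β : Type*} [MeasurableSpace α] [MeasurableSpace β]
    {μ : Measure α} {ν : Measure β} [IsProbabilityMeasure μ] [IsProbabilityMeasure ν]
    {f : α × β → ℝ} (hf : Measurable f) {c c' : ℝ≥0} (hc : ∀ a b y, f (a, y) ≤ f (b, y) + c)
    (hmean : HasSubgaussianMGF
      (fun y ↦ ∫ a, f (a, y) ∂μ - ∫ y, ∫ a, f (a, y) ∂μ ∂ν) c' ν) :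
    HasSubgaussianMGF (fun z ↦ f z - ∫ w, f w ∂μ.prod ν) ((c / 2) ^ 2 + c') (μ.prod ν) := by
  have hg : Measurable fun y ↦ ∫ a, f (a, y) ∂μ :=
    hf.stronglyMeasurable.integral_prod_left'.measurable
  have hsub := hasSubgaussianMGF_prod_add (hf.sub (hg.comp measurable_snd)) (hg.sub_const _)
    (fun y ↦ hasSubgaussianMGF_of_le_add (hf.comp measurable_prodMk_right) (hc · · y)) hmean
  simp only [Pi.sub_apply, Function.comp_apply, sub_add_sub_cancel] at hsub
  have hint : Integrable f (μ.prod ν) := by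
    simpa only [Pi.add_def, sub_add_cancel] using hsub.integrable.add
      (integrable_const (∫ y, ∫ a, f (a, y) ∂μ ∂ν))
  rwa [integral_prod_symm f hint]

theorem hasSubgaussianMGF_pi_of_bounded_differences {n : ℕ} {Ω : Fin n → Type*}
    [∀ i, MeasurableSpace (Ω i)] (μ : ∀ i, Measure (Ω i)) [∀ i, IsProbabilityMeasure (μ i)]
    {f : (∀ i, Ω i) → ℝ} (hf : Measurable f) {c : Fin n → ℝ≥0}
    (hc : ∀ x i a, f (Function.update x i a) ≤ f x + c i) :
    HasSubgaussianMGF (fun x ↦ f x - ∫ y, f y ∂Measure.pi μ) (∑ i, (c i / 2) ^ 2)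
      (Measure.pi μ) := by
  induction n with
  | zero =>
    have hconst (x : ∀ i, Ω i) : f x - ∫ y, f y ∂Measure.pi μ = 0 := by
      simp [integral_congr_ae (.of_forall fun y ↦ congrArg f (Subsingleton.elim y x))]
    simp [hconst]
  | succ n ih =>
    let e := (MeasurableEquiv.piFinSuccAbove Ω 0).symm
    have he : MeasurePreserving e ((μ 0).prod (Measure.pi fun i ↦ μ (Fin.succAbove 0 i)))
        (Measure.pi μ) := (measurePreserving_piFinSuccAbove μ 0).symm
    have hF : Measurable (f ∘ e) := hf.comp e.measurable
    have hzero (a b y) : f (e (a, y)) ≤ f (e (b, y)) + c 0 := by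
      have := hc (e (b, y)) 0 a
      rwa [show Function.update (e (b, y)) 0 a = e (a, y) from
        Fin.update_insertNth 0 b a y] at this
    have hsucc (b y) (i : Fin n) (a) :
        f (e (b, Function.update y i a)) ≤ f (e (b, y)) + c (Fin.succAbove 0 i) := by
      have := hc (e (b, y)) (Fin.succAbove 0 i) a
      rwa [show Function.update (e (b, y)) (Fin.succAbove 0 i) a = e (b, Function.update y i a) from
        (Fin.insertNth_update _ _ _ _ _).symm] at this
    have hint (y) : Integrable (fun a ↦ f (e (a, y))) (μ 0) :=
      integrable_of_le_add (hF.comp measurable_prodMk_right) (hzero · · y)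
    have hmean := ih (fun i ↦ μ (Fin.succAbove 0 i)) (f := fun y ↦ ∫ a, f (e (a, y)) ∂μ 0)
      (c := fun i ↦ c (Fin.succAbove 0 i)) hF.stronglyMeasurable.integral_prod_left'.measurable
      fun y i a ↦ (integral_mono (hint _) ((hint y).add (integrable_const _))
        (hsucc · y i a)).trans_eq <| by
          rw [integral_add' (hint y) (integrable_const _)]
          simp
    have hsub := hasSubgaussianMGF_prod_of_le_add hF hzero hmean
    simp only [Function.comp_apply, he.integral_comp'] at hsub
    rw [← he.symm.map_eq] at hsub
    rw [Fin.sum_univ_succAbove _ 0]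
    simpa only [Function.comp_def, MeasurableEquiv.apply_symm_apply] using
      hsub.of_map e.symm.measurable.aemeasurable

theorem measureReal_pi_le_exp_of_lt {n : ℕ} {Ω : Fin n → Type*}
    [∀ i, MeasurableSpace (Ω i)] (μ : ∀ i, Measure (Ω i)) [∀ i, IsProbabilityMeasure (μ i)]
    {f : (∀ i, Ω i) → ℝ} (hf : Measurable f) (hlip : ∀ x i a, f (Function.update x i a) ≤ f x + 1)
    {a s : ℝ} (hs : 0 ≤ s)
    (hlow : Real.exp (-2 * s ^ 2 / n) < (Measure.pi μ).real {x | f x ≤ a}) :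
    (Measure.pi μ).real {x | a + 2 * s ≤ f x} ≤ Real.exp (-2 * s ^ 2 / n) := by
  have hsub := hasSubgaussianMGF_pi_of_bounded_differences μ hf (c := fun _ ↦ 1) hlip
  have htail (X : (∀ i, Ω i) → ℝ)
      (hX : HasSubgaussianMGF X (∑ _ : Fin n, ((1 : ℝ≥0) / 2) ^ 2) (Measure.pi μ)) :
      (Measure.pi μ).real {x | s ≤ X x} ≤ Real.exp (-2 * s ^ 2 / n) := by
    convert hX.measure_ge_le hs using 2
    simp
    field_simp
  -- A mean of at least `a + s` would make `f ≤ a` a lower tail event, contradicting `hlow`.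
  have hmean : ∫ x, f x ∂Measure.pi μ < a + s := by
    by_contra! hge
    refine hlow.not_ge ((measureReal_mono fun x hx ↦ ?_).trans (htail _ hsub.neg))
    simp only [Set.mem_ofPred_eq, Pi.neg_apply] at hx ⊢
    linarith
  refine (measureReal_mono fun x hx ↦ ?_).trans (htail _ hsub)
  simp only [Set.mem_ofPred_eq] at hx ⊢
  linarith

end BoundedDifferences

section SecondMoment

theorem sq_integral_le {Ω : Type*} [MeasurableSpace Ω] {P : Measure Ω} [IsFiniteMeasure P]
    {X : Ω → ℝ} (hX : MemLp X 2 P) :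
    (∫ ω, X ω ∂P) ^ 2 ≤ P.real Set.univ * ∫ ω, X ω ^ 2 ∂P := by
  have hX₁ : Integrable X P := hX.integrable one_le_two
  have hlinear (t : ℝ) : Integrable (fun ω ↦ t ^ 2 - 2 * t * X ω) P :=
    (integrable_const _).sub (hX₁.const_mul _)
  have hquad (t : ℝ) : ∫ ω, (t - X ω) ^ 2 ∂P =
      P.real Set.univ * (t * t) + (-2 * ∫ ω, X ω ∂P) * t + ∫ ω, X ω ^ 2 ∂P := by
    calc ∫ ω, (t - X ω) ^ 2 ∂P = ∫ ω, (t ^ 2 - 2 * t * X ω + X ω ^ 2) ∂P := by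
          simp only [sub_sq]
      _ = (∫ _, t ^ 2 ∂P - ∫ ω, 2 * t * X ω ∂P) + ∫ ω, X ω ^ 2 ∂P := by
          rw [integral_add (hlinear t) hX.integrable_sq,
            integral_sub (integrable_const _) (hX₁.const_mul _)]
      _ = P.real Set.univ * (t * t) + (-2 * ∫ ω, X ω ∂P) * t + ∫ ω, X ω ^ 2 ∂P := by
          rw [integral_const, integral_const_mul, smul_eq_mul]
          ring
  have hdiscrim := discrim_le_zero fun t ↦ (hquad t).symm ▸ integral_nonneg fun ω ↦ sq_nonneg _
  rw [discrim] at hdiscrim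
  linarith

theorem sq_sum_measureReal_le_measureReal_univ_mul {α Ω : Type*} [MeasurableSpace Ω]
    {P : Measure Ω} [IsFiniteMeasure P] (s : Finset α) {E : α → Set Ω}
    (hE : ∀ i, MeasurableSet (E i)) :
    (∑ i ∈ s, P.real (E i)) ^ 2 ≤
      P.real Set.univ * ∑ i ∈ s, ∑ j ∈ s, P.real (E i ∩ E j) := by
  have hind {A : Set Ω} (hA : MeasurableSet A) : Integrable (A.indicator (1 : Ω → ℝ)) P :=
    (integrable_const 1).indicator hA
  have hfirst : ∫ ω, ∑ i ∈ s, (E i).indicator 1 ω ∂P = ∑ i ∈ s, P.real (E i) := by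
    rw [integral_finsetSum _ fun i _ ↦ hind (hE i)]
    exact sum_congr rfl fun i _ ↦ integral_indicator_one (hE i)
  have hsecond : ∫ ω, (∑ i ∈ s, (E i).indicator 1 ω) ^ 2 ∂P =
      ∑ i ∈ s, ∑ j ∈ s, P.real (E i ∩ E j) := by
    have hmul (i j : α) (ω : Ω) :
        (E i).indicator 1 ω * (E j).indicator 1 ω = (E i ∩ E j).indicator (1 : Ω → ℝ) ω :=
      congrFun Set.inter_indicator_one.symm ω
    simp only [sq, sum_mul_sum, hmul]
    rw [integral_finsetSum _ fun i _ ↦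
      integrable_finsetSum _ fun j _ ↦ hind ((hE i).inter (hE j))]
    refine sum_congr rfl fun i _ ↦ ?_
    rw [integral_finsetSum _ fun j _ ↦ hind ((hE i).inter (hE j))]
    exact sum_congr rfl fun j _ ↦ integral_indicator_one ((hE i).inter (hE j))
  rw [← hfirst, ← hsecond]
  exact sq_integral_le (memLp_finsetSum _ fun i _ ↦ (memLp_const 1).indicator (hE i))

theorem sq_sum_measureReal_le {α Ω : Type*} [MeasurableSpace Ω]
    {P : Measure Ω} [IsFiniteMeasure P] (s : Finset α) {E : α → Set Ω}
    (hE : ∀ i, MeasurableSet (E i)) :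
    (∑ i ∈ s, P.real (E i)) ^ 2 ≤
      P.real (⋃ i ∈ s, E i) * ∑ i ∈ s, ∑ j ∈ s, P.real (E i ∩ E j) := by
  set U := ⋃ i ∈ s, E i
  have hsub (i) (hi : i ∈ s) : E i ⊆ U := Set.subset_biUnion_of_mem hi
  have hfirst : ∑ i ∈ s, (P.restrict U).real (E i) = ∑ i ∈ s, P.real (E i) :=
    sum_congr rfl fun i hi ↦ by
      rw [measureReal_restrict_apply (hE i), Set.inter_eq_left.2 (hsub i hi)]
  have h := sq_sum_measureReal_le_measureReal_univ_mul (P := P.restrict U) s hE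
  rw [measureReal_restrict_apply_univ, hfirst] at h
  refine h.trans ?_
  gcongr
  exact ENNReal.toReal_mono (measure_ne_top _ _) (Measure.restrict_apply_le U _)

end SecondMoment

section FiniteProbability

theorem measureReal_inter_add_measureReal_inter_le {Ω : Type*} [MeasurableSpace Ω]
    (P : Measure Ω) [IsFiniteMeasure P] {s u : Set Ω} (t : Set Ω) (hs : MeasurableSet s)
    (hu : MeasurableSet u) : P.real (s ∩ t) + P.real (s ∩ u) ≤ P.real s + P.real (t ∩ u) := by
  rw [← measureReal_union_add_inter (hs.inter hu)]
  exact add_le_add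
    (measureReal_mono (Set.union_subset Set.inter_subset_left Set.inter_subset_left))
    (measureReal_mono (Set.inter_subset_inter Set.inter_subset_right Set.inter_subset_right))

theorem measureReal_pi_forall_mem {ι : Type*} [Fintype ι] {α : ι → Type*}
    [∀ i, MeasurableSpace (α i)] (P : ∀ i, Measure (α i)) [∀ i, SigmaFinite (P i)]
    (S : ∀ i, Set (α i)) :
    (Measure.pi P).real {A | ∀ i, A i ∈ S i} = ∏ i, (P i).real (S i) := by
  simp only [Measure.real, ← ENNReal.toReal_prod, ← Measure.pi_pi, Set.pi, Set.mem_univ,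
    forall_const]

end FiniteProbability

section Swap

variable {ι : Type*}

/-- The number of out-neighbours in `s` of a vertex whose row of the adjacency matrix is `r`; the
vertex itself counts as a neighbour if its diagonal entry is `true`. -/
def degIn (s : Finset ι) (r : ι → Bool) : ℕ := #{w ∈ s | r w}

theorem degIn_mono {s t : Finset ι} (h : s ⊆ t) (r : ι → Bool) : degIn s r ≤ degIn t r :=
  card_le_card (filter_subset_filter _ h)

theorem degIn_le_degIn_erase_add_one [DecidableEq ι] (s : Finset ι) (v : ι) (r : ι → Bool) :
    degIn s r ≤ degIn (s.erase v) r + 1 := by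
  rw [degIn, degIn, filter_erase]
  exact Nat.sub_le_iff_le_add.1 pred_card_le_card_erase

theorem degIn_piCongrLeft {s t : Finset ι} {σ : Equiv.Perm ι} (h : ∀ x, σ x ∈ t ↔ x ∈ s)
    (r : ι → Bool) : degIn t (Equiv.piCongrLeft (fun _ ↦ Bool) σ r) = degIn s r := by
  refine (card_equiv σ fun x ↦ ?_).symm
  simp [h, Equiv.piCongrLeft_apply_apply]

theorem exists_perm_mem_iff_of_disjoint {s t : Finset ι} (hst : Disjoint s t) (hcard : #s = #t) :
    ∃ σ : Equiv.Perm ι, (∀ x, σ x ∈ t ↔ x ∈ s) ∧ ∀ x, σ x ∈ s ↔ x ∈ t := by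
  classical
  let e : s ≃ t := s.equivOfCardEq hcard
  let f (x : ι) : ι :=
    if hs : x ∈ s then e ⟨x, hs⟩ else if ht : x ∈ t then e.symm ⟨x, ht⟩ else x
  have ht (x) (hx : x ∈ t) : x ∉ s := disjoint_right.1 hst hx
  have hf : Function.Involutive f := by
    intro x
    by_cases hxs : x ∈ s
    · simp [f, hxs, ht]
    · by_cases hxt : x ∈ t <;> simp [f, hxs, hxt]
  have hfst (x) (hx : x ∈ s) : f x ∈ t := by simp [f, hx]
  have hfts (x) (hx : x ∈ t) : f x ∈ s := by simp [f, hx, ht x hx]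
  refine ⟨hf.toPerm, fun x ↦ ⟨fun hx ↦ ?_, hfst x⟩, fun x ↦ ⟨fun hx ↦ ?_, hfts x⟩⟩
  · simpa only [Function.Involutive.coe_toPerm, hf x] using hfts _ hx
  · simpa only [Function.Involutive.coe_toPerm, hf x] using hfst _ hx

variable [Fintype ι] {μ : Measure Bool} [IsProbabilityMeasure μ]

theorem half_le_measureReal_degIn_le {s t : Finset ι} (hst : Disjoint s t) (hcard : #s ≤ #t) :
    1 / 2 ≤ (Measure.pi fun _ : ι ↦ μ).real {r | degIn s r ≤ degIn t r} := by
  -- Swapping `s` with a subset `u` of `t` of the same size preserves the measure.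
  obtain ⟨u, hut, hu⟩ := exists_subset_card_eq hcard
  obtain ⟨σ, hσu, hσs⟩ := exists_perm_mem_iff_of_disjoint (hst.mono_right hut) hu.symm
  set P := Measure.pi fun _ : ι ↦ μ
  have hswap : P.real {r | degIn u r ≤ degIn s r} = P.real {r | degIn s r ≤ degIn u r} := by
    have hσ := measurePreserving_piCongrLeft (fun _ : ι ↦ μ) σ
    rw [← hσ.measureReal_preimage (Set.toFinite _).measurableSet.nullMeasurableSet]
    simp only [Set.preimage_ofPred_eq, MeasurableEquiv.coe_piCongrLeft, degIn_piCongrLeft hσu,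
      degIn_piCongrLeft hσs, P]
  have hcover : {r | degIn s r ≤ degIn u r} ∪ {r | degIn u r ≤ degIn s r} = Set.univ :=
    Set.eq_univ_of_forall fun r ↦ le_total (degIn s r) (degIn u r)
  have hsum := measureReal_union_le (μ := P) {r | degIn s r ≤ degIn u r}
    {r | degIn u r ≤ degIn s r}
  rw [hcover, probReal_univ, hswap] at hsum
  calc 1 / 2 ≤ P.real {r | degIn s r ≤ degIn u r} := by linarith
    _ ≤ P.real {r | degIn s r ≤ degIn t r} :=
      measureReal_mono fun r hr ↦ le_trans hr (degIn_mono hut r)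

theorem half_le_measureReal_degIn_le_add_one {s t : Finset ι} (hst : Disjoint s t)
    (hcard : #s ≤ #t + 1) :
    1 / 2 ≤ (Measure.pi fun _ : ι ↦ μ).real {r | degIn s r ≤ degIn t r + 1} := by
  classical
  obtain rfl | ⟨v, hv⟩ := s.eq_empty_or_nonempty
  · norm_num [degIn]
  · have hcard' : #(s.erase v) ≤ #t := by rw [card_erase_of_mem hv]; omega
    refine (half_le_measureReal_degIn_le (hst.mono_left (erase_subset v s)) hcard').trans
      (measureReal_mono fun r hr ↦ ?_)
    exact (degIn_le_degIn_erase_add_one s v r).trans (Nat.add_le_add_right hr 1)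

end Swap

section Colouring

variable {ι : Type*} [Fintype ι]

/-- The vertices of colour `b` under the colouring `c`. -/
def colourClass (c : ι → Bool) (b : Bool) : Finset ι := {w | c w = b}

/-- The rows with at most one more out-neighbour of colour `b` than of the other colour. The slack
of one absorbs the diagonal entry, so that the condition on the row of a vertex depends only on its
colour `b`; being majority-coloured implies it. -/
def nearMinority (c : ι → Bool) (b : Bool) : Set (ι → Bool) :=
  {r | degIn (colourClass c b) r ≤ degIn (colourClass c !b) r + 1}

/-- The signed excess of out-neighbours of colour `true` over those of colour `false` in the row
`r`, written as a signed sum of independent indicators. -/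
def imbalance (c r : ι → Bool) : ℤ := ∑ w, if r w then (if c w then 1 else -1) else 0

theorem disjoint_colourClass (c : ι → Bool) (b : Bool) :
    Disjoint (colourClass c b) (colourClass c !b) := by
  simp [colourClass, disjoint_filter]

theorem imbalance_eq (c r : ι → Bool) :
    imbalance c r = degIn (colourClass c true) r - degIn (colourClass c false) r := by
  simp only [imbalance, degIn, colourClass, filter_filter, card_filter, Nat.cast_sum,
    ← sum_sub_distrib]
  refine sum_congr rfl fun w _ ↦ ?_
  cases c w <;> cases r w <;> simp

theorem nearMinority_union_eq_univ (c : ι → Bool) (b : Bool) :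
    nearMinority c b ∪ nearMinority c (!b) = Set.univ := by
  refine Set.eq_univ_of_forall fun r ↦ ?_
  simp only [nearMinority, Set.mem_union, Set.mem_ofPred_eq, Bool.not_not]
  omega

theorem nearMinority_inter_subset (c : ι → Bool) (b : Bool) :
    nearMinority c b ∩ nearMinority c (!b) ⊆
      ⋃ j ∈ ({-1, 0, 1} : Finset ℤ), {r | imbalance c r = j} := by
  intro r hr
  simp only [nearMinority, Set.mem_inter_iff, Set.mem_ofPred_eq, Bool.not_not] at hr
  simp only [Set.mem_iUnion, Set.mem_ofPred_eq, exists_prop, exists_eq_right', mem_insert,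
    mem_singleton, imbalance_eq]
  cases b <;> simp only [Bool.not_true, Bool.not_false] at hr <;> omega

variable {μ : Measure Bool} [IsProbabilityMeasure μ] {c d : ι → Bool} {δ : ℝ}

theorem measureReal_nearMinority_inter_le
    (hδ : ∀ j, (Measure.pi fun _ : ι ↦ μ).real {r | imbalance c r = j} ≤ δ) (b : Bool) :
    (Measure.pi fun _ : ι ↦ μ).real (nearMinority c b ∩ nearMinority c (!b)) ≤ 3 * δ := by
  set P := Measure.pi fun _ : ι ↦ μ
  calc P.real (nearMinority c b ∩ nearMinority c (!b))
      ≤ P.real (⋃ j ∈ ({-1, 0, 1} : Finset ℤ), {r | imbalance c r = j}) :=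
        measureReal_mono (nearMinority_inter_subset c b) (measure_ne_top _ _)
    _ ≤ ∑ j ∈ ({-1, 0, 1} : Finset ℤ), P.real {r | imbalance c r = j} :=
        measureReal_biUnion_finset_le _ _
    _ ≤ 3 * δ := (sum_le_card_nsmul _ _ δ fun j _ ↦ hδ j).trans_eq <| by simp

theorem measureReal_nearMinority_le (hc : ∀ b, #(colourClass c b) ≤ #(colourClass c !b) + 1)
    (hδ : ∀ j, (Measure.pi fun _ : ι ↦ μ).real {r | imbalance c r = j} ≤ δ) (b : Bool) :
    (Measure.pi fun _ : ι ↦ μ).real (nearMinority c b) ≤ 1 / 2 + 3 * δ := by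
  have hunion := measureReal_union_add_inter (μ := Measure.pi fun _ : ι ↦ μ)
    (s := nearMinority c b) (Set.toFinite (nearMinority c !b)).measurableSet
  rw [nearMinority_union_eq_univ, probReal_univ] at hunion
  have hhalf : 1 / 2 ≤ (Measure.pi fun _ : ι ↦ μ).real (nearMinority c !b) :=
    half_le_measureReal_degIn_le_add_one (disjoint_colourClass c _) (hc _)
  linarith [measureReal_nearMinority_inter_le hδ b]

theorem measureReal_nearMinority_agree_add_disagree_le
    (hc : ∀ b, #(colourClass c b) ≤ #(colourClass c !b) + 1)
    (hd : ∀ b, #(colourClass d b) ≤ #(colourClass d !b) + 1)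
    (hδc : ∀ j, (Measure.pi fun _ : ι ↦ μ).real {r | imbalance c r = j} ≤ δ)
    (hδd : ∀ j, (Measure.pi fun _ : ι ↦ μ).real {r | imbalance d r = j} ≤ δ) (x y : Bool) :
    (Measure.pi fun _ : ι ↦ μ).real (nearMinority c x ∩ nearMinority d x) +
      (Measure.pi fun _ : ι ↦ μ).real (nearMinority c y ∩ nearMinority d !y) ≤
        1 / 2 + 6 * δ := by
  set P := Measure.pi fun _ : ι ↦ μ
  have hmeas (c : ι → Bool) (b) : MeasurableSet (nearMinority c b) := (Set.toFinite _).measurableSet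
  obtain rfl | rfl := y.eq_or_eq_not x
  · linarith [measureReal_inter_add_measureReal_inter_le P (nearMinority d y) (hmeas c y)
        (hmeas d !y),
      measureReal_nearMinority_le hc hδc y, measureReal_nearMinority_inter_le hδd y]
  · rw [Bool.not_not, Set.inter_comm, Set.inter_comm (nearMinority c _)]
    linarith [measureReal_inter_add_measureReal_inter_le P (nearMinority c x) (hmeas d x)
        (hmeas c !x),
      measureReal_nearMinority_le hd hδd x, measureReal_nearMinority_inter_le hδc x]

theorem exists_measureReal_nearMinority_inter_le
    (hc : ∀ b, #(colourClass c b) ≤ #(colourClass c !b) + 1)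
    (hd : ∀ b, #(colourClass d b) ≤ #(colourClass d !b) + 1)
    (hδc : ∀ j, (Measure.pi fun _ : ι ↦ μ).real {r | imbalance c r = j} ≤ δ)
    (hδd : ∀ j, (Measure.pi fun _ : ι ↦ μ).real {r | imbalance d r = j} ≤ δ) :
    ∃ a b : ℝ, 0 ≤ a ∧ 0 ≤ b ∧ a + b ≤ 1 / 2 + 6 * δ ∧ ∀ x y,
      (Measure.pi fun _ : ι ↦ μ).real (nearMinority c x ∩ nearMinority d y) ≤
        if x = y then a else b := by
  set P := Measure.pi fun _ : ι ↦ μ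
  obtain ⟨x₀, hx₀⟩ := Finite.exists_max fun x ↦ P.real (nearMinority c x ∩ nearMinority d x)
  obtain ⟨y₀, hy₀⟩ := Finite.exists_max fun y ↦ P.real (nearMinority c y ∩ nearMinority d !y)
  refine ⟨_, _, measureReal_nonneg, measureReal_nonneg,
    measureReal_nearMinority_agree_add_disagree_le hc hd hδc hδd x₀ y₀, fun x y ↦ ?_⟩
  split_ifs with hxy
  · exact hxy ▸ hx₀ x
  · rw [Bool.eq_not.2 (Ne.symm hxy)]
    exact hy₀ x

theorem pow_mul_pow_sub_le_add_pow_div_choose {a b : ℝ} (ha : 0 ≤ a) (hb : 0 ≤ b) {k n : ℕ}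
    (hk : k ≤ n) : a ^ k * b ^ (n - k) ≤ (a + b) ^ n / n.choose k := by
  have hchoose : (0 : ℝ) < n.choose k := mod_cast Nat.choose_pos hk
  rw [le_div_iff₀ hchoose, add_pow]
  exact single_le_sum (f := fun m ↦ a ^ m * b ^ (n - m) * n.choose m) (fun m _ ↦ by positivity)
    (mem_range_succ_iff.2 hk)

theorem sum_agreement_apply_card [DecidableEq ι] {M : Type*} [AddCommMonoid M] (c : ι → Bool)
    (f : ℕ → M) :
    ∑ d : ι → Bool, f #{w | c w = d w} =
      ∑ k ∈ range (Fintype.card ι + 1), (Fintype.card ι).choose k • f k := by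
  rw [← card_univ, ← sum_powerset_apply_card]
  refine sum_nbij' (fun d ↦ ({w | c w = d w} : Finset ι)) (fun s w ↦ if w ∈ s then c w else !c w)
    (fun _ _ ↦ by simp) (fun _ _ ↦ by simp) (fun d _ ↦ ?_) (fun s _ ↦ ?_) fun _ _ ↦ rfl
  · ext w : 1
    cases hc : c w <;> cases hd : d w <;> simp [hc, hd]
  · simp

theorem sum_inv_choose_agreement [DecidableEq ι] (c : ι → Bool) :
    ∑ d : ι → Bool, ((Fintype.card ι).choose #{w | c w = d w} : ℝ)⁻¹ = Fintype.card ι + 1 := by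
  rw [sum_agreement_apply_card c fun k ↦ ((Fintype.card ι).choose k : ℝ)⁻¹]
  trans ∑ _ ∈ range (Fintype.card ι + 1), (1 : ℝ)
  · refine sum_congr rfl fun k hk ↦ ?_
    have := Nat.choose_pos (mem_range_succ_iff.1 hk)
    simp [this.ne']
  · simp

end Colouring

section Digraph

variable {n : ℕ} {c d : Fin n → Bool}

theorem isBisection_iff_card_colourClass_le :
    IsBisection c ↔ ∀ b, #(colourClass c b) ≤ #(colourClass c !b) + 1 := by
  have hncard (b : Bool) : ({v | c v = b} : Set (Fin n)).ncard = #(colourClass c b) := by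
    rw [colourClass, ← Set.ncard_coe_finset, coe_filter_univ]
  rw [IsBisection, hncard, hncard, abs_le, Bool.forall_bool, Bool.not_true, Bool.not_false]
  omega

theorem majorityAt_iff_degIn_le {A : Fin n → Fin n → Bool} {v : Fin n} :
    MajorityAt A c v ↔
      degIn ((colourClass c (c v)).erase v) (A v) ≤ degIn (colourClass c !(c v)) (A v) := by
  have hsame : ({w | DiAdj A v w} ∩ {w | c w = c v} : Set (Fin n)).ncard =
      degIn ((colourClass c (c v)).erase v) (A v) := by
    rw [degIn, ← Set.ncard_coe_finset]
    congr 1 with w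
    simp only [Set.mem_inter_iff, Set.mem_ofPred_eq, DiAdj, colourClass, coe_filter, mem_erase,
      mem_filter_univ]
    tauto
  have hother : ({w | DiAdj A v w} \ {w | c w = c v} : Set (Fin n)).ncard =
      degIn (colourClass c !(c v)) (A v) := by
    rw [degIn, ← Set.ncard_coe_finset]
    congr 1 with w
    simp only [Set.mem_sdiff, Set.mem_ofPred_eq, DiAdj, colourClass, coe_filter, mem_filter_univ,
      Bool.eq_not]
    exact ⟨fun h ↦ ⟨h.2, h.1.2⟩, fun h ↦ ⟨⟨fun hvw ↦ h.1 (hvw ▸ rfl), h.2⟩, h.1⟩⟩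
  have htotal := Set.ncard_inter_add_ncard_sdiff_eq_ncard {w | DiAdj A v w} {w | c w = c v}
  rw [hsame, hother] at htotal
  rw [MajorityAt, ← htotal, Set.ofPred_and, hsame]
  omega

theorem mem_nearMinority_of_majorityAt {A : Fin n → Fin n → Bool} {v : Fin n}
    (h : MajorityAt A c v) : A v ∈ nearMinority c (c v) :=
  (degIn_le_degIn_erase_add_one _ v _).trans
    (Nat.add_le_add_right (majorityAt_iff_degIn_le.1 h) 1)

/-- The event that `c` majority-colours every vertex. -/
def majorityEvent (c : Fin n → Bool) : Set (Fin n → Fin n → Bool) := {A | ∀ v, MajorityAt A c v}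

open Classical in
/-- The set of bisections of `Fin n`, as the index set of the second moment computation. -/
noncomputable def bisections (n : ℕ) : Finset (Fin n → Bool) := {c | IsBisection c}

theorem mem_bisections : c ∈ bisections n ↔ IsBisection c := by
  simp only [bisections, mem_filter_univ]

theorem isBisection_decide_mem {s : Finset (Fin n)} (hs : #s = n / 2) :
    IsBisection fun v ↦ decide (v ∈ s) := by
  have htrue : colourClass (fun v ↦ decide (v ∈ s)) true = s := by simp [colourClass]
  have hfalse : colourClass (fun v ↦ decide (v ∈ s)) false = sᶜ := by ext; simp [colourClass]
  rw [isBisection_iff_card_colourClass_le, Bool.forall_bool, Bool.not_true, Bool.not_false, htrue,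
    hfalse, card_compl, Fintype.card_fin, hs]
  omega

theorem two_pow_le_card_bisections_mul (n : ℕ) : 2 ^ n ≤ #(bisections n) * (n + 1) := by
  have hchoose : n.choose (n / 2) ≤ #(bisections n) := by
    rw [← card_fin n, ← card_powersetCard, card_fin]
    refine card_le_card_of_injOn (fun s v ↦ decide (v ∈ s))
      (fun s hs ↦ mem_bisections.2 (isBisection_decide_mem (mem_powersetCard_univ.1 hs)))
      fun s _ t _ hst ↦ ?_
    ext v
    exact decide_eq_decide.1 (congrFun hst v)
  calc 2 ^ n = ∑ k ∈ range (n + 1), n.choose k := (Nat.sum_range_choose n).symm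
    _ ≤ ∑ _ ∈ range (n + 1), n.choose (n / 2) := sum_le_sum fun k _ ↦ Nat.choose_le_middle k n
    _ = n.choose (n / 2) * (n + 1) := by rw [sum_const, card_range, smul_eq_mul, mul_comm]
    _ ≤ #(bisections n) * (n + 1) := Nat.mul_le_mul_right _ hchoose

variable {μ : Measure Bool} [IsProbabilityMeasure μ] {δ : ℝ}

theorem half_pow_le_measureReal_majorityEvent (hc : IsBisection c) :
    (1 / 2) ^ n ≤
      (Measure.pi fun _ : Fin n ↦ Measure.pi fun _ : Fin n ↦ μ).real (majorityEvent c) := by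
  have hvertex (v : Fin n) : 1 / 2 ≤ (Measure.pi fun _ : Fin n ↦ μ).real
      {r | degIn ((colourClass c (c v)).erase v) r ≤ degIn (colourClass c !(c v)) r} := by
    refine half_le_measureReal_degIn_le ((disjoint_colourClass c _).mono_left (erase_subset _ _)) ?_
    rw [card_erase_of_mem (by simp [colourClass])]
    exact Nat.sub_le_iff_le_add.2 (isBisection_iff_card_colourClass_le.1 hc _)
  simp only [majorityEvent, majorityAt_iff_degIn_le]
  calc ((1 : ℝ) / 2) ^ n = ∏ _ : Fin n, (1 / 2 : ℝ) := (Fin.prod_const n _).symm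
    _ ≤ ∏ v, _ := prod_le_prod (fun _ _ ↦ by norm_num) fun v _ ↦ hvertex v
    _ = _ := (measureReal_pi_forall_mem _ _).symm

theorem measureReal_majorityEvent_inter_le (hc : IsBisection c) (hd : IsBisection d)
    (hδ : ∀ (c : Fin n → Bool) j, (Measure.pi fun _ : Fin n ↦ μ).real {r | imbalance c r = j} ≤ δ) :
    (Measure.pi fun _ : Fin n ↦ Measure.pi fun _ : Fin n ↦ μ).real
      (majorityEvent c ∩ majorityEvent d) ≤
        (1 / 2 + 6 * δ) ^ n / n.choose #{v | c v = d v} := by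
  rw [isBisection_iff_card_colourClass_le] at hc hd
  obtain ⟨a, b, ha, hb, hab, hjoint⟩ :=
    exists_measureReal_nearMinority_inter_le hc hd (hδ c) (hδ d)
  calc _ ≤ (Measure.pi fun _ : Fin n ↦ Measure.pi fun _ : Fin n ↦ μ).real
        {A | ∀ v, A v ∈ nearMinority c (c v) ∩ nearMinority d (d v)} :=
        measureReal_mono fun A hA v ↦
          ⟨mem_nearMinority_of_majorityAt (hA.1 v), mem_nearMinority_of_majorityAt (hA.2 v)⟩
    _ = ∏ v, (Measure.pi fun _ : Fin n ↦ μ).real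
        (nearMinority c (c v) ∩ nearMinority d (d v)) := measureReal_pi_forall_mem _ _
    _ ≤ ∏ v, if c v = d v then a else b :=
        prod_le_prod (fun _ _ ↦ measureReal_nonneg) fun v _ ↦ hjoint _ _
    _ = a ^ #{v | c v = d v} * b ^ (n - #{v | c v = d v}) := by
        rw [prod_ite, prod_const, prod_const, filter_not, card_univ_sdiff, Fintype.card_fin]
    _ ≤ (a + b) ^ n / n.choose #{v | c v = d v} :=
        pow_mul_pow_sub_le_add_pow_div_choose ha hb (card_finset_fin_le _)
    _ ≤ (1 / 2 + 6 * δ) ^ n / n.choose #{v | c v = d v} := by gcongr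

theorem sum_measureReal_majorityEvent_inter_le (hc : IsBisection c) (hδ₀ : 0 ≤ δ)
    (hδ : ∀ (c : Fin n → Bool) j, (Measure.pi fun _ : Fin n ↦ μ).real {r | imbalance c r = j} ≤ δ) :
    ∑ d ∈ bisections n, (Measure.pi fun _ : Fin n ↦ Measure.pi fun _ : Fin n ↦ μ).real
      (majorityEvent c ∩ majorityEvent d) ≤ (n + 1) * (1 / 2 + 6 * δ) ^ n := by
  calc _ ≤ ∑ d ∈ bisections n, (1 / 2 + 6 * δ) ^ n / n.choose #{v | c v = d v} :=
        sum_le_sum fun d hd ↦ measureReal_majorityEvent_inter_le hc (mem_bisections.1 hd) hδ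
    _ ≤ ∑ d : Fin n → Bool, (1 / 2 + 6 * δ) ^ n / n.choose #{v | c v = d v} :=
        sum_le_univ_sum_of_nonneg fun d ↦ by positivity
    _ = (n + 1) * (1 / 2 + 6 * δ) ^ n := by
        have hsum := sum_inv_choose_agreement c
        rw [Fintype.card_fin] at hsum
        simp only [div_eq_mul_inv, ← mul_sum, hsum, mul_comm]

theorem le_measureReal_iUnion_majorityEvent (hδ₀ : 0 ≤ δ)
    (hδ : ∀ (c : Fin n → Bool) j, (Measure.pi fun _ : Fin n ↦ μ).real {r | imbalance c r = j} ≤ δ) :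
    1 / ((n + 1) ^ 2 * (1 + 12 * δ) ^ n) ≤
      (Measure.pi fun _ : Fin n ↦ Measure.pi fun _ : Fin n ↦ μ).real
        (⋃ c ∈ bisections n, majorityEvent c) := by
  set P := Measure.pi fun _ : Fin n ↦ Measure.pi fun _ : Fin n ↦ μ
  set U := ⋃ c ∈ bisections n, majorityEvent c
  have hcount : (2 : ℝ) ^ n ≤ #(bisections n) * (n + 1) :=
    mod_cast two_pow_le_card_bisections_mul n
  set N : ℝ := ((#(bisections n) : ℕ) : ℝ)
  have hN : 0 < N := pos_of_mul_pos_left (lt_of_lt_of_le (by positivity) hcount) (by positivity)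
  have hfirst : N * (1 / 2 : ℝ) ^ n ≤ ∑ c ∈ bisections n, P.real (majorityEvent c) := by
    rw [← nsmul_eq_mul]
    exact card_nsmul_le_sum _ _ _ fun c hc ↦
      half_pow_le_measureReal_majorityEvent (mem_bisections.1 hc)
  have hsecond : ∑ c ∈ bisections n, ∑ d ∈ bisections n,
      P.real (majorityEvent c ∩ majorityEvent d) ≤ N * ((n + 1) * (1 / 2 + 6 * δ) ^ n) := by
    rw [← nsmul_eq_mul]
    exact sum_le_card_nsmul _ _ _ fun c hc ↦
      sum_measureReal_majorityEvent_inter_le (mem_bisections.1 hc) hδ₀ hδ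
  have hratio : N * (1 / 2) ^ n ≤ P.real U * ((n + 1) * (1 + 12 * δ) ^ n) := by
    refine le_of_mul_le_mul_left ?_ (by positivity : 0 < N * (1 / 2 : ℝ) ^ n)
    calc N * (1 / 2) ^ n * (N * (1 / 2) ^ n)
        ≤ (∑ c ∈ bisections n, P.real (majorityEvent c)) ^ 2 := by rw [← sq]; gcongr
      _ ≤ P.real U * ∑ c ∈ bisections n, ∑ d ∈ bisections n,
          P.real (majorityEvent c ∩ majorityEvent d) :=
          sq_sum_measureReal_le _ fun c ↦ (Set.toFinite _).measurableSet
      _ ≤ P.real U * (N * ((n + 1) * (1 / 2 + 6 * δ) ^ n)) := by gcongr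
      _ = N * (1 / 2) ^ n * (P.real U * ((n + 1) * (1 + 12 * δ) ^ n)) := by
          rw [show 1 / 2 + 6 * δ = 1 / 2 * (1 + 12 * δ) by ring, mul_pow]
          ring
  rw [div_le_iff₀ (by positivity)]
  calc 1 = (2 : ℝ) ^ n * (1 / 2) ^ n := by rw [← mul_pow]; norm_num
    _ ≤ N * (n + 1) * (1 / 2) ^ n := by gcongr
    _ = (n + 1) * (N * (1 / 2) ^ n) := by ring
    _ ≤ (n + 1) * (P.real U * ((n + 1) * (1 + 12 * δ) ^ n)) := by gcongr
    _ = P.real U * ((n + 1) ^ 2 * (1 + 12 * δ) ^ n) := by ring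

theorem exists_isBisection (n : ℕ) : ∃ c : Fin n → Bool, IsBisection c := by
  obtain ⟨s, -, hs⟩ := exists_subset_card_eq (s := (univ : Finset (Fin n))) (n := n / 2)
    (by simp only [card_univ, Fintype.card_fin, Nat.div_le_self])
  exact ⟨_, isBisection_decide_mem hs⟩

/-- The least number of vertices that a bisection of the digraph fails to majority-colour. The
infimum is over a nonempty set by `exists_isBisection`, so its junk value never occurs. -/
noncomputable def bisectionDefect (A : Fin n → Fin n → Bool) : ℕ :=
  ⨅ c : {c : Fin n → Bool // IsBisection c}, ({v | ¬ MajorityAt A c.1 v} : Set (Fin n)).ncard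

theorem bisectionDefect_le (A : Fin n → Fin n → Bool) (hc : IsBisection c) :
    bisectionDefect A ≤ ({v | ¬ MajorityAt A c v} : Set (Fin n)).ncard :=
  Nat.sInf_le ⟨⟨c, hc⟩, rfl⟩

theorem exists_ncard_eq_bisectionDefect (A : Fin n → Fin n → Bool) :
    ∃ c : Fin n → Bool, IsBisection c ∧
      ({v | ¬ MajorityAt A c v} : Set (Fin n)).ncard = bisectionDefect A := by
  have : Nonempty {c : Fin n → Bool // IsBisection c} := nonempty_subtype.2 (exists_isBisection n)
  obtain ⟨c, hc⟩ := exists_eq_ciInf_of_finite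
    (f := fun c : {c : Fin n → Bool // IsBisection c} ↦
      ({v | ¬ MajorityAt A c.1 v} : Set (Fin n)).ncard)
  exact ⟨c.1, c.2, hc⟩

theorem bisectionDefect_update_le (A : Fin n → Fin n → Bool) (i : Fin n) (r : Fin n → Bool) :
    bisectionDefect (Function.update A i r) ≤ bisectionDefect A + 1 := by
  obtain ⟨c, hc, hcA⟩ := exists_ncard_eq_bisectionDefect A
  have hsub : {v | ¬ MajorityAt (Function.update A i r) c v} ⊆
      insert i {v | ¬ MajorityAt A c v} := by
    intro v hv
    obtain rfl | hvi := eq_or_ne v i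
    · exact Set.mem_insert _ _
    · refine Set.mem_insert_of_mem _ ?_
      rwa [Set.mem_ofPred_eq, majorityAt_iff_degIn_le, Function.update_of_ne hvi,
        ← majorityAt_iff_degIn_le] at hv
  calc bisectionDefect (Function.update A i r)
      ≤ ({v | ¬ MajorityAt (Function.update A i r) c v} : Set (Fin n)).ncard :=
        bisectionDefect_le _ hc
    _ ≤ (insert i {v | ¬ MajorityAt A c v}).ncard := Set.ncard_le_ncard hsub
    _ ≤ bisectionDefect A + 1 := hcA ▸ Set.ncard_insert_le _ _

theorem bisectionDefect_eq_zero_of_mem {A : Fin n → Fin n → Bool}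
    (hA : A ∈ ⋃ c ∈ bisections n, majorityEvent c) : bisectionDefect A = 0 := by
  simp only [Set.mem_iUnion, mem_bisections, exists_prop] at hA
  obtain ⟨c, hc, hcA⟩ := hA
  refine Nat.eq_zero_of_le_zero ((bisectionDefect_le A hc).trans_eq ?_)
  simp [hcA _]

theorem measureReal_le_bisectionDefect_le {ε : ℝ} (hε : 0 ≤ ε) (hδ₀ : 0 ≤ δ)
    (hδ : ∀ (c : Fin n → Bool) j, (Measure.pi fun _ : Fin n ↦ μ).real {r | imbalance c r = j} ≤ δ)
    (hlow : Real.exp (-(ε ^ 2 / 2 * n)) < 1 / ((n + 1) ^ 2 * (1 + 12 * δ) ^ n)) :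
    (Measure.pi fun _ : Fin n ↦ Measure.pi fun _ : Fin n ↦ μ).real
      {A | ε * n ≤ bisectionDefect A} ≤ Real.exp (-(ε ^ 2 / 2 * n)) := by
  have hexponent : -(ε ^ 2 / 2 * n) = -2 * (ε * n / 2) ^ 2 / n := by
    obtain hn | hn := eq_or_ne (n : ℝ) 0
    · simp [hn]
    · field_simp
  rw [hexponent] at hlow ⊢
  have htail := measureReal_pi_le_exp_of_lt (f := fun A ↦ (bisectionDefect A : ℝ)) (a := 0)
    (fun _ : Fin n ↦ Measure.pi fun _ : Fin n ↦ μ) (measurable_of_finite _)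
    (fun A i r ↦ mod_cast bisectionDefect_update_le A i r)
    (by positivity : 0 ≤ ε * n / 2) <|
      hlow.trans_le <| (le_measureReal_iUnion_majorityEvent hδ₀ hδ).trans <|
        measureReal_mono fun A hA ↦ by simp [bisectionDefect_eq_zero_of_mem hA]
  rwa [zero_add, mul_div_cancel₀ _ two_ne_zero] at htail

theorem one_sub_exp_le_measureReal_almost_majority {ε : ℝ} (hε : 0 ≤ ε) (hδ₀ : 0 ≤ δ)
    (hδ : ∀ (c : Fin n → Bool) j, (Measure.pi fun _ : Fin n ↦ μ).real {r | imbalance c r = j} ≤ δ)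
    (hlow : Real.exp (-(ε ^ 2 / 2 * n)) < 1 / ((n + 1) ^ 2 * (1 + 12 * δ) ^ n)) :
    1 - Real.exp (-(ε ^ 2 / 2 * n)) ≤
      (Measure.pi fun _ : Fin n ↦ Measure.pi fun _ : Fin n ↦ μ).real
        {A | ∃ c : Fin n → Bool, IsBisection c ∧
          (({v | ¬ MajorityAt A c v} : Set (Fin n)).ncard : ℝ) ≤ ε * n} := by
  set P := Measure.pi fun _ : Fin n ↦ Measure.pi fun _ : Fin n ↦ μ
  calc 1 - Real.exp (-(ε ^ 2 / 2 * n)) ≤ 1 - P.real {A | ε * n ≤ bisectionDefect A} :=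
        sub_le_sub_left (measureReal_le_bisectionDefect_le hε hδ₀ hδ hlow) 1
    _ = P.real {A | ε * n ≤ bisectionDefect A}ᶜ :=
        (probReal_compl_eq_one_sub (Set.toFinite _).measurableSet).symm
    _ ≤ _ := measureReal_mono fun A hA ↦ by
        obtain ⟨c, hc, hcA⟩ := exists_ncard_eq_bisectionDefect A
        have hlt : (bisectionDefect A : ℝ) < ε * n := lt_of_not_ge hA
        exact ⟨c, hc, hcA ▸ hlt.le⟩

end Digraph

section Binomial

theorem isProbabilityMeasure_bernoulliM {p : ℝ} (hp : p ∈ Set.Icc 0 1) :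
    IsProbabilityMeasure (bernoulliM p) := by
  refine ⟨?_⟩
  simp only [bernoulliM, Measure.add_apply, Measure.smul_apply, measure_univ, ENNReal.smul_def,
    smul_eq_mul, mul_one]
  rw [← ENNReal.coe_add, ← Real.toNNReal_add hp.1 (sub_nonneg.2 hp.2), add_sub_cancel,
    Real.toNNReal_one, ENNReal.coe_one]

theorem bernoulliM_real_true {p : ℝ} (hp : 0 ≤ p) : (bernoulliM p).real {true} = p := by
  simp [bernoulliM, Measure.real, hp]

theorem bernoulliM_real_false {p : ℝ} (hp : p ≤ 1) : (bernoulliM p).real {false} = 1 - p := by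
  simp [bernoulliM, Measure.real, hp]

theorem measureReal_bernoulliM_imbalance_eq_le {n : ℕ} {p : ℝ} (hp : p ∈ Set.Icc 0 1)
    (hpos : 0 < n * p * (1 - p)) (c : Fin n → Bool) (j : ℤ) :
    (Measure.pi fun _ : Fin n ↦ bernoulliM p).real {r | imbalance c r = j} ≤
      √(π / (8 * (n * p * (1 - p)))) := by
  have := isProbabilityMeasure_bernoulliM hp
  have hbound := measureReal_pi_signed_sum_eq_le (μ := bernoulliM p)
    (a := fun w ↦ if c w then 1 else -1) (fun w ↦ by cases c w <;> rfl) j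
  simp only [bernoulliM_real_true hp.1, bernoulliM_real_false hp.2, Fintype.card_fin,
    ← mul_assoc (n : ℝ)] at hbound
  exact hbound hpos

theorem eventually_exp_neg_lt_one_div {b : ℝ} (hb : 0 < b) {δ : ℕ → ℝ} (hδ₀ : ∀ n, 0 ≤ δ n)
    (hδ : Tendsto δ atTop (nhds 0)) :
    ∀ᶠ n : ℕ in atTop, Real.exp (-(b * n)) < 1 / ((n + 1) ^ 2 * (1 + 12 * δ n) ^ n) := by
  have hsq := ((isLittleO_pow_exp_pos_mul_atTop 2 (half_pos hb)).comp_tendsto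
    (tendsto_natCast_atTop_atTop.comp (tendsto_add_atTop_nat 1))).bound (Real.exp_pos (-b))
  filter_upwards [hsq, hδ.eventually_le_const (by positivity : 0 < b / 24)] with n hn hδn
  have hpoly : (n + 1 : ℝ) ^ 2 < Real.exp (b / 2 * n) := by
    simp only [Function.comp_apply, Nat.cast_add_one, norm_pow, Real.norm_eq_abs, Real.abs_exp,
      sq_abs, ← Real.exp_add] at hn
    exact hn.trans_lt (Real.exp_lt_exp.2 (by linarith))
  have hpow : (1 + 12 * δ n) ^ n ≤ Real.exp (b / 2 * n) := by
    have := hδ₀ n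
    calc (1 + 12 * δ n) ^ n ≤ Real.exp (b / 2) ^ n := by
          gcongr
          linarith [Real.add_one_le_exp (b / 2)]
      _ = Real.exp (b / 2 * n) := by rw [← Real.exp_nat_mul, mul_comm]
  have hpos : 0 < (1 + 12 * δ n) ^ n := pow_pos (by linarith [hδ₀ n]) n
  rw [Real.exp_neg, ← one_div]
  refine one_div_lt_one_div_of_lt (by positivity) ?_
  calc (n + 1 : ℝ) ^ 2 * (1 + 12 * δ n) ^ n < Real.exp (b / 2 * n) * Real.exp (b / 2 * n) :=
        mul_lt_mul hpoly hpow hpos (Real.exp_pos _).le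
    _ = Real.exp (b * n) := by rw [← Real.exp_add]; ring_nf

theorem isProbabilityMeasure_diMeasure {n : ℕ} {p : ℝ} (hp : p ∈ Set.Icc 0 1) :
    IsProbabilityMeasure (diMeasure n p) := by
  have := isProbabilityMeasure_bernoulliM hp
  rw [diMeasure]
  infer_instance

theorem tendsto_sqrt_pi_div {ι : Type*} {l : Filter ι} {x : ι → ℝ} (hx : Tendsto x l atTop) :
    Tendsto (fun i ↦ √(π / (8 * x i))) l (nhds 0) := by
  simpa only [Real.sqrt_zero] using
    (tendsto_const_nhds.div_atTop (hx.const_mul_atTop (by norm_num : (0 : ℝ) < 8))).sqrt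

theorem tendsto_ofReal_one_sub_exp_neg {b : ℝ} (hb : 0 < b) :
    Tendsto (fun n : ℕ ↦ ENNReal.ofReal (1 - Real.exp (-(b * n)))) atTop (nhds 1) := by
  have hexp := Real.tendsto_exp_neg_atTop_nhds_zero.comp
    (tendsto_natCast_atTop_atTop.const_mul_atTop hb)
  simpa only [Function.comp_def, sub_zero, ENNReal.ofReal_one] using
    ENNReal.tendsto_ofReal (hexp.const_sub 1)

theorem eventually_ofReal_one_sub_exp_le_diMeasure {p : ℕ → ℝ}
    (hp : ∀ n, p n ∈ Set.Icc (0 : ℝ) 1)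
    (hgrow : Tendsto (fun n : ℕ ↦ (n : ℝ) * p n * (1 - p n)) atTop atTop) {ε : ℝ} (hε : 0 < ε) :
    ∀ᶠ n : ℕ in atTop, ENNReal.ofReal (1 - Real.exp (-(ε ^ 2 / 2 * n))) ≤
      diMeasure n (p n) {A | ∃ c : Fin n → Bool, IsBisection c ∧
        (({v | ¬ MajorityAt A c v} : Set (Fin n)).ncard : ℝ) ≤ ε * n} := by
  filter_upwards [hgrow.eventually_gt_atTop 0,
    eventually_exp_neg_lt_one_div (by positivity : 0 < ε ^ 2 / 2) (fun _ ↦ Real.sqrt_nonneg _)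
      (tendsto_sqrt_pi_div hgrow)] with n hn hlow
  have := isProbabilityMeasure_bernoulliM (hp n)
  exact ENNReal.ofReal_le_of_le_toReal <| one_sub_exp_le_measureReal_almost_majority hε.le
    (Real.sqrt_nonneg _) (measureReal_bernoulliM_imbalance_eq_le (hp n) hn) hlow

end Binomial

end MajorityBisection

/-- If `n·pₙ·(1−pₙ) → ∞` then, for every `ε > 0`, with high probability `𝔻(n,pₙ)` has a
bisection in which all but at most `ε·n` vertices are majority-coloured. -/
theorem whp_almost_majority_bisection (p : ℕ → ℝ) (hp : ∀ n, p n ∈ Set.Icc (0 : ℝ) 1)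
    (hgrow : Tendsto (fun n : ℕ => (n : ℝ) * p n * (1 - p n)) atTop atTop)
    (ε : ℝ) (hε : 0 < ε) :
    Tendsto (fun n => diMeasure n (p n)
        {A | ∃ c : Fin n → Bool, IsBisection c ∧
          ((({v | ¬ MajorityAt A c v} : Set (Fin n)).ncard : ℝ)) ≤ ε * n})
      atTop (nhds 1) := by
  have hprob (n : ℕ) : IsProbabilityMeasure (diMeasure n (p n)) :=
    MajorityBisection.isProbabilityMeasure_diMeasure (hp n)
  exact tendsto_of_tendsto_of_tendsto_of_le_of_le'
    (MajorityBisection.tendsto_ofReal_one_sub_exp_neg (by positivity : 0 < ε ^ 2 / 2))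
    tendsto_const_nhds
    (MajorityBisection.eventually_ofReal_one_sub_exp_le_diMeasure hp hgrow hε)
    (.of_forall fun _ ↦ prob_le_one)
end

section
/- For every real λ ≥ 0 and every f ∈ [0, 1/3], we have 2·P_λ(f) ≤ 2·P_λ'(0)·f ≤ 0.9999·f, where P_λ'(0) denotes the derivative of P_λ at 0. -/
/-- The polynomial `Q_d`: the probability that a given colour "overtakes" as the
majority colour among `d` independently uniformly 3-coloured vertices, when each vertex
is independently recoloured (to a uniformly random different colour) with probability
`f`. -/
noncomputable def Q (d : ℕ) (f : ℝ) : ℝ :=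
  ∑ i ∈ Finset.Icc 1 (d / 2),
    (Nat.choose d i : ℝ) * (1 / 3 : ℝ) ^ i * (2 / 3 : ℝ) ^ (d - i) *
      ∑ j ∈ Finset.Icc (d / 2 + 1) d, ∑ k ∈ Finset.range (i + 1),
        (Nat.choose i k : ℝ) * f ^ k * (1 - f) ^ (i - k) *
          (Nat.choose (d - i) (j + k - i) : ℝ) * (f / 2) ^ (j + k - i) *
          (1 - f / 2) ^ (d - j - k)

/-- `P_λ`: the Poisson(λ) average of the polynomials `Q_d`. -/
noncomputable def P (lam : ℝ) (f : ℝ) : ℝ :=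
  ∑' d : ℕ, (Real.exp (-lam) * lam ^ d / (Nat.factorial d : ℝ)) * Q d f

/-!
Recolour the `d` vertices one at a time. Since a colour held with probability `1 / 3` is lost and
gained at the same rate, the vertices other than the current one always carry the binomial law, so
the probability that the current one lifts the count of the colour to `d / 2 + 1` is at most linear
in `f`. The union bound over the vertices gives `Q d f ≤ c d * f`. To first order in `f` only one
vertex is recoloured, so `c d` is the derivative of `Q d` at `0`, and the Poisson average of these
inequalities is `P lam f ≤ deriv (P lam) 0 * f`.

The rate `c d` is a multiple of a central binomial probability. Its largest value at odd `d` exceeds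
the constant needed, but at even `d` it is at most `2 / 3` of this value. A Poisson variable is even
with probability at least `1 / 2`, because its generating function is nonnegative at `-1`, and the
average of the two bounds is small enough.
-/

open Finset

section BinomialMean

variable {R : Type*} [CommRing R]

/-- The mean of `g k l`, where `k` and `l` count the successes and the failures in `n` independent
trials of success probability `p`. -/
def binomialMean (p : R) (n : ℕ) (g : ℕ → ℕ → R) : R :=
  ∑ kl ∈ antidiagonal n, (n.choose kl.1 : R) * (p ^ kl.1 * (1 - p) ^ kl.2 * g kl.1 kl.2)

@[simp]
lemma binomialMean_zero (p : R) (g : ℕ → ℕ → R) : binomialMean p 0 g = g 0 0 := by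
  simp [binomialMean]

lemma binomialMean_succ (p : R) (n : ℕ) (g : ℕ → ℕ → R) :
    binomialMean p (n + 1) g =
      p * binomialMean p n (fun k l ↦ g (k + 1) l) +
        (1 - p) * binomialMean p n (fun k l ↦ g k (l + 1)) := by
  simp only [binomialMean, mul_sum]
  rw [sum_antidiagonal_choose_succ_mul (fun k l ↦ p ^ k * (1 - p) ^ l * g k l), add_comm]
  congr 1 <;> refine sum_congr rfl fun kl hkl ↦ ?_
  · rw [← Nat.choose_symm_of_eq_add (mem_antidiagonal.1 hkl).symm]
    ring
  · ring

lemma binomialMean_add (p : R) (n : ℕ) (g h : ℕ → ℕ → R) :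
    binomialMean p n (fun k l ↦ g k l + h k l) = binomialMean p n g + binomialMean p n h := by
  simp only [binomialMean, mul_add, sum_add_distrib]

lemma binomialMean_const_mul (p c : R) (n : ℕ) (g : ℕ → ℕ → R) :
    binomialMean p n (fun k l ↦ c * g k l) = c * binomialMean p n g := by
  simp only [binomialMean, mul_sum, mul_left_comm c]

lemma binomialMean_zero_left (n : ℕ) (g : ℕ → ℕ → R) : binomialMean 0 n g = g 0 n := by
  induction n generalizing g with
  | zero => simp
  | succ n ih => simp [binomialMean_succ, ih]

lemma map_binomialMean {S : Type*} [CommRing S] (φ : R →+* S) (p : R) (n : ℕ) (g : ℕ → ℕ → R) :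
    φ (binomialMean p n g) = binomialMean (φ p) n (fun k l ↦ φ (g k l)) := by
  simp [binomialMean]

lemma binomialMean_mono [LinearOrder R] [IsStrictOrderedRing R] {p : R} (hp : 0 ≤ p) (hp' : p ≤ 1)
    (n : ℕ) {g h : ℕ → ℕ → R} (hgh : ∀ k l, g k l ≤ h k l) :
    binomialMean p n g ≤ binomialMean p n h := by
  have : 0 ≤ 1 - p := sub_nonneg.2 hp'
  unfold binomialMean
  gcongr
  exact hgh _ _

/-- The probability of exactly `k` successes in `n` independent trials of success probability
`p`. -/
def binomialProb (p : R) (n k : ℕ) : R :=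
  binomialMean p n (fun s _ ↦ if s = k then 1 else 0)

lemma binomialProb_eq (p : R) (n k : ℕ) :
    binomialProb p n k = (n.choose k : R) * p ^ k * (1 - p) ^ (n - k) := by
  simp only [binomialProb, binomialMean]
  rw [Nat.sum_antidiagonal_eq_sum_range_succ
    (fun s r ↦ (n.choose s : R) * (p ^ s * (1 - p) ^ r * if s = k then 1 else 0))]
  rcases lt_or_ge n k with h | h
  · simp [Nat.choose_eq_zero_of_lt h, h.not_ge]
  · simp [h, mul_assoc]

lemma binomialMean_mul_ite_eq (p : R) (n k : ℕ) (g : ℕ → R) :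
    binomialMean p n (fun s _ ↦ g s * if s = k then 1 else 0) = g k * binomialProb p n k := by
  rw [binomialProb, ← binomialMean_const_mul]
  congr! 3 with s
  split_ifs with h <;> simp [h]

lemma binomialProb_zero_left (p : R) (k : ℕ) :
    binomialProb p 0 k = if 0 = k then 1 else 0 := by
  simp [binomialProb]

lemma binomialProb_succ_zero (p : R) (n : ℕ) :
    binomialProb p (n + 1) 0 = (1 - p) * binomialProb p n 0 := by
  simp [binomialProb_eq, pow_succ']

lemma binomialProb_succ_succ (p : R) (n k : ℕ) :
    binomialProb p (n + 1) (k + 1) =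
      p * binomialProb p n k + (1 - p) * binomialProb p n (k + 1) := by
  simp only [binomialProb, binomialMean_succ, add_left_inj]

lemma succ_mul_binomialProb_succ (p : R) (n k : ℕ) :
    (k + 1 : R) * binomialProb p (n + 1) (k + 1) = (n + 1) * p * binomialProb p n k := by
  have h : ((n + 1 : R)) * n.choose k = (n + 1).choose (k + 1) * (k + 1) :=
    mod_cast congrArg (Nat.cast (R := R)) (Nat.add_one_mul_choose_eq n k)
  rw [binomialProb_eq, binomialProb_eq, Nat.add_sub_add_right]
  linear_combination (-(p ^ (k + 1) * (1 - p) ^ (n - k))) * h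

lemma binomialProb_two_mul_self (p : R) (n : ℕ) :
    binomialProb p (2 * n) n = n.centralBinom * (p * (1 - p)) ^ n := by
  rw [binomialProb_eq, Nat.centralBinom_eq_two_mul_choose, mul_pow, mul_assoc,
    show 2 * n - n = n by lia]

end BinomialMean

section RecolourMean

variable {R : Type*} [CommRing R]

/-- The mean of `ψ s t` when each of `d` vertices independently has a given colour with
probability `p`, a vertex of this colour loses it with probability `a`, any other vertex gains it
with probability `b`, and `s` and `t` count the vertices of the colour before and after. -/
def recolourMean (p a b : R) (d : ℕ) (ψ : ℕ → ℕ → R) : R :=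
  binomialMean p d fun s r ↦ binomialMean a s fun _ kept ↦ binomialMean b r fun gained _ ↦
    ψ s (kept + gained)

@[simp]
lemma recolourMean_zero (p a b : R) (ψ : ℕ → ℕ → R) : recolourMean p a b 0 ψ = ψ 0 0 := by
  simp [recolourMean]

lemma recolourMean_succ (p a b : R) (d : ℕ) (ψ : ℕ → ℕ → R) :
    recolourMean p a b (d + 1) ψ =
      p * (a * recolourMean p a b d (fun s t ↦ ψ (s + 1) t) +
        (1 - a) * recolourMean p a b d (fun s t ↦ ψ (s + 1) (t + 1))) +
      (1 - p) * (b * recolourMean p a b d (fun s t ↦ ψ s (t + 1)) +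
        (1 - b) * recolourMean p a b d ψ) := by
  simp only [recolourMean, binomialMean_succ, binomialMean_add, binomialMean_const_mul,
    ← add_assoc, add_right_comm _ 1]

lemma recolourMean_add (p a b : R) (d : ℕ) (ψ φ : ℕ → ℕ → R) :
    recolourMean p a b d (fun s t ↦ ψ s t + φ s t) =
      recolourMean p a b d ψ + recolourMean p a b d φ := by
  simp only [recolourMean, binomialMean_add]

lemma recolourMean_const_mul (p a b c : R) (d : ℕ) (ψ : ℕ → ℕ → R) :
    recolourMean p a b d (fun s t ↦ c * ψ s t) = c * recolourMean p a b d ψ := by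
  simp only [recolourMean, binomialMean_const_mul]

lemma recolourMean_fun_zero (p a b : R) (d : ℕ) : recolourMean p a b d (fun _ _ ↦ 0) = 0 := by
  simpa using recolourMean_const_mul p a b 0 d 0

lemma recolourMean_zero_zero (p : R) (d : ℕ) (ψ : ℕ → ℕ → R) :
    recolourMean p 0 0 d ψ = binomialMean p d (fun s _ ↦ ψ s s) := by
  simp only [recolourMean, binomialMean_zero_left, add_zero]

lemma map_recolourMean {S : Type*} [CommRing S] (φ : R →+* S) (p a b : R) (d : ℕ)
    (ψ : ℕ → ℕ → R) :
    φ (recolourMean p a b d ψ) = recolourMean (φ p) (φ a) (φ b) d (fun s t ↦ φ (ψ s t)) := by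
  simp only [recolourMean, map_binomialMean]

lemma recolourMean_eq_binomialProb {p a b : R} (hab : p * a = (1 - p) * b) (d k : ℕ) :
    recolourMean p a b d (fun _ t ↦ if t = k then 1 else 0) = binomialProb p d k := by
  induction d generalizing k with
  | zero => simp [binomialProb_zero_left]
  | succ d ih =>
    rcases k with _ | k
    · simp only [recolourMean_succ, Nat.add_eq_zero_iff, one_ne_zero, and_false, if_false,
        recolourMean_fun_zero, ih, binomialProb_succ_zero]
      linear_combination binomialProb p d 0 * hab
    · simp only [recolourMean_succ, add_left_inj, ih, binomialProb_succ_succ]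
      linear_combination (binomialProb p d (k + 1) - binomialProb p d k) * hab

lemma recolourMean_mono [LinearOrder R] [IsStrictOrderedRing R] {p a b : R} (hp : 0 ≤ p)
    (hp' : p ≤ 1) (ha : 0 ≤ a) (ha' : a ≤ 1) (hb : 0 ≤ b) (hb' : b ≤ 1) (d : ℕ)
    {ψ φ : ℕ → ℕ → R} (h : ∀ s t, ψ s t ≤ φ s t) :
    recolourMean p a b d ψ ≤ recolourMean p a b d φ :=
  binomialMean_mono hp hp' _ fun _ _ ↦ binomialMean_mono ha ha' _ fun _ _ ↦
    binomialMean_mono hb hb' _ fun _ _ ↦ h _ _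

lemma norm_recolourMean_le {𝕜 : Type*} [NormedField 𝕜] (p a b : 𝕜) (d : ℕ) {ψ : ℕ → ℕ → 𝕜} {C : ℝ}
    (hψ : ∀ s t, ‖ψ s t‖ ≤ C) :
    ‖recolourMean p a b d ψ‖ ≤
      (‖p‖ * (‖a‖ + ‖1 - a‖) + ‖1 - p‖ * (‖b‖ + ‖1 - b‖)) ^ d * C := by
  induction d generalizing ψ with
  | zero => simpa using hψ 0 0
  | succ d ih =>
    set M := (‖p‖ * (‖a‖ + ‖1 - a‖) + ‖1 - p‖ * (‖b‖ + ‖1 - b‖)) ^ d * C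
    have hM (φ : ℕ → ℕ → 𝕜) (hφ : ∀ s t, ‖φ s t‖ ≤ C) (c : 𝕜) :
        ‖c * recolourMean p a b d φ‖ ≤ ‖c‖ * M :=
      norm_mul_le_of_le le_rfl (ih hφ)
    calc ‖recolourMean p a b (d + 1) ψ‖
        ≤ ‖p‖ * (‖a‖ * M + ‖1 - a‖ * M) + ‖1 - p‖ * (‖b‖ * M + ‖1 - b‖ * M) := by
          rw [recolourMean_succ]
          exact norm_add_le_of_le
            (norm_mul_le_of_le le_rfl (norm_add_le_of_le (hM _ (fun _ _ ↦ hψ _ _) _)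
              (hM _ (fun _ _ ↦ hψ _ _) _)))
            (norm_mul_le_of_le le_rfl (norm_add_le_of_le (hM _ (fun _ _ ↦ hψ _ _) _)
              (hM _ hψ _)))
      _ = _ := by ring

lemma differentiable_recolourMean {𝕜 : Type*} [NontriviallyNormedField 𝕜] {p a b : 𝕜 → 𝕜}
    (hp : Differentiable 𝕜 p) (ha : Differentiable 𝕜 a) (hb : Differentiable 𝕜 b) (d : ℕ)
    (ψ : ℕ → ℕ → 𝕜) : Differentiable 𝕜 (fun z ↦ recolourMean (p z) (a z) (b z) d ψ) := by
  unfold recolourMean binomialMean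
  fun_prop

end RecolourMean

section Upcrossing

variable {R : Type*} [CommRing R]

/-- The indicator that a count going from `s` to `t` crosses the level `n` upwards. -/
def upcrossing (n s t : ℕ) : R :=
  if s < n ∧ n ≤ t then 1 else 0

lemma upcrossing_zero : (upcrossing 0 : ℕ → ℕ → R) = fun _ _ ↦ 0 := by
  ext
  simp [upcrossing]

lemma upcrossing_self (n s : ℕ) : (upcrossing n s s : R) = 0 :=
  if_neg fun h ↦ h.2.not_gt h.1

lemma upcrossing_succ_succ_succ (n s t : ℕ) :
    (upcrossing (n + 1) (s + 1) (t + 1) : R) = upcrossing n s t := by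
  simp [upcrossing]

lemma upcrossing_succ_right_self (n s : ℕ) :
    (upcrossing (n + 1) s (s + 1) : R) = if s = n then 1 else 0 := by
  simp [upcrossing, le_antisymm_iff]

/-- The product `d * binomialProb p (d - 1) (n - 1) * (p * a)`, of which the right-hand side is a
subtraction-free form, is the union bound over the vertex whose recolouring brings the count from
`n - 1` to `n` when the vertices are recoloured one at a time: by balance the other `d - 1` vertices
keep their binomial law at every stage. -/
lemma recolourMean_upcrossing_le [LinearOrder R] [IsStrictOrderedRing R] {p a b : R} (hp : 0 ≤ p)
    (hp' : p ≤ 1) (ha : 0 ≤ a) (ha' : a ≤ 1) (hb : 0 ≤ b) (hb' : b ≤ 1)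
    (hab : p * a = (1 - p) * b) (d n : ℕ) :
    recolourMean p a b d (upcrossing n) ≤ n * binomialProb p d n * a := by
  have mono := recolourMean_mono hp hp' ha ha' hb hb'
  induction d generalizing n with
  | zero => cases n <;> simp [upcrossing, binomialProb_zero_left]
  | succ d ih =>
    rcases n with _ | n
    · simp [upcrossing_zero, recolourMean_fun_zero]
    have lost : recolourMean p a b d (fun s t ↦ upcrossing (n + 1) (s + 1) t) ≤
        n * binomialProb p d n * a := by
      refine (mono d fun s t ↦ ?_).trans (ih n)
      unfold upcrossing
      split_ifs <;> first | lia | simp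
    have kept : recolourMean p a b d (fun s t ↦ upcrossing (n + 1) (s + 1) (t + 1)) ≤
        n * binomialProb p d n * a := by
      simpa only [upcrossing_succ_succ_succ] using ih n
    have gained : recolourMean p a b d (fun s t ↦ upcrossing (n + 1) s (t + 1)) ≤
        (n + 1 : ℕ) * binomialProb p d (n + 1) * a + binomialProb p d n := by
      grw [← ih (n + 1), ← recolourMean_eq_binomialProb hab, ← recolourMean_add]
      refine mono d fun s t ↦ ?_
      unfold upcrossing
      split_ifs <;> first | lia | simp
    have absent := ih (n + 1)
    have : 0 ≤ 1 - p := sub_nonneg.2 hp'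
    have : 0 ≤ 1 - a := sub_nonneg.2 ha'
    have : 0 ≤ 1 - b := sub_nonneg.2 hb'
    rw [recolourMean_succ]
    grw [lost, kept, gained, absent]
    rw [binomialProb_succ_succ]
    refine le_of_eq ?_
    push_cast
    linear_combination -binomialProb p d n * hab

lemma recolourMean_zero_zero_mul_upcrossing (p : R) (d n : ℕ) (g : ℕ → R) :
    recolourMean p 0 0 d (fun s t ↦ g s * upcrossing n s t) = 0 := by
  simpa only [recolourMean_zero_zero, upcrossing_self, mul_zero] using recolourMean_fun_zero p 0 0 d

lemma hasDerivAt_recolourMean_upcrossing {𝕜 : Type*} [NontriviallyNormedField 𝕜] {p c : 𝕜}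
    (hc : p = (1 - p) * c) (d n : ℕ) (g : ℕ → 𝕜) :
    HasDerivAt (fun z ↦ recolourMean p z (c * z) d (fun s t ↦ g s * upcrossing n s t))
      (g (n - 1) * (n * binomialProb p d n)) 0 := by
  induction d generalizing n g with
  | zero => cases n <;> simp [upcrossing, binomialProb_zero_left, hasDerivAt_const]
  | succ d ih =>
    rcases n with _ | n
    · simp [upcrossing_zero, recolourMean_fun_zero, hasDerivAt_const]
    have diff (ψ : ℕ → ℕ → 𝕜) : HasDerivAt (fun z ↦ recolourMean p z (c * z) d ψ) _ 0 :=
      (differentiable_recolourMean (by fun_prop) (by fun_prop) (by fun_prop) d ψ 0).hasDerivAt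
    have kept : HasDerivAt (fun z ↦ recolourMean p z (c * z) d
        (fun s t ↦ g (s + 1) * upcrossing (n + 1) (s + 1) (t + 1))) (g n * (n * binomialProb p d n))
        0 := by
      simp only [upcrossing_succ_succ_succ]
      convert ih n (fun s ↦ g (s + 1)) using 1
      cases n <;> simp
    have gained : recolourMean p 0 0 d (fun s t ↦ g s * upcrossing (n + 1) s (t + 1)) =
        g n * binomialProb p d n := by
      simp only [recolourMean_zero_zero, upcrossing_succ_right_self, binomialMean_mul_ite_eq]
    have lost : recolourMean p 0 0 d (fun s t ↦ g (s + 1) * upcrossing (n + 1) (s + 1) t) = 0 := by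
      have h (s : ℕ) : (upcrossing (n + 1) (s + 1) s : 𝕜) = 0 := if_neg (by lia)
      simpa only [recolourMean_zero_zero, h, mul_zero] using recolourMean_fun_zero p 0 0 d
    simp only [recolourMean_succ]
    have hz := hasDerivAt_id' (0 : 𝕜)
    refine ((((hz.mul (diff _)).add ((hz.const_sub 1).mul kept)).const_mul p).add
      ((((hz.const_mul c).mul (diff _)).add
        (((hz.const_mul c).const_sub 1).mul (ih (n + 1) g))).const_mul (1 - p))).congr_deriv ?_
    simp only [mul_zero, zero_mul, sub_zero, upcrossing_succ_succ_succ, lost, gained,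
      recolourMean_zero_zero_mul_upcrossing, binomialProb_succ_succ, Nat.add_sub_cancel]
    push_cast
    linear_combination -(g n * binomialProb p d n) * hc

end Upcrossing

section Overtaking

/-- The event defining `Q d` as a function of the numbers `s` and `t` of vertices of the colour
before and after recolouring: `0 < s` and the count crosses `d / 2 + 1`, the smallest majority. -/
def overtake {R : Type*} [CommRing R] (d s t : ℕ) : R :=
  (if 0 < s then 1 else 0) * upcrossing (d / 2 + 1) s t

/-- The polynomial `Q d` over an arbitrary field, by which it is extended to the complex plane. -/
def overtakeProb {𝕜 : Type*} [Field 𝕜] (d : ℕ) (z : 𝕜) : 𝕜 :=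
  recolourMean (1 / 3) z (z / 2) d (overtake d)

/-- The derivative of `Q d` at `0`. It vanishes for `d ≤ 1`, where `Q d` is an empty sum. -/
noncomputable def overtakeRate (d : ℕ) : ℝ :=
  (if 0 < d / 2 then 1 else 0) * ((d / 2 + 1 : ℕ) * binomialProb (1 / 3) d (d / 2 + 1))

lemma binomialMean_tail {R : Type*} [CommRing R] (q : R) {l r n N : ℕ} (hl : l ≤ n)
    (hN : l + r ≤ N) :
    binomialMean q r (fun m _ ↦ if n ≤ l + m then 1 else 0) =
      ∑ j ∈ Icc n N, (r.choose (j - l) : R) * q ^ (j - l) * (1 - q) ^ (l + r - j) := by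
  simp only [binomialMean, mul_ite, mul_one, mul_zero]
  rw [Nat.sum_antidiagonal_eq_sum_range_succ (fun m m' ↦ if n ≤ l + m then
    (r.choose m : R) * (q ^ m * (1 - q) ^ m') else 0), ← sum_filter]
  refine sum_of_injOn (l + ·) (add_right_injective l).injOn ?_ ?_ ?_
  · intro m hm
    simp only [coe_filter, mem_range, Set.mem_ofPred_eq] at hm
    simp only [coe_Icc, Set.mem_Icc]
    lia
  · intro j hj hj'
    rw [mem_Icc] at hj
    have hr : r < j - l := by
      by_contra! h
      exact hj' ⟨j - l, by simp; lia, by grind⟩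
    simp [Nat.choose_eq_zero_of_lt hr]
  · intro m _
    rw [Nat.add_sub_cancel_left, Nat.add_sub_add_left, mul_assoc]

lemma binomialMean_kept_add_gained_tail {R : Type*} [CommRing R] (a b : R) {d i n : ℕ}
    (hin : i ≤ n) (hid : i ≤ d) :
    binomialMean a i (fun _ kept ↦ binomialMean b (d - i) fun gained _ ↦
        if n ≤ kept + gained then 1 else 0) =
      ∑ j ∈ Icc n d, ∑ k ∈ range (i + 1),
        (i.choose k : R) * a ^ k * (1 - a) ^ (i - k) * ((d - i).choose (j + k - i) : R) *
          b ^ (j + k - i) * (1 - b) ^ (d - j - k) := by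
  rw [sum_comm, binomialMean, Nat.sum_antidiagonal_eq_sum_range_succ (fun k l ↦ (i.choose k : R) *
    (a ^ k * (1 - a) ^ l * binomialMean b (d - i) fun m _ ↦ if n ≤ l + m then 1 else 0))]
  refine sum_congr rfl fun k hk ↦ ?_
  have hk : k ≤ i := mem_range_succ_iff.1 hk
  rw [binomialMean_tail b (by lia) (show i - k + (d - i) ≤ d by lia), mul_sum, mul_sum]
  refine sum_congr rfl fun j _ ↦ ?_
  rw [show j - (i - k) = j + k - i by lia, show i - k + (d - i) - j = d - j - k by lia]
  ring

lemma Q_eq_overtakeProb (d : ℕ) (f : ℝ) : Q d f = overtakeProb d f := by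
  rw [overtakeProb, recolourMean, binomialMean,
    Nat.sum_antidiagonal_eq_sum_range_succ (fun s r ↦ (d.choose s : ℝ) * ((1 / 3) ^ s *
      (1 - 1 / 3) ^ r * binomialMean f s fun _ kept ↦ binomialMean (f / 2) r fun gained _ ↦
        overtake d s (kept + gained)))]
  refine sum_subset_zero_on_sdiff (fun i hi ↦ ?_) (fun i hi ↦ ?_) (fun i hi ↦ ?_)
  · rw [mem_Icc] at hi
    rw [mem_range]
    lia
  · have h (t : ℕ) : (overtake d i t : ℝ) = 0 := by
      simp only [mem_sdiff, mem_range, mem_Icc] at hi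
      unfold overtake upcrossing
      split_ifs <;> lia
    simp [h, binomialMean]
  · rw [mem_Icc] at hi
    have h (t : ℕ) : (overtake d i t : ℝ) = if d / 2 + 1 ≤ t then 1 else 0 := by
      simp [overtake, upcrossing, Nat.lt_succ_of_le hi.2, show 0 < i from hi.1]
    simp only [h]
    rw [binomialMean_kept_add_gained_tail _ _ (by lia) (by lia)]
    norm_num [mul_assoc]

lemma differentiable_overtakeProb {𝕜 : Type*} [NontriviallyNormedField 𝕜] (d : ℕ) :
    Differentiable 𝕜 (overtakeProb d : 𝕜 → 𝕜) :=
  differentiable_recolourMean (by fun_prop) (by fun_prop) (by fun_prop) d _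

lemma norm_overtakeProb_le {𝕜 : Type*} [RCLike 𝕜] (d : ℕ) {z : 𝕜} (hz : ‖z‖ ≤ 1) :
    ‖overtakeProb d z‖ ≤ 3 ^ d := by
  have third : ‖(1 / 3 : 𝕜)‖ = 1 / 3 := by simp
  have two_thirds : ‖(1 - 1 / 3 : 𝕜)‖ = 2 / 3 := by
    rw [show (1 - 1 / 3 : 𝕜) = 2 / 3 by norm_num]
    simp
  have half : ‖z / 2‖ ≤ 1 / 2 := by
    simpa [div_eq_mul_inv] using hz
  have norm_one_sub_le (w : 𝕜) : ‖1 - w‖ ≤ 1 + ‖w‖ := (norm_sub_le 1 w).trans_eq (by simp)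
  refine (norm_recolourMean_le _ _ _ d (C := 1) fun s t ↦ ?_).trans ?_
  · unfold overtake upcrossing
    split_ifs <;> simp
  · rw [mul_one, third, two_thirds]
    gcongr
    linarith [norm_one_sub_le z, norm_one_sub_le (z / 2)]

lemma ofReal_overtakeProb (d : ℕ) (x : ℝ) :
    ((overtakeProb d x : ℝ) : ℂ) = overtakeProb d (x : ℂ) := by
  have h (s t : ℕ) : ((overtake d s t : ℝ) : ℂ) = overtake d s t := by
    simp [overtake, upcrossing, apply_ite Complex.ofReal]
  simpa [overtakeProb, h] using map_recolourMean Complex.ofRealHom (1 / 3) x (x / 2) d (overtake d)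

lemma hasDerivAt_overtakeProb (d : ℕ) :
    HasDerivAt (overtakeProb d : ℂ → ℂ) (overtakeRate d : ℂ) 0 := by
  have h := hasDerivAt_recolourMean_upcrossing (p := (1 / 3 : ℂ)) (c := 2⁻¹) (by norm_num) d
    (d / 2 + 1) (fun s ↦ if 0 < s then 1 else 0)
  simp only [← div_eq_inv_mul] at h
  exact h.congr_deriv (by simp [overtakeRate, binomialProb_eq, apply_ite Complex.ofReal])

lemma overtakeProb_le {f : ℝ} (hf : f ∈ Set.Icc 0 1) (d : ℕ) :
    overtakeProb d f ≤ overtakeRate d * f := by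
  obtain ⟨h0, h1⟩ := hf
  have hp : (0 : ℝ) ≤ 1 / 3 := by norm_num
  have hp' : (1 / 3 : ℝ) ≤ 1 := by norm_num
  have hb : 0 ≤ f / 2 := by positivity
  have hb' : f / 2 ≤ 1 := by linarith
  -- An upcrossing of `d / 2 + 1` starts at some `s ≤ d / 2`, so `0 < s` forces `0 < d / 2`.
  calc overtakeProb d f
      ≤ recolourMean (1 / 3) f (f / 2) d
          (fun s t ↦ (if 0 < d / 2 then 1 else 0) * upcrossing (d / 2 + 1) s t) := by
        refine recolourMean_mono hp hp' h0 h1 hb hb' d fun s t ↦ ?_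
        unfold overtake upcrossing
        split_ifs <;> first | lia | simp
    _ = (if 0 < d / 2 then 1 else 0) *
          recolourMean (1 / 3) f (f / 2) d (upcrossing (d / 2 + 1)) :=
        recolourMean_const_mul ..
    _ ≤ (if 0 < d / 2 then 1 else 0) *
          ((d / 2 + 1 : ℕ) * binomialProb (1 / 3) d (d / 2 + 1) * f) := by
        gcongr
        exact recolourMean_upcrossing_le hp hp' h0 h1 hb hb' (by ring) d _
    _ = overtakeRate d * f := by rw [overtakeRate]; ring

end Overtaking

section RateBound

lemma mul_centralBinom_mul_pow_le (n : ℕ) :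
    (2 * n + 1 : ℝ) * n.centralBinom * (2 / 9) ^ n ≤ 1120 / 729 := by
  rcases lt_or_ge n 3 with h | h
  · interval_cases n <;> norm_num [Nat.centralBinom, Nat.choose]
  induction n, h using Nat.le_induction with
  | base => norm_num [Nat.centralBinom, Nat.choose]
  | succ n hn ih =>
    refine le_trans ?_ ih
    have hn : (3 : ℝ) ≤ n := mod_cast hn
    have hC : ((n + 1 : ℕ).centralBinom : ℝ) = 2 * (2 * n + 1) * n.centralBinom / (n + 1) := by
      rw [eq_div_iff (by positivity), mul_comm]
      exact_mod_cast Nat.succ_mul_centralBinom_succ n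
    have ratio : 4 * (2 * n + 3) / (9 * (n + 1)) ≤ (1 : ℝ) := by
      rw [div_le_one (by positivity)]
      linarith
    calc (2 * (n + 1 : ℕ) + 1 : ℝ) * (n + 1).centralBinom * (2 / 9) ^ (n + 1)
        = (2 * n + 1) * n.centralBinom * (2 / 9) ^ n * (4 * (2 * n + 3) / (9 * (n + 1))) := by
          rw [hC]
          push_cast
          field_simp
          ring
      _ ≤ (2 * n + 1) * n.centralBinom * (2 / 9) ^ n :=
          mul_le_of_le_one_right (by positivity) ratio

lemma succ_mul_binomialProb_two_mul_add_one_le (n : ℕ) :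
    (n + 1 : ℝ) * binomialProb (1 / 3) (2 * n + 1) (n + 1) ≤ 1120 / 2187 := by
  rw [succ_mul_binomialProb_succ, binomialProb_two_mul_self]
  have := mul_centralBinom_mul_pow_le n
  norm_num at this ⊢
  linarith

lemma overtakeRate_le (d : ℕ) : overtakeRate d ≤ 2800 / 6561 - 560 / 6561 * (-1) ^ d := by
  obtain ⟨n, rfl | rfl⟩ := d.even_or_odd'
  · rcases n with _ | n
    · norm_num [overtakeRate]
    have even_le := succ_mul_binomialProb_two_mul_add_one_le n
    have h := succ_mul_binomialProb_succ (1 / 3 : ℝ) (2 * n + 1) (n + 1)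
    rw [overtakeRate, pow_mul, if_pos (by lia), show 2 * (n + 1) / 2 = n + 1 by lia,
      show 2 * (n + 1) = 2 * n + 1 + 1 by lia]
    push_cast at h ⊢
    norm_num at h even_le ⊢
    linarith
  · have odd_le := succ_mul_binomialProb_two_mul_add_one_le n
    rw [overtakeRate, pow_succ, pow_mul, neg_one_sq, one_pow, show (2 * n + 1) / 2 = n by lia]
    push_cast
    split_ifs
    · linarith
    · norm_num

end RateBound

section PoissonAverage

/-- The Poisson weight `exp (-r) * r ^ d / d!`, for any real parameter. -/
noncomputable def poissonWeight (r : ℝ) (d : ℕ) : ℝ :=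
  Real.exp (-r) * r ^ d / (Nat.factorial d : ℝ)

lemma poissonWeight_nonneg {r : ℝ} (hr : 0 ≤ r) (d : ℕ) : 0 ≤ poissonWeight r d := by
  unfold poissonWeight
  positivity

lemma hasSum_poissonWeight_mul_pow (r x : ℝ) :
    HasSum (fun d ↦ poissonWeight r d * x ^ d) (Real.exp (r * (x - 1))) := by
  convert! (NormedSpace.expSeries_div_hasSum_exp (r * x)).mul_left (Real.exp (-r)) using 1
  · ext d
    rw [poissonWeight, mul_pow]
    ring
  · rw [← Real.exp_eq_exp_ℝ, ← Real.exp_add]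
    ring_nf

lemma hasSum_deriv_tsum_of_complex {ι : Type*} {F : ι → ℂ → ℂ} {G : ι → ℝ → ℝ} {u G' : ι → ℝ}
    {x : ℝ} {U : Set ℂ} (hU : IsOpen U) (hx : (x : ℂ) ∈ U) (hu : Summable u)
    (hF : ∀ i, DifferentiableOn ℂ (F i) U) (hFu : ∀ i, ∀ z ∈ U, ‖F i z‖ ≤ u i)
    (hFG : ∀ i (y : ℝ), F i y = G i y) (hF' : ∀ i, HasDerivAt (F i) (G' i) x) :
    HasSum G' (deriv (fun y ↦ ∑' i, G i y) x) := by
  have hd := Complex.hasSum_deriv_of_summable_norm hu hF hU hFu hx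
  have hsum := ((Complex.differentiableOn_tsum_of_summable_norm hu hF hU hFu).differentiableAt
    (hU.mem_nhds hx)).hasDerivAt.real_of_complex
  have hG : (fun y : ℝ ↦ (∑' i, F i y).re) = fun y ↦ ∑' i, G i y := by
    simp only [hFG, ← Complex.ofReal_tsum, Complex.ofReal_re]
  rw [hG] at hsum
  simpa [hsum.deriv, (hF' _).deriv] using Complex.hasSum_re hd

lemma P_eq_tsum (r : ℝ) : P r = fun f ↦ ∑' d, poissonWeight r d * overtakeProb d f := by
  ext f
  simp only [P, poissonWeight, Q_eq_overtakeProb]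

variable {r : ℝ}

lemma norm_poissonWeight_mul_overtakeProb_le {𝕜 : Type*} [RCLike 𝕜] (hr : 0 ≤ r) (d : ℕ) {z : 𝕜}
    (hz : ‖z‖ ≤ 1) : ‖(poissonWeight r d : 𝕜) * overtakeProb d z‖ ≤ poissonWeight r d * 3 ^ d := by
  rw [norm_mul, RCLike.norm_of_nonneg (poissonWeight_nonneg hr d)]
  exact mul_le_mul_of_nonneg_left (norm_overtakeProb_le d hz) (poissonWeight_nonneg hr d)

lemma hasSum_P (hr : 0 ≤ r) {f : ℝ} (hf : |f| ≤ 1) :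
    HasSum (fun d ↦ poissonWeight r d * overtakeProb d f) (P r f) := by
  rw [P_eq_tsum]
  exact (Summable.of_norm_bounded (hasSum_poissonWeight_mul_pow r 3).summable fun d ↦
    norm_poissonWeight_mul_overtakeProb_le (𝕜 := ℝ) hr d hf).hasSum

lemma hasSum_deriv_P (hr : 0 ≤ r) :
    HasSum (fun d ↦ poissonWeight r d * overtakeRate d) (deriv (P r) 0) := by
  rw [P_eq_tsum]
  refine hasSum_deriv_tsum_of_complex (F := fun d z ↦ poissonWeight r d * overtakeProb d z)
    Metric.isOpen_ball (Metric.mem_ball_self one_pos) (hasSum_poissonWeight_mul_pow r 3).summable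
    (fun d ↦ ((differentiable_overtakeProb d).const_mul _).differentiableOn)
    (fun d z hz ↦ norm_poissonWeight_mul_overtakeProb_le hr d (mem_ball_zero_iff.1 hz).le)
    (fun d y ↦ by simp [ofReal_overtakeProb])
    (fun d ↦ by simpa using (hasDerivAt_overtakeProb d).const_mul (poissonWeight r d : ℂ))

lemma P_le_deriv_mul (hr : 0 ≤ r) {f : ℝ} (hf : f ∈ Set.Icc 0 1) : P r f ≤ deriv (P r) 0 * f := by
  refine hasSum_le (fun d ↦ ?_) (hasSum_P hr (abs_le.2 ⟨by linarith [hf.1], hf.2⟩))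
    ((hasSum_deriv_P hr).mul_right f)
  rw [mul_assoc]
  exact mul_le_mul_of_nonneg_left (overtakeProb_le hf d) (poissonWeight_nonneg hr d)

lemma deriv_P_le (hr : 0 ≤ r) : deriv (P r) 0 ≤ 2800 / 6561 := by
  have h := ((hasSum_poissonWeight_mul_pow r 1).mul_left (2800 / 6561)).sub
    ((hasSum_poissonWeight_mul_pow r (-1)).mul_left (560 / 6561))
  calc deriv (P r) 0 ≤ _ := hasSum_le (fun d ↦ ?_) (hasSum_deriv_P hr) h
    _ ≤ 2800 / 6561 := by
        rw [sub_self, mul_zero, Real.exp_zero, mul_one]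
        exact sub_le_self _ (by positivity)
  rw [one_pow]
  linarith [mul_le_mul_of_nonneg_left (overtakeRate_le d) (poissonWeight_nonneg hr d)]

end PoissonAverage

theorem two_P_le_general (lam : ℝ) (hlam : 0 ≤ lam) (f : ℝ) (hf : f ∈ Set.Icc (0 : ℝ) 1) :
    2 * P lam f ≤ 2 * deriv (P lam) 0 * f ∧ 2 * deriv (P lam) 0 * f ≤ 5600 / 6561 * f := by
  constructor
  · linarith [P_le_deriv_mul hlam hf]
  · exact mul_le_mul_of_nonneg_right (by linarith [deriv_P_le hlam]) hf.1

/-- For any `λ ≥ 0` and `f ∈ [0, 1/3]`, we have `2·P_λ(f) ≤ 2·P_λ'(0)·f ≤ 0.9999·f`. -/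
theorem two_P_le (lam : ℝ) (hlam : 0 ≤ lam) (f : ℝ) (hf : f ∈ Set.Icc (0 : ℝ) (1 / 3)) :
    2 * P lam f ≤ 2 * deriv (P lam) 0 * f ∧ 2 * deriv (P lam) 0 * f ≤ 0.9999 * f := by
  have h := two_P_le_general lam hlam f ⟨hf.1, hf.2.trans (by norm_num)⟩
  exact ⟨h.1, h.2.trans (mul_le_mul_of_nonneg_right (by norm_num) hf.1)⟩
end

section
/- Fix a constant ε > 0. For every δ > 0 there exists M such that the following holds for all n, all p ∈ (0,1) with n·p·(1−p) ≥ M, and the random digraph D ~ 𝔻(n,p): for any pair of bisections c, c' : V(D) → {1,2} with overlap α ∈ [ε, 1−ε], and any vertex v, letting E_v and E_v' be the events that v is majority-coloured with respect to c and with respect to c' respectively: (1) |Pr[E_v] − 1/2| ≤ δ; (2) if c(v) = c'(v) then |Pr[E_v ∩ E_v'] − (1/π)·arctan(√(α/(1−α)))| ≤ δ; (3) if c(v) ≠ c'(v) then |Pr[E_v ∩ E_v'] − (1/π)·arctan(√((1−α)/α))| ≤ δ. -/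
open MeasureTheory Filter

/-- The overlap of two 2-colourings: the fraction of vertices on which they agree. -/
noncomputable def overlap {n : ℕ} (c c' : Fin n → Bool) : ℝ :=
  (({v | c v = c' v} : Set (Fin n)).ncard : ℝ) / n

/-!
Record the out-neighbourhood of `v` by independent Bernoulli variables, and count each out-neighbour
`w` with the sign `+1` or `-1` according to whether its colour differs from that of `v`; then `v` is
majority-coloured exactly when the signed count is nonnegative. Suppose that `c v = c' v`, and let
`X` and `Y` be the parts of the signed count for `c` coming from the vertices on which `c` and `c'`
agree, respectively disagree. The signed count for `c` is `X + Y` and the one for `c'` is `X - Y`,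
so both are nonnegative exactly when `|Y| ≤ X`. The two colourings being balanced, the means of the
counts are bounded, and the central limit theorem makes `(X, Y)`, rescaled by `√(n p (1 - p))`,
approximately a pair of independent centred Gaussians of variances `α` and `1 - α`. The event
`|Y| ≤ X` is a cone, so it is insensitive to the scale, and the Gaussian pair lies in it with
probability its angular width divided by `2π`: in the coordinates in which the pair is standard
Gaussian, the cone is `|θ| ≤ arcsin √α`.

Exchanging the two colours of `c'` changes neither the events nor the balance, but replaces `α` by
`1 - α` and turns the case `c v ≠ c' v` into the previous one. Uniformity over the overlap follows
by compactness of `[0, 1]`, since a sequence of counterexamples has a subsequence along which the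
overlaps converge.
-/

open ProbabilityTheory
open scoped Topology RealInnerProductSpace unitInterval

theorem norm_prod_sub_prod_le {ι R : Type*} [NormedCommRing R] [NormOneClass R] (s : Finset ι)
    {a b : ι → R} (ha : ∀ i ∈ s, ‖a i‖ ≤ 1) (hb : ∀ i ∈ s, ‖b i‖ ≤ 1) :
    ‖∏ i ∈ s, a i - ∏ i ∈ s, b i‖ ≤ ∑ i ∈ s, ‖a i - b i‖ := by
  induction s using Finset.cons_induction with
  | empty => simp
  | cons j s hj ih =>
    rw [Finset.forall_mem_cons] at ha hb
    have hprod : ‖∏ i ∈ s, a i‖ ≤ 1 :=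
      (s.norm_prod_le a).trans (Finset.prod_le_one (fun _ _ => norm_nonneg _) ha.2)
    rw [Finset.prod_cons, Finset.prod_cons, Finset.sum_cons]
    calc ‖a j * ∏ i ∈ s, a i - b j * ∏ i ∈ s, b i‖
        = ‖(a j - b j) * ∏ i ∈ s, a i + b j * (∏ i ∈ s, a i - ∏ i ∈ s, b i)‖ := by ring_nf
      _ ≤ ‖a j - b j‖ * ‖∏ i ∈ s, a i‖ + ‖b j‖ * ‖∏ i ∈ s, a i - ∏ i ∈ s, b i‖ :=
        norm_add_le_of_le (norm_mul_le _ _) (norm_mul_le _ _)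
      _ ≤ ‖a j - b j‖ + ∑ i ∈ s, ‖a i - b i‖ :=
        add_le_add (mul_le_of_le_one_right (norm_nonneg _) hprod)
          ((mul_le_of_le_one_left (norm_nonneg _) hb.1).trans (ih ha.2 hb.2))

theorem norm_cexp_ofReal_mul_I_sub_taylor_le {y : ℝ} (hy : |y| ≤ 1) :
    ‖Complex.exp (y * Complex.I) - (1 + y * Complex.I - y ^ 2 / 2)‖ ≤ |y| ^ 3 := by
  have hnorm : ‖(y : ℂ) * Complex.I‖ = |y| := by simp
  have htaylor : ∑ m ∈ Finset.range 3, ((y : ℂ) * Complex.I) ^ m / (m.factorial : ℂ) =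
      1 + y * Complex.I - y ^ 2 / 2 := by
    simp [Finset.sum_range_succ, mul_pow]
    ring
  have hbound := Complex.exp_bound (hnorm.trans_le hy) (n := 3) (by norm_num)
  rw [hnorm, htaylor] at hbound
  refine hbound.trans (mul_le_of_le_one_right (by positivity) ?_)
  norm_num [Nat.factorial]

/-- The characteristic function `x ↦ E[exp(i x ξ)]` of a variable `ξ` which is `1` with
probability `p` and `0` otherwise. -/
noncomputable def bernoulliCharFun (p x : ℝ) : ℂ :=
  (1 - p : ℝ) + p * Complex.exp (x * Complex.I)

theorem bernoulliCharFun_eq_cexp_mul (p x : ℝ) :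
    bernoulliCharFun p x = Complex.exp ((p * x : ℝ) * Complex.I) *
      ((1 - p : ℝ) * Complex.exp ((-p * x : ℝ) * Complex.I) +
        p * Complex.exp (((1 - p) * x : ℝ) * Complex.I)) := by
  rw [mul_add, mul_left_comm, mul_left_comm (Complex.exp _), ← Complex.exp_add,
    ← Complex.exp_add, bernoulliCharFun]
  congr 2
  · simp
  · push_cast
    ring_nf

section UnitInterval

variable (p : unitInterval)

theorem norm_bernoulliCharFun_le_one (x : ℝ) : ‖bernoulliCharFun p x‖ ≤ 1 := by
  calc ‖bernoulliCharFun p x‖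
      ≤ ‖((1 - p : ℝ) : ℂ)‖ + ‖(p : ℂ) * Complex.exp (x * Complex.I)‖ := norm_add_le _ _
    _ = (1 - p) + p := by
        rw [norm_mul, Complex.norm_exp_ofReal_mul_I, mul_one, Complex.norm_of_nonneg p.2.1,
          Complex.norm_of_nonneg (sub_nonneg.2 p.2.2)]
    _ = 1 := sub_add_cancel _ _

theorem norm_centered_bernoulliCharFun_sub_taylor_le {x : ℝ} (hx : |x| ≤ 1) :
    ‖(1 - p : ℝ) * Complex.exp ((-p * x : ℝ) * Complex.I) +
        p * Complex.exp (((1 - p) * x : ℝ) * Complex.I) -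
        (1 - p * (1 - p) * x ^ 2 / 2 : ℝ)‖ ≤ p * (1 - p) * |x| ^ 3 := by
  obtain ⟨p, hp0, hp1⟩ := p
  have hq0 : 0 ≤ 1 - p := sub_nonneg.2 hp1
  have hp : |-p * x| = p * |x| := by rw [abs_mul, abs_neg, abs_of_nonneg hp0]
  have hq : |(1 - p) * x| = (1 - p) * |x| := by rw [abs_mul, abs_of_nonneg hq0]
  have htaylor_p := norm_cexp_ofReal_mul_I_sub_taylor_le (y := -p * x)
    (hp.trans_le (mul_le_one₀ hp1 (abs_nonneg x) hx))
  have htaylor_q := norm_cexp_ofReal_mul_I_sub_taylor_le (y := (1 - p) * x)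
    (hq.trans_le (mul_le_one₀ (sub_le_self 1 hp0) (abs_nonneg x) hx))
  rw [hp] at htaylor_p
  rw [hq] at htaylor_q
  calc ‖((1 - p : ℝ) : ℂ) * Complex.exp ((-p * x : ℝ) * Complex.I) +
        p * Complex.exp (((1 - p) * x : ℝ) * Complex.I) - (1 - p * (1 - p) * x ^ 2 / 2 : ℝ)‖
      = ‖((1 - p : ℝ) : ℂ) * (Complex.exp ((-p * x : ℝ) * Complex.I) -
            (1 + (-p * x : ℝ) * Complex.I - (-p * x : ℝ) ^ 2 / 2)) +
          p * (Complex.exp (((1 - p) * x : ℝ) * Complex.I) -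
            (1 + ((1 - p) * x : ℝ) * Complex.I - ((1 - p) * x : ℝ) ^ 2 / 2))‖ := by
        congr 1
        push_cast
        ring
    _ ≤ (1 - p) * (p * |x|) ^ 3 + p * ((1 - p) * |x|) ^ 3 := by
        refine norm_add_le_of_le ?_ ?_
        · rw [norm_mul, Complex.norm_of_nonneg hq0]
          gcongr
        · rw [norm_mul, Complex.norm_of_nonneg hp0]
          gcongr
    _ = p * (1 - p) * |x| ^ 3 * (p ^ 2 + (1 - p) ^ 2) := by ring
    _ ≤ p * (1 - p) * |x| ^ 3 :=
        mul_le_of_le_one_right (by positivity) (by nlinarith [mul_nonneg hp0 hq0])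

theorem norm_cexp_neg_variance_sub_taylor_le {x : ℝ} (hx : |x| ≤ 1) :
    ‖Complex.exp (-(p * (1 - p) * x ^ 2 / 2) : ℝ) - (1 - p * (1 - p) * x ^ 2 / 2 : ℝ)‖ ≤
      p * (1 - p) * |x| ^ 3 := by
  obtain ⟨p, hp0, hp1⟩ := p
  dsimp only
  have hq0 : 0 ≤ 1 - p := sub_nonneg.2 hp1
  set w : ℝ := p * (1 - p) * x ^ 2 / 2 with hw
  have hw_nonneg : 0 ≤ w := by positivity
  have hvar_le : p * (1 - p) ≤ 1 := mul_le_one₀ hp1 hq0 (sub_le_self 1 hp0)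
  have hsq_le : x ^ 2 ≤ 1 := (sq_le_one_iff_abs_le_one x).2 hx
  have hw_le : w ≤ 1 := by
    linarith [mul_le_one₀ hvar_le (sq_nonneg x) hsq_le]
  have htaylor : ‖Complex.exp (-w : ℝ) - (1 - w : ℝ)‖ ≤ w ^ 2 := by
    have hbound := Complex.norm_exp_sub_one_sub_id_le (x := ((-w : ℝ) : ℂ))
      (by rwa [Complex.norm_real, norm_neg, Real.norm_of_nonneg hw_nonneg])
    rw [Complex.norm_real, norm_neg, Real.norm_of_nonneg hw_nonneg] at hbound
    convert hbound using 2
    push_cast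
    ring
  calc ‖Complex.exp (-w : ℝ) - (1 - w : ℝ)‖
      ≤ w ^ 2 := htaylor
    _ = p * (1 - p) * |x| ^ 3 * (p * (1 - p) * |x| / 4) := by
        rw [hw, ← sq_abs x]
        ring
    _ ≤ p * (1 - p) * |x| ^ 3 :=
        mul_le_of_le_one_right (by positivity)
          (by linarith [mul_le_one₀ hvar_le (abs_nonneg x) hx])

theorem norm_bernoulliCharFun_sub_cexp_le {x : ℝ} (hx : |x| ≤ 1) :
    ‖bernoulliCharFun p x -
        Complex.exp ((p * x : ℝ) * Complex.I + (-(p * (1 - p) * x ^ 2 / 2) : ℝ))‖ ≤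
      2 * (p * (1 - p)) * |x| ^ 3 := by
  rw [bernoulliCharFun_eq_cexp_mul, Complex.exp_add, ← mul_sub, norm_mul,
    Complex.norm_exp_ofReal_mul_I, one_mul]
  calc _ ≤ p * (1 - p) * |x| ^ 3 + p * (1 - p) * |x| ^ 3 :=
        (norm_sub_le_norm_sub_add_norm_sub _ _ _).trans
          (add_le_add (norm_centered_bernoulliCharFun_sub_taylor_le p hx)
            ((norm_sub_rev _ _).trans_le (norm_cexp_neg_variance_sub_taylor_le p hx)))
    _ = 2 * (p * (1 - p)) * |x| ^ 3 := by ring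

theorem norm_prod_bernoulliCharFun_sub_cexp_le {ι : Type*} (s : Finset ι) {x : ι → ℝ}
    (hx : ∀ i ∈ s, |x i| ≤ 1) :
    ‖∏ i ∈ s, bernoulliCharFun p (x i) - Complex.exp ((p * ∑ i ∈ s, x i : ℝ) * Complex.I +
        (-(p * (1 - p) * (∑ i ∈ s, x i ^ 2) / 2) : ℝ))‖ ≤
      2 * (p * (1 - p)) * ∑ i ∈ s, |x i| ^ 3 := by
  have hexp : Complex.exp ((p * ∑ i ∈ s, x i : ℝ) * Complex.I +
      (-(p * (1 - p) * (∑ i ∈ s, x i ^ 2) / 2) : ℝ)) =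
      ∏ i ∈ s, Complex.exp ((p * x i : ℝ) * Complex.I +
        (-(p * (1 - p) * x i ^ 2 / 2) : ℝ)) := by
    rw [← Complex.exp_sum, Finset.sum_add_distrib, ← Finset.sum_mul, ← Complex.ofReal_sum,
      ← Complex.ofReal_sum, ← Finset.mul_sum, Finset.sum_neg_distrib, ← Finset.sum_div,
      ← Finset.mul_sum]
  have hexp_le (i : ι) : ‖Complex.exp ((p * x i : ℝ) * Complex.I +
      (-(p * (1 - p) * x i ^ 2 / 2) : ℝ))‖ ≤ 1 := by
    have : 0 ≤ (p : ℝ) * (1 - p) * x i ^ 2 / 2 := by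
      have := sub_nonneg.2 p.2.2
      have := p.2.1
      positivity
    rw [Complex.exp_add, norm_mul, Complex.norm_exp_ofReal_mul_I, one_mul, Complex.norm_exp,
      Complex.ofReal_re, Real.exp_le_one_iff]
    exact neg_nonpos.2 this
  rw [hexp, Finset.mul_sum]
  exact (norm_prod_sub_prod_le s (fun i _ => norm_bernoulliCharFun_le_one p _)
    fun i _ => hexp_le i).trans
      (Finset.sum_le_sum fun i hi => norm_bernoulliCharFun_sub_cexp_le p (hx i hi))

end UnitInterval

instance isProbabilityMeasure_bernoulliM (p : unitInterval) :
    IsProbabilityMeasure (bernoulliM p) := by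
  constructor
  rw [bernoulliM, Measure.add_apply, Measure.smul_apply, Measure.smul_apply, measure_univ,
    measure_univ, ENNReal.smul_def, ENNReal.smul_def, smul_eq_mul, smul_eq_mul, mul_one, mul_one,
    ← ENNReal.coe_add, ← Real.toNNReal_add p.2.1 (sub_nonneg.2 p.2.2), add_sub_cancel,
    Real.toNNReal_one, ENNReal.coe_one]

/-- The law of a family of independent Bernoulli variables with parameter `p`, such as one row
of the adjacency matrix of the binomial random digraph. -/
noncomputable abbrev bernoulliPi (ι : Type*) [Fintype ι] (p : ℝ) : Measure (ι → Bool) :=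
  Measure.pi fun _ => bernoulliM p

/-- The sum of the vectors `u i` over the indices `i` selected by the indicators `A`. -/
def bernoulliSum {ι E : Type*} [Fintype ι] [AddCommMonoid E] (u : ι → E) (A : ι → Bool) : E :=
  ∑ i, if A i then u i else 0

theorem bernoulliSum_smul {ι M E : Type*} [Fintype ι] [AddCommMonoid E] [DistribSMul M E]
    (a : M) (u : ι → E) (A : ι → Bool) :
    bernoulliSum (fun i => a • u i) A = a • bernoulliSum u A := by
  simp only [bernoulliSum, Finset.smul_sum, smul_ite, smul_zero]

theorem integral_bernoulliM (p : unitInterval) (f : Bool → ℂ) :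
    ∫ a, f a ∂bernoulliM p = (1 - p : ℝ) * f false + p * f true := by
  rw [bernoulliM, integral_add_measure .of_finite .of_finite, integral_smul_nnreal_measure,
    integral_smul_nnreal_measure, integral_dirac, integral_dirac, NNReal.smul_def,
    NNReal.smul_def, Real.coe_toNNReal _ p.2.1, Real.coe_toNNReal _ (sub_nonneg.2 p.2.2),
    Complex.real_smul, Complex.real_smul, add_comm]

section CentralLimit

variable {E : Type*} [NormedAddCommGroup E] [InnerProductSpace ℝ E] [MeasurableSpace E]
  [BorelSpace E]

theorem charFun_map_bernoulliSum [SecondCountableTopology E] {ι : Type*} [Fintype ι]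
    (p : unitInterval) (u : ι → E) (t : E) :
    charFun ((bernoulliPi ι p).map (bernoulliSum u)) t =
      ∏ i, bernoulliCharFun p ⟪u i, t⟫ := by
  have hexp (A : ι → Bool) : Complex.exp (⟪bernoulliSum u A, t⟫ * Complex.I) =
      ∏ i, Complex.exp (⟪if A i then u i else 0, t⟫ * Complex.I) := by
    rw [bernoulliSum, sum_inner, Complex.ofReal_sum, Finset.sum_mul, Complex.exp_sum]
  rw [charFun_apply, integral_map Measurable.of_discrete.aemeasurable (by fun_prop)]
  simp only [hexp]
  rw [integral_fintype_prod_eq_prod (f := fun i (a : Bool) =>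
    Complex.exp (⟪if a then u i else 0, t⟫ * Complex.I))]
  refine Finset.prod_congr rfl fun i _ => ?_
  simp [integral_bernoulliM, bernoulliCharFun]

variable {Ω : Type*} {mΩ : MeasurableSpace Ω} {μ : Measure Ω} [IsProbabilityMeasure μ]
  {Z : Ω → E} {Q : E → ℝ} {ι : ℕ → Type*} [∀ k, Fintype (ι k)] {p : ℕ → unitInterval}
  {u : ∀ k, ι k → E}

theorem tendsto_charFun_map_bernoulliSum [SecondCountableTopology E] {L : ℕ → ℝ} {t : E} {q : ℝ}
    (hL : Tendsto L atTop (𝓝 0)) (hu : ∀ k i, ‖u k i‖ ≤ L k)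
    (hmean : Tendsto (fun k => (p k : ℝ) • ∑ i, u k i) atTop (𝓝 0))
    (hvar : Tendsto (fun k => (p k : ℝ) * (1 - p k) * ∑ i, ⟪u k i, t⟫ ^ 2) atTop (𝓝 q)) :
    Tendsto (fun k => charFun ((bernoulliPi (ι k) (p k)).map (bernoulliSum (u k))) t) atTop
      (𝓝 (Complex.exp (-(q / 2) : ℝ))) := by
  set x : ∀ k, ι k → ℝ := fun k i => ⟪u k i, t⟫ with hx
  have hx_le (k : ℕ) (i : ι k) : |x k i| ≤ L k * ‖t‖ :=
    (abs_real_inner_le_norm _ _).trans (by gcongr; exact hu k i)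
  have hmean' : Tendsto (fun k => p k * ∑ i, x k i) atTop (𝓝 0) := by
    simpa [hx, inner_smul_left, sum_inner] using hmean.inner (𝕜 := ℝ) (tendsto_const_nhds (x := t))
  have hL' : Tendsto (fun k => L k * ‖t‖) atTop (𝓝 0) := by simpa using hL.mul_const ‖t‖
  have hgauss : Tendsto (fun k => Complex.exp ((p k * ∑ i, x k i : ℝ) * Complex.I +
      (-(p k * (1 - p k) * (∑ i, x k i ^ 2) / 2) : ℝ))) atTop
      (𝓝 (Complex.exp (-(q / 2) : ℝ))) := by
    have hlim := (((Complex.continuous_ofReal.tendsto 0).comp hmean').mul_const Complex.I).add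
      ((Complex.continuous_ofReal.tendsto _).comp (hvar.div_const 2).neg)
    simpa [Function.comp_def] using (Complex.continuous_exp.tendsto _).comp hlim
  have herror : Tendsto (fun k => 2 * (L k * ‖t‖) *
      (p k * (1 - p k) * ∑ i, x k i ^ 2)) atTop (𝓝 0) := by
    simpa using (hL'.const_mul 2).mul hvar
  simp only [charFun_map_bernoulliSum]
  refine tendsto_of_tendsto_of_dist hgauss
    (squeeze_zero' (.of_forall fun _ => dist_nonneg) ?_ herror)
  filter_upwards [hL'.eventually_le_const one_pos] with k hk
  have hvar_nonneg : 0 ≤ (p k : ℝ) * (1 - p k) := mul_nonneg (p k).2.1 (sub_nonneg.2 (p k).2.2)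
  rw [dist_comm, dist_eq_norm]
  calc ‖∏ i, bernoulliCharFun (p k) (x k i) - Complex.exp ((p k * ∑ i, x k i : ℝ) * Complex.I +
        (-(p k * (1 - p k) * (∑ i, x k i ^ 2) / 2) : ℝ))‖
      ≤ 2 * (p k * (1 - p k)) * ∑ i, |x k i| ^ 3 :=
        norm_prod_bernoulliCharFun_sub_cexp_le (p k) _ fun i _ => (hx_le k i).trans hk
    _ ≤ 2 * (p k * (1 - p k)) * ∑ i, L k * ‖t‖ * x k i ^ 2 := by
        gcongr with i
        rw [pow_succ', ← sq_abs (x k i)]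
        gcongr
        exact hx_le k i
    _ = 2 * (L k * ‖t‖) * (p k * (1 - p k) * ∑ i, x k i ^ 2) := by
        rw [← Finset.mul_sum]
        ring

variable [FiniteDimensional ℝ E]

theorem tendstoInDistribution_bernoulliSum {L : ℕ → ℝ} (hL : Tendsto L atTop (𝓝 0))
    (hu : ∀ k i, ‖u k i‖ ≤ L k)
    (hmean : Tendsto (fun k => (p k : ℝ) • ∑ i, u k i) atTop (𝓝 0))
    (hvar : ∀ t, Tendsto (fun k => (p k : ℝ) * (1 - p k) * ∑ i, ⟪u k i, t⟫ ^ 2) atTop (𝓝 (Q t)))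
    (hZ : AEMeasurable Z μ) (hcharFun : ∀ t, charFun (μ.map Z) t = Complex.exp (-(Q t / 2) : ℝ)) :
    TendstoInDistribution (fun k => bernoulliSum (u k)) atTop Z
      (fun k => bernoulliPi (ι k) (p k)) μ where
  forall_aemeasurable _ := Measurable.of_discrete.aemeasurable
  aemeasurable_limit := hZ
  tendsto := ProbabilityMeasure.tendsto_iff_tendsto_charFun.2 fun t => by
    simpa only [ProbabilityMeasure.coe_mk, hcharFun] using
      tendsto_charFun_map_bernoulliSum hL hu hmean (hvar t)

theorem tendstoInDistribution_inv_sqrt_smul_bernoulliSum {K B : ℝ}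
    (hp : Tendsto (fun k => Fintype.card (ι k) * (p k : ℝ) * (1 - p k)) atTop atTop)
    (hu : ∀ k i, ‖u k i‖ ≤ K) (hsum : ∀ k, ‖∑ i, u k i‖ ≤ B)
    (hvar : ∀ t, Tendsto (fun k => (∑ i, ⟪u k i, t⟫ ^ 2) / Fintype.card (ι k)) atTop (𝓝 (Q t)))
    (hZ : AEMeasurable Z μ)
    (hcharFun : ∀ t, charFun (μ.map Z) t = Complex.exp (-(Q t / 2) : ℝ)) :
    TendstoInDistribution
      (fun k A => (√(Fintype.card (ι k) * (p k : ℝ) * (1 - p k)))⁻¹ • bernoulliSum (u k) A)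
      atTop Z (fun k => bernoulliPi (ι k) (p k)) μ := by
  set a : ℕ → ℝ := fun k => (√(Fintype.card (ι k) * (p k : ℝ) * (1 - p k)))⁻¹ with ha
  have ha_lim : Tendsto a atTop (𝓝 0) := (Real.tendsto_sqrt_atTop.comp hp).inv_tendsto_atTop
  have ha_nonneg (k : ℕ) : 0 ≤ a k := by positivity
  have hnorm (k : ℕ) (i : ι k) : ‖a k • u k i‖ ≤ a k * K := by
    rw [norm_smul_of_nonneg (ha_nonneg k)]
    exact mul_le_mul_of_nonneg_left (hu k i) (ha_nonneg k)
  have hmean : Tendsto (fun k => (p k : ℝ) • ∑ i, a k • u k i) atTop (𝓝 0) := by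
    refine squeeze_zero_norm (fun k => ?_) (by simpa using ha_lim.mul_const B)
    rw [← Finset.smul_sum, norm_smul_of_nonneg (p k).2.1, norm_smul_of_nonneg (ha_nonneg k)]
    exact (mul_le_of_le_one_left (by positivity) (p k).2.2).trans
      (mul_le_mul_of_nonneg_left (hsum k) (ha_nonneg k))
  have hvar' (t : E) : Tendsto (fun k => (p k : ℝ) * (1 - p k) * ∑ i, ⟪a k • u k i, t⟫ ^ 2) atTop
      (𝓝 (Q t)) := by
    refine (hvar t).congr' ?_
    filter_upwards [hp.eventually_gt_atTop 0] with k hk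
    have hsq : a k ^ 2 = (Fintype.card (ι k) * (p k : ℝ) * (1 - p k))⁻¹ := by
      rw [ha, inv_pow, Real.sq_sqrt hk.le]
    have hq := right_ne_zero_of_mul hk.ne'
    have hp := right_ne_zero_of_mul (left_ne_zero_of_mul hk.ne')
    simp only [real_inner_smul_left, mul_pow, ← Finset.mul_sum, hsq]
    field_simp
  simp only [← bernoulliSum_smul]
  exact tendstoInDistribution_bernoulliSum (by simpa using ha_lim.mul_const K) hnorm hmean hvar' hZ
    hcharFun

theorem tendsto_bernoulliPi_bernoulliSum_mem_cone {K B : ℝ}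
    (hp : Tendsto (fun k => Fintype.card (ι k) * (p k : ℝ) * (1 - p k)) atTop atTop)
    (hu : ∀ k i, ‖u k i‖ ≤ K) (hsum : ∀ k, ‖∑ i, u k i‖ ≤ B)
    (hvar : ∀ t, Tendsto (fun k => (∑ i, ⟪u k i, t⟫ ^ 2) / Fintype.card (ι k)) atTop (𝓝 (Q t)))
    (hZ : AEMeasurable Z μ) (hcharFun : ∀ t, charFun (μ.map Z) t = Complex.exp (-(Q t / 2) : ℝ))
    {S : Set E} (hS : MeasurableSet S) (hcone : ∀ a : ℝ, 0 < a → ∀ x, a • x ∈ S ↔ x ∈ S)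
    (hfrontier : μ (Z ⁻¹' frontier S) = 0) :
    Tendsto (fun k => bernoulliPi (ι k) (p k) (bernoulliSum (u k) ⁻¹' S)) atTop
      (𝓝 (μ (Z ⁻¹' S))) := by
  have hdist := tendstoInDistribution_inv_sqrt_smul_bernoulliSum hp hu hsum hvar hZ hcharFun
  have hlim := ProbabilityMeasure.tendsto_measure_of_null_frontier_of_tendsto' hdist.tendsto
    (E := S) (by rwa [ProbabilityMeasure.coe_mk,
      Measure.map_apply_of_aemeasurable hZ isClosed_frontier.measurableSet])
  simp only [ProbabilityMeasure.coe_mk, Measure.map_apply Measurable.of_discrete hS,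
    Measure.map_apply_of_aemeasurable hZ hS] at hlim
  refine hlim.congr' ?_
  filter_upwards [hp.eventually_gt_atTop 0] with k hk
  congr 1
  ext A
  exact hcone _ (inv_pos.2 (Real.sqrt_pos.2 hk)) _

end CentralLimit

section GaussianPlane

theorem gaussianPDF_mul_gaussianPDF_polar (r θ : ℝ) :
    gaussianPDF 0 1 (r * Real.cos θ) * gaussianPDF 0 1 (r * Real.sin θ) =
      ENNReal.ofReal ((2 * Real.pi)⁻¹ * Real.exp (-r ^ 2 / 2)) := by
  have hnorm : (√(2 * Real.pi))⁻¹ * (√(2 * Real.pi))⁻¹ = (2 * Real.pi)⁻¹ := by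
    rw [← mul_inv, Real.mul_self_sqrt (by positivity)]
  have hsq : -(r * Real.cos θ) ^ 2 / 2 + -(r * Real.sin θ) ^ 2 / 2 = -r ^ 2 / 2 := by
    linear_combination (-r ^ 2 / 2) * Real.sin_sq_add_cos_sq θ
  rw [gaussianPDF, gaussianPDF, ← ENNReal.ofReal_mul (gaussianPDFReal_nonneg _ _ _)]
  simp only [gaussianPDFReal, NNReal.coe_one, mul_one, sub_zero]
  rw [mul_mul_mul_comm, hnorm, ← Real.exp_add, hsq]

variable {S : Set (ℝ × ℝ)} {T : Set ℝ}

theorem gaussianReal_zero_one_prod_eq_lintegral_mul_volume (hS : MeasurableSet S)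
    (hT : MeasurableSet T)
    (hST : ∀ r > 0, ∀ θ ∈ Set.Ioo (-Real.pi) Real.pi,
      ((r * Real.cos θ, r * Real.sin θ) ∈ S ↔ θ ∈ T)) :
    (gaussianReal 0 1).prod (gaussianReal 0 1) S =
      (∫⁻ r in Set.Ioi (0 : ℝ), ENNReal.ofReal r *
        ENNReal.ofReal ((2 * Real.pi)⁻¹ * Real.exp (-r ^ 2 / 2))) *
      volume (T ∩ Set.Ioo (-Real.pi) Real.pi) := by
  have hpolar : Set.EqOn (fun q : ℝ × ℝ => ENNReal.ofReal q.1 •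
        S.indicator (fun z : ℝ × ℝ => gaussianPDF 0 1 z.1 * gaussianPDF 0 1 z.2)
          (polarCoord.symm q))
      (fun q => ENNReal.ofReal q.1 *
        ENNReal.ofReal ((2 * Real.pi)⁻¹ * Real.exp (-q.1 ^ 2 / 2)) * T.indicator 1 q.2)
      polarCoord.target := by
    rintro ⟨r, θ⟩ ⟨hr, hθ⟩
    have hmem := hST r hr θ hθ
    simp only [polarCoord_symm_apply, smul_eq_mul]
    by_cases hθT : θ ∈ T
    · rw [Set.indicator_of_mem (hmem.2 hθT), Set.indicator_of_mem hθT,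
        gaussianPDF_mul_gaussianPDF_polar, Pi.one_apply, mul_one]
    · rw [Set.indicator_of_notMem (mt hmem.1 hθT), Set.indicator_of_notMem hθT, mul_zero,
        mul_zero]
  rw [gaussianReal_of_var_ne_zero 0 one_ne_zero, prod_withDensity (by fun_prop) (by fun_prop),
    withDensity_apply _ hS, ← lintegral_indicator hS, ← Measure.volume_eq_prod,
    ← lintegral_comp_polarCoord_symm,
    setLIntegral_congr_fun polarCoord.open_target.measurableSet hpolar, polarCoord_target,
    Measure.volume_eq_prod, ← Measure.prod_restrict,
    lintegral_prod_mul (f := fun r : ℝ => ENNReal.ofReal r *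
      ENNReal.ofReal ((2 * Real.pi)⁻¹ * Real.exp (-r ^ 2 / 2))) (by fun_prop)
      (measurable_one.indicator hT).aemeasurable,
    lintegral_indicator_one hT, Measure.restrict_apply hT]

theorem gaussianReal_zero_one_prod_eq_volume_div (hS : MeasurableSet S) (hT : MeasurableSet T)
    (hST : ∀ r > 0, ∀ θ ∈ Set.Ioo (-Real.pi) Real.pi,
      ((r * Real.cos θ, r * Real.sin θ) ∈ S ↔ θ ∈ T)) :
    (gaussianReal 0 1).prod (gaussianReal 0 1) S =
      volume (T ∩ Set.Ioo (-Real.pi) Real.pi) / ENNReal.ofReal (2 * Real.pi) := by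
  have htotal := gaussianReal_zero_one_prod_eq_lintegral_mul_volume .univ .univ (by simp)
  rw [measure_univ, Set.univ_inter, Real.volume_Ioo, sub_neg_eq_add, ← two_mul] at htotal
  rw [gaussianReal_zero_one_prod_eq_lintegral_mul_volume hS hT hST,
    ENNReal.eq_inv_of_mul_eq_one_left htotal.symm, mul_comm, ENNReal.div_eq_inv_mul, mul_comm]

theorem map_sqrt_mul_gaussianReal (a : NNReal) :
    (gaussianReal 0 1).map (√(a : ℝ) * ·) = gaussianReal 0 a := by
  rw [gaussianReal_map_const_mul, mul_zero, mul_one]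
  congr 1
  ext
  simp

theorem gaussianReal_prod_gaussianReal_eq_volume_div (a b : NNReal) (hS : MeasurableSet S)
    (hT : MeasurableSet T)
    (hST : ∀ r > 0, ∀ θ ∈ Set.Ioo (-Real.pi) Real.pi,
      ((√a * (r * Real.cos θ), √b * (r * Real.sin θ)) ∈ S ↔ θ ∈ T)) :
    (gaussianReal 0 a).prod (gaussianReal 0 b) S =
      volume (T ∩ Set.Ioo (-Real.pi) Real.pi) / ENNReal.ofReal (2 * Real.pi) := by
  rw [← map_sqrt_mul_gaussianReal a, ← map_sqrt_mul_gaussianReal b,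
    Measure.map_prod_map _ _ (by fun_prop) (by fun_prop), Measure.map_apply (by fun_prop) hS]
  exact gaussianReal_zero_one_prod_eq_volume_div (hS.preimage (by fun_prop)) hT hST

theorem abs_sin_sub_cos_eq_sin_abs_sub_arcsin (β : unitInterval) {r θ : ℝ} (hr : 0 ≤ r)
    (hθ : θ ∈ Set.Ioo (-Real.pi) Real.pi) :
    |√(1 - β) * (r * Real.sin θ)| - √β * (r * Real.cos θ) =
      r * Real.sin (|θ| - Real.arcsin √β) := by
  have hsin : Real.sin (Real.arcsin √β) = √β :=
    Real.sin_arcsin (by linarith [Real.sqrt_nonneg (β : ℝ)]) (Real.sqrt_le_one.2 β.2.2)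
  rw [abs_mul, abs_mul, abs_of_nonneg hr, abs_of_nonneg (Real.sqrt_nonneg _),
    Real.abs_sin_eq_sin_abs_of_abs_le_pi (abs_lt.2 hθ).le, Real.sin_sub, hsin, Real.cos_arcsin,
    Real.sq_sqrt β.2.1, Real.cos_abs]
  ring

theorem abs_sub_arcsin_sqrt_mem_Ioo (β : unitInterval) {θ : ℝ}
    (hθ : θ ∈ Set.Ioo (-Real.pi) Real.pi) :
    |θ| - Real.arcsin √β ∈ Set.Ioo (-Real.pi) Real.pi := by
  have hnonneg : 0 ≤ Real.arcsin √β := Real.arcsin_nonneg.2 (Real.sqrt_nonneg _)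
  have hle : Real.arcsin √β ≤ Real.pi / 2 := Real.arcsin_le_pi_div_two _
  constructor <;> linarith [abs_nonneg θ, abs_lt.2 hθ, Real.pi_pos]

theorem gaussianReal_prod_gaussianReal_abs_snd_le_fst (β : unitInterval) :
    (gaussianReal 0 (unitInterval.toNNReal β)).prod (gaussianReal 0 (unitInterval.toNNReal (σ β)))
        {z | |z.2| ≤ z.1} = ENNReal.ofReal (Real.arcsin √β / Real.pi) := by
  have hcone (r : ℝ) (hr : r > 0) (θ : ℝ) (hθ : θ ∈ Set.Ioo (-Real.pi) Real.pi) :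
      (√β * (r * Real.cos θ), √(1 - β) * (r * Real.sin θ)) ∈ {z : ℝ × ℝ | |z.2| ≤ z.1} ↔
        θ ∈ Set.Icc (-Real.arcsin √β) (Real.arcsin √β) := by
    have hmem := abs_sub_arcsin_sqrt_mem_Ioo β hθ
    rw [Set.mem_ofPred_eq, ← sub_nonpos, abs_sin_sub_cos_eq_sin_abs_sub_arcsin β hr.le hθ,
      Set.mem_Icc, ← abs_le, ← sub_nonpos (b := Real.arcsin √β)]
    refine ⟨fun h => not_lt.1 fun hpos => h.not_gt ?_, fun h => ?_⟩
    · exact mul_pos hr (Real.sin_pos_of_pos_of_lt_pi hpos hmem.2)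
    · exact mul_nonpos_of_nonneg_of_nonpos hr.le
        (Real.sin_nonpos_of_nonpos_of_neg_pi_le h hmem.1.le)
  have hsub : Set.Icc (-Real.arcsin √β) (Real.arcsin √β) ⊆ Set.Ioo (-Real.pi) Real.pi := by
    have hlt : Real.arcsin √β < Real.pi :=
      (Real.arcsin_le_pi_div_two _).trans_lt (half_lt_self Real.pi_pos)
    exact Set.Icc_subset_Ioo (neg_lt_neg hlt) hlt
  rw [gaussianReal_prod_gaussianReal_eq_volume_div _ _
      (isClosed_le (by fun_prop) (by fun_prop)).measurableSet measurableSet_Icc hcone,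
    Set.inter_eq_left.2 hsub, Real.volume_Icc, sub_neg_eq_add, ← two_mul,
    ← ENNReal.ofReal_div_of_pos Real.two_pi_pos, mul_div_mul_left _ _ two_ne_zero]

theorem gaussianReal_prod_gaussianReal_abs_snd_eq_fst (β : unitInterval) :
    (gaussianReal 0 (unitInterval.toNNReal β)).prod (gaussianReal 0 (unitInterval.toNNReal (σ β)))
      {z | |z.2| = z.1} = 0 := by
  have hrays (r : ℝ) (hr : r > 0) (θ : ℝ) (hθ : θ ∈ Set.Ioo (-Real.pi) Real.pi) :
      (√β * (r * Real.cos θ), √(1 - β) * (r * Real.sin θ)) ∈ {z : ℝ × ℝ | |z.2| = z.1} ↔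
        θ ∈ {θ | |θ| = Real.arcsin √β} := by
    have hmem := abs_sub_arcsin_sqrt_mem_Ioo β hθ
    rw [Set.mem_ofPred_eq, Set.mem_ofPred_eq, ← sub_eq_zero,
      abs_sin_sub_cos_eq_sin_abs_sub_arcsin β hr.le hθ, mul_eq_zero_iff_left hr.ne',
      Real.sin_eq_zero_iff_of_lt_of_lt hmem.1 hmem.2, sub_eq_zero]
  have hnull : volume {θ : ℝ | |θ| = Real.arcsin √β} = 0 := by
    refine measure_mono_null (t := {Real.arcsin √β, -Real.arcsin √β}) (fun θ hθ => ?_)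
      ((Set.toFinite _).measure_zero _)
    exact eq_or_eq_neg_of_abs_eq hθ
  rw [gaussianReal_prod_gaussianReal_eq_volume_div _ _
      (isClosed_eq (by fun_prop) (by fun_prop)).measurableSet
      (isClosed_eq (by fun_prop) (by fun_prop)).measurableSet hrays,
    measure_mono_null Set.inter_subset_left hnull, ENNReal.zero_div]

theorem charFun_map_toLp_gaussianReal_prod (a b : NNReal) (t : WithLp 2 (ℝ × ℝ)) :
    charFun (((gaussianReal 0 a).prod (gaussianReal 0 b)).map (WithLp.toLp 2)) t =
      Complex.exp (-((a * t.fst ^ 2 + b * t.snd ^ 2) / 2) : ℝ) := by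
  rw [charFun_prod, charFun_gaussianReal, charFun_gaussianReal, ← Complex.exp_add]
  congr 1
  push_cast
  simp only [WithLp.ofLp_fst, WithLp.ofLp_snd]
  ring

theorem measure_Ici_zero_of_map_neg_eq {μ : Measure ℝ} [IsProbabilityMeasure μ]
    [NullSingletonClass μ] (hneg : μ.map (-·) = μ) : μ (Set.Ici 0) = 2⁻¹ := by
  have hIio : μ (Set.Iio 0) = μ (Set.Ici 0) := by
    rw [measure_congr Iio_ae_eq_Iic]
    nth_rw 2 [← hneg]
    rw [Measure.map_apply measurable_neg measurableSet_Ici]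
    simp
  have htotal := prob_add_prob_compl (μ := μ) (measurableSet_Ici (a := (0 : ℝ)))
  rw [Set.compl_Ici, hIio, ← mul_two] at htotal
  exact ENNReal.eq_inv_of_mul_eq_one_left htotal

end GaussianPlane

theorem natCast_ncard_setOf {α R : Type*} [Fintype α] [NonAssocSemiring R] (P : α → Prop)
    [DecidablePred P] : (({a | P a} : Set α).ncard : R) = ∑ a, if P a then 1 else 0 := by
  rw [Finset.sum_boole, Set.ncard_eq_toFinset_card', Set.toFinset_ofPred]

section Colouring

variable {n : ℕ} (c c' : Fin n → Bool) (v : Fin n)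

/-- The number of vertices coloured `true` minus the number of vertices coloured `false`, so that
bisections are the colourings whose imbalance is at most `1` in absolute value. -/
noncomputable def imbalance : ℤ :=
  (({w | c w = true} : Set (Fin n)).ncard : ℤ) - (({w | c w = false} : Set (Fin n)).ncard : ℤ)

/-- The contribution of the potential arc `v → w` to the number of out-neighbours of `v` of the
other colour minus the number of those of the same colour. -/
def arcSign (w : Fin n) : ℝ :=
  if w = v then 0 else if c w = c v then -1 else 1

theorem abs_arcSign_le_one (w : Fin n) : |arcSign c v w| ≤ 1 := by
  unfold arcSign
  split_ifs <;> simp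

theorem arcSign_sq (w : Fin n) : arcSign c v w ^ 2 = 1 - if w = v then 1 else 0 := by
  unfold arcSign
  split_ifs <;> simp

theorem sum_arcSign_sq : ∑ w, arcSign c v w ^ 2 = n - 1 := by
  simp [arcSign_sq]

theorem majorityAt_iff_bernoulliSum_nonneg (A : Fin n → Fin n → Bool) :
    MajorityAt A c v ↔ 0 ≤ bernoulliSum (arcSign c v) (A v) := by
  classical
  have hsum : bernoulliSum (arcSign c v) (A v) =
      (({w | DiAdj A v w} : Set (Fin n)).ncard : ℝ) -
        2 * (({w | DiAdj A v w ∧ c w = c v} : Set (Fin n)).ncard : ℝ) := by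
    rw [natCast_ncard_setOf, natCast_ncard_setOf, Finset.mul_sum, ← Finset.sum_sub_distrib]
    refine Finset.sum_congr rfl fun w _ => ?_
    by_cases hw : w = v
    · simp [arcSign, DiAdj, hw]
    · by_cases hA : A v w = true <;> by_cases hcw : c w = c v <;>
        norm_num [arcSign, DiAdj, hw, Ne.symm hw, hA, hcw]
  rw [hsum, sub_nonneg, MajorityAt]
  exact_mod_cast Iff.rfl

theorem imbalance_eq_sum : (imbalance c : ℝ) = ∑ w, if c w then 1 else -1 := by
  rw [imbalance, Int.cast_sub, Int.cast_natCast, Int.cast_natCast, natCast_ncard_setOf,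
    natCast_ncard_setOf, ← Finset.sum_sub_distrib]
  refine Finset.sum_congr rfl fun w _ => ?_
  cases c w <;> simp

theorem sum_arcSign :
    ∑ w, arcSign c v w = (if c v then -1 else 1) * (imbalance c : ℝ) + 1 := by
  calc ∑ w, arcSign c v w
      = ∑ w, ((if c v then -1 else 1) * (if c w then 1 else -1) + if w = v then 1 else 0) := by
        refine Finset.sum_congr rfl fun w _ => ?_
        by_cases hw : w = v
        · cases hcv : c v <;> simp [arcSign, hw, hcv]
        · cases hcw : c w <;> cases hcv : c v <;> simp [arcSign, hw, hcw, hcv]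
    _ = (if c v then -1 else 1) * (imbalance c : ℝ) + 1 := by
        rw [Finset.sum_add_distrib, ← Finset.mul_sum, ← imbalance_eq_sum, Fintype.sum_ite_eq']

theorem abs_sum_arcSign_le {K : ℤ} (hc : |imbalance c| ≤ K) : |∑ w, arcSign c v w| ≤ K + 1 := by
  have hsign : |(if c v then -1 else 1) * (imbalance c : ℝ)| = |imbalance c| := by
    split_ifs <;> simp
  rw [sum_arcSign]
  refine (abs_add_le _ _).trans ?_
  rw [hsign, abs_one]
  gcongr

theorem majorityAt_compl (A : Fin n → Fin n → Bool) :
    MajorityAt A (fun w => !c w) v ↔ MajorityAt A c v := by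
  simp [MajorityAt]

theorem imbalance_compl : imbalance (fun w => !c w) = -imbalance c := by
  simp [imbalance]

theorem overlap_mem_unitInterval : overlap c c' ∈ unitInterval := by
  refine ⟨by unfold overlap; positivity, div_le_one_of_le₀ ?_ (Nat.cast_nonneg n)⟩
  exact_mod_cast (Set.ncard_le_card _).trans_eq (Nat.card_fin n)

theorem natCast_mul_overlap (hn : n ≠ 0) :
    n * overlap c c' = ∑ w, if c w = c' w then (1 : ℝ) else 0 := by
  rw [overlap, mul_div_cancel₀ _ (Nat.cast_ne_zero.2 hn), natCast_ncard_setOf]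

theorem overlap_compl (hn : n ≠ 0) : overlap c (fun w => !c' w) = 1 - overlap c c' := by
  have hsum : ∑ w, (if c w = !c' w then (1 : ℝ) else 0) =
      ∑ w, (1 - if c w = c' w then (1 : ℝ) else 0) := by
    refine Finset.sum_congr rfl fun w _ => ?_
    cases c w <;> cases c' w <;> simp
  refine mul_left_cancel₀ (Nat.cast_ne_zero.2 hn : (n : ℝ) ≠ 0) ?_
  rw [natCast_mul_overlap c _ hn, hsum, Finset.sum_sub_distrib, ← natCast_mul_overlap c c' hn]
  simp [mul_sub]

end Colouring

section HalfSumDiff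

/-- The half-sum and the half-difference of two reals. Applied to the arc signs of two colourings
which agree at `v`, it separates the vertices on which the colourings agree, which contribute to
the first coordinate only, from the others, which contribute to the second coordinate only. -/
noncomputable def halfSumDiff (x y : ℝ) : WithLp 2 (ℝ × ℝ) :=
  WithLp.toLp 2 ((x + y) / 2, (x - y) / 2)

theorem sum_halfSumDiff {ι : Type*} (s : Finset ι) (x y : ι → ℝ) :
    ∑ i ∈ s, halfSumDiff (x i) (y i) = halfSumDiff (∑ i ∈ s, x i) (∑ i ∈ s, y i) := by
  simp only [halfSumDiff, ← WithLp.toLp_sum]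
  congr 1
  ext <;> simp [Prod.fst_sum, Prod.snd_sum, ← Finset.sum_div, Finset.sum_add_distrib,
    Finset.sum_sub_distrib]

theorem bernoulliSum_halfSumDiff {ι : Type*} [Fintype ι] (x y : ι → ℝ) (A : ι → Bool) :
    bernoulliSum (fun i => halfSumDiff (x i) (y i)) A =
      halfSumDiff (bernoulliSum x A) (bernoulliSum y A) := by
  have hzero : halfSumDiff 0 0 = 0 := by simp [halfSumDiff]
  rw [bernoulliSum, bernoulliSum, bernoulliSum, ← sum_halfSumDiff]
  refine Finset.sum_congr rfl fun i _ => ?_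
  split_ifs
  exacts [rfl, hzero.symm]

theorem norm_halfSumDiff_le {x y K : ℝ} (hx : |x| ≤ K) (hy : |y| ≤ K) :
    ‖halfSumDiff x y‖ ≤ K := by
  have hK : 0 ≤ K := (abs_nonneg x).trans hx
  refine le_of_sq_le_sq ?_ hK
  rw [WithLp.prod_norm_sq_eq_of_L2]
  calc ‖(x + y) / 2‖ ^ 2 + ‖(x - y) / 2‖ ^ 2
      = (|x| ^ 2 + |y| ^ 2) / 2 := by
        simp only [Real.norm_eq_abs, sq_abs]
        ring
    _ ≤ (K ^ 2 + K ^ 2) / 2 := by gcongr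
    _ = K ^ 2 := add_self_div_two _

theorem abs_snd_halfSumDiff_le_fst_iff {x y : ℝ} :
    |(halfSumDiff x y).snd| ≤ (halfSumDiff x y).fst ↔ 0 ≤ x ∧ 0 ≤ y := by
  change |(x - y) / 2| ≤ (x + y) / 2 ↔ _
  rw [abs_le]
  constructor <;> rintro ⟨h₁, h₂⟩ <;> constructor <;> linarith

variable {n : ℕ} {c c' : Fin n → Bool} {v : Fin n}

theorem inner_halfSumDiff_arcSign_sq (hv : c v = c' v) (w : Fin n) (t : WithLp 2 (ℝ × ℝ)) :
    ⟪halfSumDiff (arcSign c v w) (arcSign c' v w), t⟫ ^ 2 =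
      (if c w = c' w then t.fst ^ 2 else t.snd ^ 2) - if w = v then t.fst ^ 2 else 0 := by
  by_cases hw : w = v
  · simp [hw, hv, halfSumDiff, arcSign]
  · cases hcw : c w <;> cases hcw' : c' w <;> cases hcv : c' v <;>
      norm_num [hw, hv, halfSumDiff, arcSign, hcw, hcw', hcv, WithLp.prod_inner_apply]

theorem sum_inner_halfSumDiff_arcSign_sq (hv : c v = c' v) (t : WithLp 2 (ℝ × ℝ)) :
    ∑ w, ⟪halfSumDiff (arcSign c v w) (arcSign c' v w), t⟫ ^ 2 =
      n * (overlap c c' * t.fst ^ 2 + (1 - overlap c c') * t.snd ^ 2) - t.fst ^ 2 := by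
  have hn : n ≠ 0 := (Nat.zero_lt_of_lt v.2).ne'
  have hite (w : Fin n) : (if c w = c' w then t.fst ^ 2 else t.snd ^ 2) =
      (if c w = c' w then 1 else 0) * (t.fst ^ 2 - t.snd ^ 2) + t.snd ^ 2 := by
    split_ifs <;> ring
  simp only [inner_halfSumDiff_arcSign_sq hv, Finset.sum_sub_distrib, Fintype.sum_ite_eq', hite,
    Finset.sum_add_distrib, ← Finset.sum_mul, ← natCast_mul_overlap c c' hn, Finset.sum_const,
    Finset.card_univ, Fintype.card_fin, nsmul_eq_mul]
  ring

end HalfSumDiff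

theorem diMeasure_row_mem {n : ℕ} (p : unitInterval) (v : Fin n) (S : Set (Fin n → Bool)) :
    diMeasure n p {A | A v ∈ S} = bernoulliPi (Fin n) p S :=
  (measurePreserving_eval (fun _ => bernoulliPi (Fin n) p) v).measure_preimage
    MeasurableSet.of_discrete.nullMeasurableSet

theorem diMeasure_majorityAt {n : ℕ} (p : unitInterval) (c : Fin n → Bool) (v : Fin n) :
    diMeasure n p {A | MajorityAt A c v} =
      bernoulliPi (Fin n) p (bernoulliSum (arcSign c v) ⁻¹' Set.Ici 0) := by
  simp only [← diMeasure_row_mem p v, majorityAt_iff_bernoulliSum_nonneg, Set.mem_preimage,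
    Set.mem_Ici]

theorem diMeasure_majorityAt_and {n : ℕ} (p : unitInterval) (c c' : Fin n → Bool) (v : Fin n) :
    diMeasure n p {A | MajorityAt A c v ∧ MajorityAt A c' v} =
      bernoulliPi (Fin n) p
        (bernoulliSum (fun w => halfSumDiff (arcSign c v w) (arcSign c' v w)) ⁻¹'
          {z | |z.snd| ≤ z.fst}) := by
  simp only [← diMeasure_row_mem p v, majorityAt_iff_bernoulliSum_nonneg, Set.mem_preimage,
    bernoulliSum_halfSumDiff, Set.mem_ofPred_eq, abs_snd_halfSumDiff_le_fst_iff]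

section Limit

variable {n : ℕ → ℕ} {p : ℕ → unitInterval} {c c' : ∀ k, Fin (n k) → Bool} {v : ∀ k, Fin (n k)}
  {K : ℤ}

theorem tendsto_inv_natCast_of_tendsto_mul
    (hp : Tendsto (fun k => n k * (p k : ℝ) * (1 - p k)) atTop atTop) :
    Tendsto (fun k => (n k : ℝ)⁻¹) atTop (𝓝 0) := by
  refine (tendsto_atTop_mono (fun k => ?_) hp).inv_tendsto_atTop
  rw [mul_assoc]
  exact mul_le_of_le_one_right (Nat.cast_nonneg _)
    (mul_le_one₀ (p k).2.2 (sub_nonneg.2 (p k).2.2) (sub_le_self _ (p k).2.1))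

theorem tendsto_diMeasure_majorityAt
    (hp : Tendsto (fun k => n k * (p k : ℝ) * (1 - p k)) atTop atTop)
    (hc : ∀ k, |imbalance (c k)| ≤ K) :
    Tendsto (fun k => diMeasure (n k) (p k) {A | MajorityAt A (c k) (v k)}) atTop (𝓝 2⁻¹) := by
  have : NullSingletonClass (gaussianReal 0 1) := nullSingletonClass_gaussianReal one_ne_zero
  have hsum (k : ℕ) : ‖∑ w, arcSign (c k) (v k) w‖ ≤ K + 1 :=
    abs_sum_arcSign_le _ _ (hc k)
  have hvar (t : ℝ) : Tendsto (fun k => (∑ w, ⟪arcSign (c k) (v k) w, t⟫ ^ 2) /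
      Fintype.card (Fin (n k))) atTop (𝓝 (t ^ 2)) := by
    have hlim := ((tendsto_inv_natCast_of_tendsto_mul hp).const_sub 1).const_mul (t ^ 2)
    rw [sub_zero, mul_one] at hlim
    refine hlim.congr fun k => ?_
    have hn : (n k : ℝ) ≠ 0 := Nat.cast_ne_zero.2 (Nat.zero_lt_of_lt (v k).2).ne'
    simp only [Real.inner_apply, mul_pow, ← Finset.sum_mul, sum_arcSign_sq, Fintype.card_fin]
    field_simp
  have hcharFun (t : ℝ) :
      charFun ((gaussianReal 0 1).map id) t = Complex.exp (-(t ^ 2 / 2) : ℝ) := by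
    rw [Measure.map_id, charFun_gaussianReal]
    simp
  have hlim := tendsto_bernoulliPi_bernoulliSum_mem_cone (ι := fun k => Fin (n k)) (S := Set.Ici 0)
    (by simpa using hp) (fun k w => abs_arcSign_le_one (c k) (v k) w) hsum hvar aemeasurable_id
    hcharFun measurableSet_Ici (fun a ha x => by simp [ha]) (by simp)
  rw [Set.preimage_id, measure_Ici_zero_of_map_neg_eq (by simp [gaussianReal_map_neg])] at hlim
  simpa only [diMeasure_majorityAt] using hlim

theorem tendsto_diMeasure_majorityAt_and {β : unitInterval}
    (hp : Tendsto (fun k => n k * (p k : ℝ) * (1 - p k)) atTop atTop)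
    (hc : ∀ k, |imbalance (c k)| ≤ K) (hc' : ∀ k, |imbalance (c' k)| ≤ K)
    (hv : ∀ k, c k (v k) = c' k (v k))
    (hβ : Tendsto (fun k => overlap (c k) (c' k)) atTop (𝓝 β)) :
    Tendsto (fun k => diMeasure (n k) (p k) {A | MajorityAt A (c k) (v k) ∧
      MajorityAt A (c' k) (v k)}) atTop (𝓝 (ENNReal.ofReal (Real.arcsin √β / Real.pi))) := by
  have hsum (k : ℕ) : ‖∑ w, halfSumDiff (arcSign (c k) (v k) w) (arcSign (c' k) (v k) w)‖ ≤
      K + 1 := by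
    rw [sum_halfSumDiff]
    exact norm_halfSumDiff_le (abs_sum_arcSign_le _ _ (hc k)) (abs_sum_arcSign_le _ _ (hc' k))
  have hvar (t : WithLp 2 (ℝ × ℝ)) : Tendsto (fun k =>
      (∑ w, ⟪halfSumDiff (arcSign (c k) (v k) w) (arcSign (c' k) (v k) w), t⟫ ^ 2) /
        Fintype.card (Fin (n k))) atTop (𝓝 (β * t.fst ^ 2 + (1 - β) * t.snd ^ 2)) := by
    have hlim := ((hβ.mul_const (t.fst ^ 2)).add ((hβ.const_sub 1).mul_const (t.snd ^ 2))).sub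
      ((tendsto_inv_natCast_of_tendsto_mul hp).const_mul (t.fst ^ 2))
    rw [mul_zero, sub_zero] at hlim
    refine hlim.congr fun k => ?_
    have hn : (n k : ℝ) ≠ 0 := Nat.cast_ne_zero.2 (Nat.zero_lt_of_lt (v k).2).ne'
    rw [sum_inner_halfSumDiff_arcSign_sq (hv k), Fintype.card_fin]
    field_simp
  have hlim := tendsto_bernoulliPi_bernoulliSum_mem_cone (ι := fun k => Fin (n k))
    (S := {z : WithLp 2 (ℝ × ℝ) | |z.snd| ≤ z.fst}) (by simpa using hp)
    (fun k w => norm_halfSumDiff_le (abs_arcSign_le_one (c k) (v k) w)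
      (abs_arcSign_le_one (c' k) (v k) w)) hsum hvar (by fun_prop)
    (charFun_map_toLp_gaussianReal_prod (unitInterval.toNNReal β) (unitInterval.toNNReal (σ β)))
    (isClosed_le (by fun_prop) (by fun_prop)).measurableSet
    (fun a ha z => by simp [abs_mul, abs_of_pos ha, ha])
    (measure_mono_null (Set.preimage_mono (frontier_le_subset_eq (by fun_prop) (by fun_prop)))
      (gaussianReal_prod_gaussianReal_abs_snd_eq_fst β))
  simp only [diMeasure_majorityAt_and, ← gaussianReal_prod_gaussianReal_abs_snd_le_fst]
  exact hlim

end Limit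

theorem arcsin_sqrt_eq_arctan_sqrt_div {x : ℝ} (hx : 0 ≤ x) (hx' : x < 1) :
    Real.arcsin √x = Real.arctan √(x / (1 - x)) := by
  have hmem : √x ∈ Set.Ioo (-1) 1 :=
    ⟨by linarith [Real.sqrt_nonneg x], (Real.sqrt_lt' one_pos).2 (by rwa [one_pow])⟩
  rw [Real.arcsin_eq_arctan hmem, Real.sq_sqrt hx, Real.sqrt_div hx]

theorem exists_forall_abs_diMeasure_majorityAt_sub_le (K : ℤ) {δ : ℝ} (hδ : 0 < δ) :
    ∃ M : ℝ, ∀ (n : ℕ) (p : unitInterval), M ≤ n * (p : ℝ) * (1 - p) →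
      ∀ c : Fin n → Bool, |imbalance c| ≤ K → ∀ v : Fin n,
        |(diMeasure n p {A | MajorityAt A c v}).toReal - 1 / 2| ≤ δ := by
  by_contra! h
  choose n p hp c hc v hlt using fun k : ℕ => h k
  have hlim := (ENNReal.tendsto_toReal (by simp)).comp (tendsto_diMeasure_majorityAt (v := v)
    (tendsto_atTop_mono hp tendsto_natCast_atTop_atTop) hc)
  have hdist := (hlim.sub_const (1 / 2)).abs
  rw [ENNReal.toReal_inv, ENNReal.toReal_ofNat, ← one_div, sub_self, abs_zero] at hdist
  obtain ⟨k, hk⟩ := (hdist.eventually_lt_const hδ).exists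
  exact (hlt k).not_gt hk

theorem exists_forall_abs_diMeasure_majorityAt_and_sub_le (K : ℤ) {δ : ℝ} (hδ : 0 < δ) :
    ∃ M : ℝ, ∀ (n : ℕ) (p : unitInterval), M ≤ n * (p : ℝ) * (1 - p) →
      ∀ c c' : Fin n → Bool, |imbalance c| ≤ K → |imbalance c'| ≤ K → ∀ v : Fin n, c v = c' v →
        |(diMeasure n p {A | MajorityAt A c v ∧ MajorityAt A c' v}).toReal -
          Real.arcsin √(overlap c c') / Real.pi| ≤ δ := by
  by_contra! h
  choose n p hp c c' hc hc' v hv hlt using fun k : ℕ => h k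
  obtain ⟨β, hβ, φ, hφ, hlim⟩ := isCompact_Icc.tendsto_subseq
    fun k => overlap_mem_unitInterval (c k) (c' k)
  have hpφ := (tendsto_atTop_mono hp tendsto_natCast_atTop_atTop).comp hφ.tendsto_atTop
  have hprob := (ENNReal.tendsto_toReal ENNReal.ofReal_ne_top).comp
    (tendsto_diMeasure_majorityAt_and (β := ⟨β, hβ⟩) (v := fun k => v (φ k)) hpφ
      (fun k => hc (φ k)) (fun k => hc' (φ k)) (fun k => hv (φ k)) hlim)
  have harcsin : Continuous fun x => Real.arcsin √x / Real.pi := by fun_prop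
  have hnonneg : 0 ≤ Real.arcsin √β / Real.pi :=
    div_nonneg (Real.arcsin_nonneg.2 (Real.sqrt_nonneg _)) Real.pi_nonneg
  have hdist := (hprob.sub ((harcsin.tendsto β).comp hlim)).abs
  rw [ENNReal.toReal_ofReal hnonneg, sub_self, abs_zero] at hdist
  obtain ⟨k, hk⟩ := (hdist.eventually_lt_const hδ).exists
  exact (hlt (φ k)).not_gt hk

theorem majority_event_probabilities_general (K : ℤ) {δ : ℝ} (hδ : 0 < δ) :
    ∃ M : ℝ, ∀ (n : ℕ) (p : unitInterval), M ≤ n * (p : ℝ) * (1 - p) →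
      ∀ c c' : Fin n → Bool, |imbalance c| ≤ K → |imbalance c'| ≤ K → ∀ v : Fin n,
        |(diMeasure n p {A | MajorityAt A c v}).toReal - 1 / 2| ≤ δ ∧
        (c v = c' v →
          |(diMeasure n p {A | MajorityAt A c v ∧ MajorityAt A c' v}).toReal -
            Real.arcsin √(overlap c c') / Real.pi| ≤ δ) ∧
        (c v ≠ c' v →
          |(diMeasure n p {A | MajorityAt A c v ∧ MajorityAt A c' v}).toReal -
            Real.arcsin √(1 - overlap c c') / Real.pi| ≤ δ) := by
  obtain ⟨M₁, hM₁⟩ := exists_forall_abs_diMeasure_majorityAt_sub_le K hδ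
  obtain ⟨M₂, hM₂⟩ := exists_forall_abs_diMeasure_majorityAt_and_sub_le K hδ
  refine ⟨max M₁ M₂, fun n p hp c c' hc hc' v => ?_⟩
  have hp₂ := (le_max_right M₁ M₂).trans hp
  refine ⟨hM₁ n p ((le_max_left M₁ M₂).trans hp) c hc v, hM₂ n p hp₂ c c' hc hc' v, fun hv => ?_⟩
  have hflip := hM₂ n p hp₂ c (fun w => !c' w) hc (by rwa [imbalance_compl, abs_neg]) v
    (Bool.eq_not_of_ne hv)
  simpa only [majorityAt_compl, overlap_compl c c' (Nat.zero_lt_of_lt v.2).ne'] using hflip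

/-- Gaussian approximation for majority events: fix `ε > 0`. For every `δ > 0` there is
`M` such that whenever `n·p·(1−p) ≥ M`, for any pair of bisections `c, c'` with overlap
`α ∈ [ε, 1−ε]` and any vertex `v`, the probabilities of the events that `v` is
majority-coloured w.r.t. `c` (and w.r.t. both `c` and `c'`) are within `δ` of `1/2`
(resp. the stated arctan expressions). -/
theorem majority_event_probabilities (ε : ℝ) (hε : 0 < ε) (δ : ℝ) (hδ : 0 < δ) :
    ∃ M : ℝ, ∀ (n : ℕ) (p : ℝ), 0 < p → p < 1 → M ≤ (n : ℝ) * p * (1 - p) →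
      ∀ c c' : Fin n → Bool, IsBisection c → IsBisection c' →
        ε ≤ overlap c c' → overlap c c' ≤ 1 - ε →
        ∀ v : Fin n,
          |(diMeasure n p {A | MajorityAt A c v}).toReal - 1 / 2| ≤ δ ∧
          (c v = c' v →
            |(diMeasure n p {A | MajorityAt A c v ∧ MajorityAt A c' v}).toReal -
              (1 / Real.pi) *
                Real.arctan (Real.sqrt (overlap c c' / (1 - overlap c c')))| ≤ δ) ∧
          (c v ≠ c' v →
            |(diMeasure n p {A | MajorityAt A c v ∧ MajorityAt A c' v}).toReal -
              (1 / Real.pi) *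
                Real.arctan (Real.sqrt ((1 - overlap c c') / overlap c c'))| ≤ δ) := by
  obtain ⟨M, hM⟩ := majority_event_probabilities_general 1 hδ
  refine ⟨M, fun n p hp hp' hnp c c' hc hc' hle hle' v => ?_⟩
  have hα : 0 < overlap c c' := hε.trans_le hle
  have hα' : overlap c c' < 1 := by linarith
  simpa only [arcsin_sqrt_eq_arctan_sqrt_div hα.le hα',
    arcsin_sqrt_eq_arctan_sqrt_div (sub_nonneg.2 hα'.le) (sub_lt_self 1 hα), sub_sub_cancel,
    one_div_mul_eq_div] using hM n ⟨p, hp.le, hp'.le⟩ hnp c c' hc hc' v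
end

section
/- Let (p_n) be a sequence in [0,1] with n·p_n·(1−p_n) → ∞, let D ~ 𝔻(n, p_n), and let X_n be the number of majority bisections of D (i.e. bisections c : V(D) → {1,2} in which every vertex is majority-coloured). Then: (1) E[X_n] ≥ e^{−o(n)}, i.e. liminf_{n→∞} (1/n)·log E[X_n] ≥ 0; and (2) E[X_n²] ≤ e^{o(n)}, i.e. limsup_{n→∞} (1/n)·log E[X_n²] ≤ 0. -/
open MeasureTheory Filter

/-- The number of majority bisections of the digraph encoded by `A`. -/
noncomputable def numMajBisections (n : ℕ) (A : Fin n → Fin n → Bool) : ℕ :=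
  ({c : Fin n → Bool | IsBisection c ∧ ∀ v, MajorityAt A c v}).ncard

/-!
First moment. In a bisection every vertex `v` has at least as many vertices of the opposite colour
as *other* vertices of its own colour. Exchanging the latter set of coordinates of the row of `v`
with an equally large part of the former preserves its distribution, so `v` is majority-coloured
with probability at least `1/2`. Rows are independent and there are at least `2 ^ n / (n + 1)`
bisections, so the expected number of majority bisections is at least `1 / (n + 1)`.

Second moment. Here all pairs of 2-colourings are counted. Allowing an excess of one makes the event
that a vertex is majority-coloured for both colourings depend on the vertex only through its pair of
colours `a`; let `q a` be its probability. A pair of colourings `g` then contributes at most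
`∏ v, q (g v)`, and `q` depends on `g` only through the sizes of the four colour classes. Summing
the product over *all* `g : Fin n → ℤˣ × ℤˣ` instead of those with prescribed class sizes only
increases it, to `(∑ a, q a) ^ n`, and there are at most `(n + 1) ^ 4` choices of class sizes.
For each of the two colourings the events belonging to the two possible colours cover everything
and overlap only when the colour imbalance of the row is at most one in absolute value. By Fourier
inversion this has probability `O((n p (1 - p)) ^ (-1/2))`, so `∑ a, q a = 1 + o(1)`.
-/

open Finset
open Complex (I)
open scoped Real

section Permutations

variable {ι α : Type*}

lemma exists_perm_comp_eq_of_card_fiber_eq [Fintype ι] [DecidableEq α] {f g : ι → α}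
    (h : ∀ a, #{i | f i = a} = #{i | g i = a}) : ∃ σ : Equiv.Perm ι, g ∘ σ = f := by
  have hfiber : ∀ a, Fintype.card {i // f i = a} = Fintype.card {i // g i = a} := fun a ↦ by
    simpa only [Fintype.card_subtype] using h a
  exact ⟨Equiv.ofFiberEquiv fun a ↦ Fintype.equivOfCardEq (hfiber a),
    funext (Equiv.ofFiberEquiv_map _)⟩

lemma exists_perm_map_eq_and_map_eq {s t : Finset α} (hst : Disjoint s t) (hcard : #s = #t) :
    ∃ σ : Equiv.Perm α, s.map σ.toEmbedding = t ∧ t.map σ.toEmbedding = s := by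
  let φ := s.equivOfCardEq hcard
  obtain ⟨σ, hσ⟩ := Equiv.Perm.exists_extending_pair
    (Sum.elim (fun x : s ↦ (x : α)) fun y : t ↦ (y : α))
    (Sum.elim (fun x : s ↦ (φ x : α)) fun y : t ↦ (φ.symm y : α))
    (Subtype.val_injective.sumElim Subtype.val_injective
      fun x y ↦ Finset.disjoint_iff_ne.1 hst _ x.2 _ y.2)
    ((Subtype.val_injective.comp φ.injective).sumElim
      (Subtype.val_injective.comp φ.symm.injective)
      fun x y ↦ (Finset.disjoint_iff_ne.1 hst _ (φ.symm y).2 _ (φ x).2).symm)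
  refine ⟨σ, ?_, ?_⟩
  · refine eq_of_subset_of_card_le (fun a ha ↦ ?_) (by simp [hcard])
    obtain ⟨x, hx, rfl⟩ := Finset.mem_map.1 ha
    exact hσ (.inl ⟨x, hx⟩) ▸ (φ ⟨x, hx⟩).2
  · refine eq_of_subset_of_card_le (fun a ha ↦ ?_) (by simp [hcard])
    obtain ⟨y, hy, rfl⟩ := Finset.mem_map.1 ha
    exact hσ (.inr ⟨y, hy⟩) ▸ (φ.symm ⟨y, hy⟩).2

-- Assignments with equal fibre sizes form one orbit, on which `q` is constant. Enlarging the sum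
-- over an orbit to all assignments turns it into a power of `∑ a, q g a`.
lemma sum_prod_apply_le_of_comp_perm [Fintype ι] [DecidableEq ι] [Fintype α]
    {q : (ι → α) → α → ℝ} {B : ℝ}
    (hq : ∀ g a, 0 ≤ q g a) (hperm : ∀ g (σ : Equiv.Perm ι), q (g ∘ σ) = q g)
    (hsum : ∀ g, ∑ a, q g a ≤ B) (hB : 0 ≤ B) :
    ∑ g : ι → α, ∏ i, q g (g i) ≤
      (Fintype.card ι + 1) ^ Fintype.card α * B ^ Fintype.card ι := by
  classical
  let type (g : ι → α) (a : α) : ℕ := #{i | g i = a}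
  let types := Fintype.piFinset fun _ : α ↦ Finset.range (Fintype.card ι + 1)
  have htype : ∀ g ∈ (Finset.univ : Finset (ι → α)), type g ∈ types := fun g _ ↦
    Fintype.mem_piFinset.2 fun a ↦ by
      simpa [Nat.lt_succ_iff] using Finset.card_le_univ ({i | g i = a} : Finset ι)
  have hclass : ∀ τ ∈ types, ∑ g with type g = τ, ∏ i, q g (g i) ≤ B ^ Fintype.card ι := by
    intro τ _
    obtain hempty | ⟨g₀, hg₀⟩ := ({g | type g = τ} : Finset (ι → α)).eq_empty_or_nonempty
    · rw [hempty, sum_empty]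
      positivity
    have hq₀ : ∀ g ∈ ({g | type g = τ} : Finset (ι → α)), q g = q g₀ := by
      intro g hg
      obtain ⟨σ, rfl⟩ := exists_perm_comp_eq_of_card_fiber_eq (f := g) (g := g₀) fun a ↦
        congrFun ((mem_filter.1 hg).2.trans (mem_filter.1 hg₀).2.symm) a
      exact hperm g₀ σ
    calc ∑ g with type g = τ, ∏ i, q g (g i)
        = ∑ g with type g = τ, ∏ i, q g₀ (g i) := sum_congr rfl fun g hg ↦ by rw [hq₀ g hg]
      _ ≤ ∑ g : ι → α, ∏ i, q g₀ (g i) :=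
          sum_le_univ_sum_of_nonneg fun g ↦ prod_nonneg fun i _ ↦ hq _ _
      _ = (∑ a, q g₀ a) ^ Fintype.card ι := by
          rw [← Finset.card_univ, ← prod_const, Fintype.prod_sum]
      _ ≤ B ^ Fintype.card ι := pow_le_pow_left₀ (sum_nonneg fun a _ ↦ hq _ _) (hsum g₀) _
  rw [← sum_fiberwise_of_maps_to htype]
  refine (sum_le_card_nsmul types _ _ hclass).trans_eq ?_
  simp [types]

end Permutations

section Measure

variable {ι Ω : Type*} [Fintype ι]

lemma measureReal_pi_setOf_forall_mem {X : ι → Type*} [∀ i, MeasurableSpace (X i)]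
    (μ : ∀ i, Measure (X i)) [∀ i, SigmaFinite (μ i)] (s : ∀ i, Set (X i)) :
    (Measure.pi μ).real {x | ∀ i, x i ∈ s i} = ∏ i, (μ i).real (s i) := by
  have hpi : {x : ∀ i, X i | ∀ i, x i ∈ s i} = Set.univ.pi s := by ext; simp
  simp only [hpi, measureReal_def, Measure.pi_pi, ENNReal.toReal_prod]

lemma measurePreserving_comp_perm {X : Type*} [MeasurableSpace X] (ν : Measure X) [SigmaFinite ν]
    (σ : Equiv.Perm ι) :
    MeasurePreserving (fun x : ι → X ↦ x ∘ σ) (Measure.pi fun _ ↦ ν) (Measure.pi fun _ ↦ ν) := by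
  convert measurePreserving_piCongrLeft (fun _ : ι ↦ ν) σ.symm using 1
  ext x i
  obtain ⟨j, rfl⟩ := σ.symm.surjective i
  simp [MeasurableEquiv.coe_piCongrLeft, Equiv.piCongrLeft_apply_apply]

lemma integral_ncard_setOf [MeasurableSpace Ω] (μ : Measure Ω) [IsFiniteMeasure μ]
    {Q : ι → Ω → Prop} (hQ : ∀ i, MeasurableSet {ω | Q i ω}) :
    ∫ ω, ({i | Q i ω}.ncard : ℝ) ∂μ = ∑ i, μ.real {ω | Q i ω} := by
  classical
  have hncard : ∀ ω, ({i | Q i ω}.ncard : ℝ) =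
      ∑ i, {ω | Q i ω}.indicator (1 : Ω → ℝ) ω := fun ω ↦ by
    rw [Set.ncard_eq_toFinset_card', Set.toFinset_ofPred, Finset.card_filter, Nat.cast_sum]
    simp [Set.indicator_apply]
  simp_rw [hncard]
  rw [integral_finsetSum _ fun i _ ↦ (integrable_const 1).indicator (hQ i)]
  exact sum_congr rfl fun i _ ↦ integral_indicator_one (hQ i)

end Measure

section PointProbability

variable {Ω : Type*} [MeasurableSpace Ω] {μ : Measure Ω} [IsFiniteMeasure μ] {X : Ω → ℤ}

lemma integral_exp_mul_int_mul_I (k : ℤ) :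
    ∫ t in -π..π, Complex.exp (t * k * I) = if k = 0 then (2 * π : ℂ) else 0 := by
  split_ifs with hk
  · simp [hk, two_mul]
  · have hc : k * I ≠ 0 := by simp [hk]
    simp_rw [mul_assoc, mul_comm (Complex.ofReal _)]
    rw [integral_exp_mul_complex hc, div_eq_zero_iff, sub_eq_zero,
      Complex.exp_eq_exp_iff_exists_int]
    exact .inl ⟨k, by push_cast; ring⟩

lemma two_pi_mul_measureReal_preimage_singleton (hX : Measurable X) (k : ℤ) :
    ((2 * π * μ.real (X ⁻¹' {k}) : ℝ) : ℂ) =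
      ∫ t in -π..π, ∫ ω, Complex.exp (t * (X ω - k : ℤ) * I) ∂μ := by
  have hint : Integrable (Function.uncurry fun (t : ℝ) ω ↦ Complex.exp (t * (X ω - k : ℤ) * I))
      ((volume.restrict (Set.uIoc (-π) π)).prod μ) := by
    have : IsFiniteMeasure (volume.restrict (Set.uIoc (-π) π)) := ⟨by simp [Set.uIoc]⟩
    refine .of_bound (Measurable.aestronglyMeasurable ?_) 1 (.of_forall fun x ↦ ?_)
    · unfold Function.uncurry
      fun_prop
    · simpa [Function.uncurry] using (Complex.norm_exp_ofReal_mul_I (x.1 * (X x.2 - k : ℤ))).le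
  have hind : ∀ ω, (if X ω - k = 0 then (2 * π : ℂ) else 0) =
      (X ⁻¹' {k}).indicator (fun _ ↦ (2 * π : ℂ)) ω := fun ω ↦ by
    classical simp [Set.indicator_apply, sub_eq_zero]
  rw [intervalIntegral_integral_swap hint]
  simp_rw [integral_exp_mul_int_mul_I, hind]
  rw [integral_indicator_const _ (hX (measurableSet_singleton k)), Complex.real_smul]
  push_cast
  ring

lemma measureReal_preimage_singleton_le_of_norm_integral_exp_le (hX : Measurable X) {b : ℝ}
    (hb : 0 < b) (hchar : ∀ t : ℝ, |t| ≤ π →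
      ‖∫ ω, Complex.exp (t * X ω * I) ∂μ‖ ≤ Real.exp (-b * t ^ 2)) (k : ℤ) :
    μ.real (X ⁻¹' {k}) ≤ √(π / b) / (2 * π) := by
  have hshift : ∀ t : ℝ, ‖∫ ω, Complex.exp (t * (X ω - k : ℤ) * I) ∂μ‖ =
      ‖∫ ω, Complex.exp (t * X ω * I) ∂μ‖ := fun t ↦ by
    have hexp : ∀ ω, Complex.exp (t * (X ω - k : ℤ) * I) =
        Complex.exp ((-(t * k) : ℝ) * I) * Complex.exp (t * X ω * I) := fun ω ↦ by
      rw [← Complex.exp_add]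
      push_cast
      ring_nf
    simp_rw [hexp]
    rw [integral_const_mul, norm_mul, Complex.norm_exp_ofReal_mul_I, one_mul]
  rw [le_div_iff₀' Real.two_pi_pos]
  calc 2 * π * μ.real (X ⁻¹' {k})
      = ‖∫ t in -π..π, ∫ ω, Complex.exp (t * (X ω - k : ℤ) * I) ∂μ‖ := by
        rw [← two_pi_mul_measureReal_preimage_singleton hX, Complex.norm_real,
          Real.norm_of_nonneg (by positivity)]
    _ ≤ ∫ t in -π..π, Real.exp (-b * t ^ 2) :=
        intervalIntegral.norm_integral_le_of_norm_le (by linarith [Real.pi_pos])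
          (.of_forall fun t ht ↦ (hshift t).trans_le (hchar t (abs_le.2 ⟨ht.1.le, ht.2⟩)))
          (Continuous.intervalIntegrable (by fun_prop) _ _)
    _ ≤ ∫ t, Real.exp (-b * t ^ 2) := by
        rw [intervalIntegral.integral_of_le (by linarith [Real.pi_pos])]
        exact setIntegral_le_integral (integrable_exp_neg_mul_sq hb)
          (.of_forall fun t ↦ Real.exp_nonneg _)
    _ = √(π / b) := integral_gaussian b

end PointProbability

section Bernoulli

variable {p : ℝ}

lemma isProbabilityMeasure_bernoulliM_s12 (hp : p ∈ Set.Icc (0 : ℝ) 1) :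
    IsProbabilityMeasure (bernoulliM p) where
  measure_univ := by
    simp only [bernoulliM, Measure.add_apply, Measure.smul_apply, measure_univ, ENNReal.smul_def,
      smul_eq_mul, mul_one]
    rw [← ENNReal.coe_add, ← Real.toNNReal_add hp.1 (sub_nonneg.2 hp.2)]
    simp

lemma integral_bernoulliM_s12 {E : Type*} [NormedAddCommGroup E] [NormedSpace ℝ E] [CompleteSpace E]
    (hp : p ∈ Set.Icc (0 : ℝ) 1) (f : Bool → E) :
    ∫ b, f b ∂bernoulliM p = p • f true + (1 - p) • f false := by
  unfold bernoulliM
  rw [integral_add_measure .of_finite .of_finite, integral_smul_nnreal_measure,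
    integral_smul_nnreal_measure, integral_dirac, integral_dirac, NNReal.smul_def, NNReal.smul_def,
    Real.coe_toNNReal _ hp.1, Real.coe_toNNReal _ (sub_nonneg.2 hp.2)]

lemma norm_mul_exp_add_one_sub_le (hp : p ∈ Set.Icc (0 : ℝ) 1) {t : ℝ} (ht : |t| ≤ π) :
    ‖p * Complex.exp (t * I) + (1 - p)‖ ≤ Real.exp (-(2 / π ^ 2 * (p * (1 - p))) * t ^ 2) := by
  have hpq : 0 ≤ p * (1 - p) := mul_nonneg hp.1 (sub_nonneg.2 hp.2)
  have hsq : ‖p * Complex.exp (t * I) + (1 - p)‖ ^ 2 =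
      1 - 2 * (p * (1 - p)) * (1 - Real.cos t) := by
    rw [Complex.sq_norm, Complex.normSq_apply]
    simp only [Complex.add_re, Complex.mul_re, Complex.exp_ofReal_mul_I_re,
      Complex.exp_ofReal_mul_I_im, Complex.ofReal_re, Complex.ofReal_im, Complex.add_im,
      Complex.mul_im, Complex.sub_re, Complex.sub_im, Complex.one_re, Complex.one_im]
    linear_combination p ^ 2 * Real.sin_sq_add_cos_sq t
  refine le_of_sq_le_sq ?_ (Real.exp_nonneg _)
  calc ‖p * Complex.exp (t * I) + (1 - p)‖ ^ 2
      = 1 - 2 * (p * (1 - p)) * (1 - Real.cos t) := hsq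
    _ ≤ 1 - 2 * (p * (1 - p)) * (2 / π ^ 2 * t ^ 2) := by
        gcongr
        linarith [Real.cos_le_one_sub_mul_cos_sq ht]
    _ = (2 : ℕ) * (-(2 / π ^ 2 * (p * (1 - p))) * t ^ 2) + 1 := by push_cast; ring
    _ ≤ Real.exp ((2 : ℕ) * (-(2 / π ^ 2 * (p * (1 - p))) * t ^ 2)) := Real.add_one_le_exp _
    _ = Real.exp (-(2 / π ^ 2 * (p * (1 - p))) * t ^ 2) ^ 2 := Real.exp_nat_mul _ 2

end Bernoulli

section SignedCount

variable {ι : Type*} [Fintype ι] {p : ℝ}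

/-- The sum of the signs `s j` over the coordinates `j` present in `r`. When `r` is the row of a
vertex `v` and `s` encodes a 2-colouring, it is the imbalance between the two colours among the
out-neighbours of `v`, except that the diagonal entry of the row is counted as well. -/
def signedCount (s : ι → ℤˣ) (r : ι → Bool) : ℤ := ∑ j with r j, (s j : ℤ)

lemma signedCount_comp_perm (s : ι → ℤˣ) (r : ι → Bool) (σ : Equiv.Perm ι) :
    signedCount (s ∘ σ) (r ∘ σ) = signedCount s r := by
  simp only [signedCount, sum_filter]
  exact Equiv.sum_comp σ fun j ↦ if r j then (s j : ℤ) else 0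

lemma integral_exp_signedCount (hp : p ∈ Set.Icc (0 : ℝ) 1) (s : ι → ℤˣ) (t : ℝ) :
    ∫ r, Complex.exp (t * signedCount s r * I) ∂Measure.pi (fun _ ↦ bernoulliM p) =
      ∏ j, (p * Complex.exp ((((s j : ℤ) : ℝ) * t : ℝ) * I) + (1 - p)) := by
  have hexp : ∀ r : ι → Bool, Complex.exp (t * signedCount s r * I) =
      ∏ j, if r j then Complex.exp ((((s j : ℤ) : ℝ) * t : ℝ) * I) else 1 := fun r ↦ by
    rw [← prod_filter, ← Complex.exp_sum, signedCount, ← sum_mul]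
    push_cast
    rw [← sum_mul, mul_comm (t : ℂ)]
  simp_rw [hexp]
  rw [integral_fintype_prod_eq_prod fun j (b : Bool) ↦
    if b then Complex.exp ((((s j : ℤ) : ℝ) * t : ℝ) * I) else 1]
  simp [integral_bernoulliM_s12 hp]

lemma measureReal_signedCount_eq_le (hp : p ∈ Set.Icc (0 : ℝ) 1)
    (hpos : 0 < Fintype.card ι * p * (1 - p)) (s : ι → ℤˣ) (k : ℤ) :
    (Measure.pi fun _ : ι ↦ bernoulliM p).real {r | signedCount s r = k} ≤
      √(π / (8 * (Fintype.card ι * p * (1 - p)))) := by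
  set b := 2 / π ^ 2 * (Fintype.card ι * p * (1 - p)) with hb
  have hb_pos : 0 < b := by positivity
  have hchar : ∀ t : ℝ, |t| ≤ π →
      ‖∫ r, Complex.exp (t * signedCount s r * I) ∂Measure.pi (fun _ ↦ bernoulliM p)‖ ≤
        Real.exp (-b * t ^ 2) := by
    intro t ht
    have hfactor : ∀ j ∈ univ, ‖p * Complex.exp ((((s j : ℤ) : ℝ) * t : ℝ) * I) + (1 - p)‖ ≤
        Real.exp (-(2 / π ^ 2 * (p * (1 - p))) * t ^ 2) := fun j _ ↦ by
      obtain hs | hs := Int.units_eq_one_or (s j)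
      · simpa [hs] using norm_mul_exp_add_one_sub_le hp ht
      · simpa [hs] using norm_mul_exp_add_one_sub_le hp ((abs_neg t).trans_le ht)
    rw [integral_exp_signedCount hp, norm_prod]
    refine (prod_le_prod (fun _ _ ↦ norm_nonneg _) hfactor).trans_eq ?_
    rw [prod_const, Finset.card_univ, ← Real.exp_nat_mul]
    congr 1
    ring
  refine (measureReal_preimage_singleton_le_of_norm_integral_exp_le .of_discrete hb_pos hchar
    k).trans_eq ?_
  have hsqrt : √((2 * π) ^ 2) = 2 * π := Real.sqrt_sq Real.two_pi_pos.le
  rw [← hsqrt, ← Real.sqrt_div' _ (by positivity)]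
  congr 1
  rw [hb]
  field_simp
  norm_num

lemma measureReal_abs_signedCount_le_one_le (hp : p ∈ Set.Icc (0 : ℝ) 1)
    (hpos : 0 < Fintype.card ι * p * (1 - p)) (s : ι → ℤˣ) :
    (Measure.pi fun _ : ι ↦ bernoulliM p).real {r | |signedCount s r| ≤ 1} ≤
      3 * √(π / (8 * (Fintype.card ι * p * (1 - p)))) := by
  have hunion : {r : ι → Bool | |signedCount s r| ≤ 1} =
      ⋃ k ∈ Icc (-1 : ℤ) 1, {r | signedCount s r = k} := by
    ext r
    simp [abs_le]
  rw [hunion]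
  refine (measureReal_biUnion_finset_le _ _).trans ?_
  refine (sum_le_card_nsmul _ _ _ fun k _ ↦ measureReal_signedCount_eq_le hp hpos s k).trans_eq ?_
  simp

end SignedCount

section Rows

variable {ι : Type*} [Fintype ι] (ν : Measure Bool) [IsProbabilityMeasure ν]

lemma half_le_measureReal_card_filter_le {s t : Finset ι} (hst : Disjoint s t) (hcard : #s ≤ #t) :
    1 / 2 ≤ (Measure.pi fun _ : ι ↦ ν).real {r | #{j ∈ s | r j} ≤ #{j ∈ t | r j}} := by
  classical
  let μ := Measure.pi fun _ : ι ↦ ν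
  obtain ⟨t', ht', hcard'⟩ := exists_subset_card_eq hcard
  obtain ⟨σ, hσs, hσt⟩ := exists_perm_map_eq_and_map_eq (hst.mono_right ht') hcard'.symm
  have hcomp : ∀ (u : Finset ι) (r : ι → Bool),
      #{j ∈ u | (r ∘ σ) j} = #{j ∈ u.map σ.toEmbedding | r j} := fun u r ↦ by
    rw [filter_map, card_map]
    rfl
  have hsymm : μ.real {r | #{j ∈ t' | r j} ≤ #{j ∈ s | r j}} =
      μ.real {r | #{j ∈ s | r j} ≤ #{j ∈ t' | r j}} := by
    rw [← (measurePreserving_comp_perm ν σ).measureReal_preimage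
      MeasurableSet.of_discrete.nullMeasurableSet]
    simp only [Set.preimage_ofPred_eq, hcomp, hσs, hσt, μ]
  have hcover : {r : ι → Bool | #{j ∈ s | r j} ≤ #{j ∈ t' | r j}} ∪
      {r | #{j ∈ t' | r j} ≤ #{j ∈ s | r j}} = Set.univ :=
    Set.eq_univ_of_forall fun r ↦ le_total #{j ∈ s | r j} #{j ∈ t' | r j}
  have htotal : 1 ≤ μ.real {r | #{j ∈ s | r j} ≤ #{j ∈ t' | r j}} +
      μ.real {r | #{j ∈ t' | r j} ≤ #{j ∈ s | r j}} := by
    rw [← probReal_univ (μ := μ), ← hcover]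
    exact measureReal_union_le _ _
  calc 1 / 2 ≤ μ.real {r | #{j ∈ s | r j} ≤ #{j ∈ t' | r j}} := by linarith
    _ ≤ μ.real {r | #{j ∈ s | r j} ≤ #{j ∈ t | r j}} :=
      measureReal_mono fun r hr ↦ hr.trans (card_le_card (filter_subset_filter _ ht'))

/-- The rows that leave a vertex of sign `ε` majority-coloured up to an excess of one, when the
vertices are coloured by the signs `s`. The slack absorbs the diagonal entry of the row, and makes
the event depend on the vertex through its sign only. -/
def nearMajority (s : ι → ℤˣ) (ε : ℤˣ) : Set (ι → Bool) := {r | ε * signedCount s r ≤ 1}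

lemma sum_measureReal_nearMajority_inter (s : ι → ℤˣ) (E : Set (ι → Bool)) :
    ∑ ε, (Measure.pi fun _ ↦ ν).real (nearMajority s ε ∩ E) =
      (Measure.pi fun _ ↦ ν).real E +
        (Measure.pi fun _ ↦ ν).real ({r | |signedCount s r| ≤ 1} ∩ E) := by
  have hunion : nearMajority s 1 ∩ E ∪ nearMajority s (-1) ∩ E = E := by
    rw [← Set.union_inter_distrib_right, Set.inter_eq_right]
    intro r _
    simp only [nearMajority, Set.mem_union, Set.mem_ofPred_eq, Units.val_one, Units.val_neg]
    lia
  have hinter : nearMajority s 1 ∩ E ∩ (nearMajority s (-1) ∩ E) =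
      {r | |signedCount s r| ≤ 1} ∩ E := by
    rw [← Set.inter_inter_distrib_right]
    congr 1
    ext r
    simp only [nearMajority, Set.mem_inter_iff, Set.mem_ofPred_eq, Units.val_one, Units.val_neg,
      abs_le]
    lia
  rw [UnitsInt.univ, sum_pair (by decide),
    ← measureReal_union_add_inter MeasurableSet.of_discrete, hunion, hinter]

/-- The probability that a random row leaves a vertex with the pair of signs `a` majority-coloured,
up to an excess of one, for both of the 2-colourings encoded by `g`. -/
noncomputable def nearMajorityProb (g : ι → ℤˣ × ℤˣ) (a : ℤˣ × ℤˣ) : ℝ :=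
  (Measure.pi fun _ ↦ ν).real
    (nearMajority (Prod.fst ∘ g) a.1 ∩ nearMajority (Prod.snd ∘ g) a.2)

lemma nearMajorityProb_comp_perm (g : ι → ℤˣ × ℤˣ) (σ : Equiv.Perm ι) :
    nearMajorityProb ν (g ∘ σ) = nearMajorityProb ν g := by
  ext a
  unfold nearMajorityProb
  rw [← (measurePreserving_comp_perm ν σ).measureReal_preimage
    MeasurableSet.of_discrete.nullMeasurableSet]
  simp only [nearMajority, ← Function.comp_assoc, Set.preimage_inter, Set.preimage_ofPred_eq,
    signedCount_comp_perm]

lemma sum_nearMajorityProb_le {η : ℝ}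
    (hη : ∀ s : ι → ℤˣ, (Measure.pi fun _ ↦ ν).real {r | |signedCount s r| ≤ 1} ≤ η)
    (g : ι → ℤˣ × ℤˣ) : ∑ a, nearMajorityProb ν g a ≤ 1 + 3 * η := by
  set μ := Measure.pi fun _ : ι ↦ ν
  set s := Prod.fst ∘ g
  set s' := Prod.snd ∘ g
  have hs' : ∑ δ, μ.real (nearMajority s' δ) = 1 + μ.real {r | |signedCount s' r| ≤ 1} := by
    simpa [μ] using sum_measureReal_nearMajority_inter ν s' Set.univ
  calc ∑ a, nearMajorityProb ν g a
      = ∑ δ, ∑ ε, μ.real (nearMajority s ε ∩ nearMajority s' δ) := Fintype.sum_prod_type_right _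
    _ = ∑ δ, (μ.real (nearMajority s' δ) +
          μ.real ({r | |signedCount s r| ≤ 1} ∩ nearMajority s' δ)) :=
        sum_congr rfl fun δ _ ↦ sum_measureReal_nearMajority_inter ν s _
    _ ≤ ∑ δ, (μ.real (nearMajority s' δ) + η) := by
        gcongr with δ
        exact (measureReal_mono Set.inter_subset_left).trans (hη s)
    _ = 1 + μ.real {r | |signedCount s' r| ≤ 1} + 2 * η := by
        rw [sum_add_distrib, hs']
        simp
    _ ≤ 1 + 3 * η := by linarith [hη s']

end Rows

section MajorityColourings

variable {n : ℕ} {p : ℝ}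

/-- The number of majority 2-colourings, balanced or not, of the digraph encoded by `A`. -/
noncomputable def numMajColourings (n : ℕ) (A : Fin n → Fin n → Bool) : ℕ :=
  {c : Fin n → Bool | ∀ v, MajorityAt A c v}.ncard

instance : IsFiniteMeasure (diMeasure n p) := by
  unfold diMeasure
  infer_instance

lemma numMajBisections_le_numMajColourings (A : Fin n → Fin n → Bool) :
    numMajBisections n A ≤ numMajColourings n A :=
  Set.ncard_le_ncard fun _ hc ↦ hc.2

lemma majorityAt_iff_card_le {α : Type*} [DecidableEq α] (A : Fin n → Fin n → Bool)
    (c : Fin n → α) (v : Fin n) :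
    MajorityAt A c v ↔
      #{w ∈ ({w | w ≠ v ∧ c w = c v} : Finset (Fin n)) | A v w} ≤
        #{w ∈ ({w | c w ≠ c v} : Finset (Fin n)) | A v w} := by
  have hsame : {w | DiAdj A v w ∧ c w = c v} =
      (({w ∈ ({w | w ≠ v ∧ c w = c v} : Finset (Fin n)) | A v w} : Finset (Fin n)) :
        Set (Fin n)) := by
    ext w
    simp only [DiAdj, coe_filter, mem_filter, mem_univ, true_and, Set.mem_ofPred_eq]
    grind
  have hall : {w | DiAdj A v w} =
      (({w ∈ ({w | w ≠ v ∧ c w = c v} : Finset (Fin n)) | A v w} ∪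
        {w ∈ ({w | c w ≠ c v} : Finset (Fin n)) | A v w} : Finset (Fin n)) :
        Set (Fin n)) := by
    ext w
    simp only [DiAdj, coe_union, coe_filter, mem_filter, mem_univ, true_and, Set.mem_union,
      Set.mem_ofPred_eq]
    grind
  rw [MajorityAt, hsame, hall, Set.ncard_coe_finset, Set.ncard_coe_finset, card_union_of_disjoint]
  · lia
  · exact disjoint_filter_filter (disjoint_filter.2 (by grind))

/-- The sign encoding of the two colours, under which colour imbalances become signed counts. -/
def colourSign (b : Bool) : ℤˣ := if b then 1 else -1

lemma colourSign_injective : Function.Injective colourSign := by decide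

lemma MajorityAt.mem_nearMajority {A : Fin n → Fin n → Bool} {c : Fin n → Bool} {v : Fin n}
    (h : MajorityAt A c v) :
    A v ∈ nearMajority (colourSign ∘ c) (colourSign (c v)) := by
  rw [majorityAt_iff_card_le] at h
  have hsign : ∀ w, (colourSign (c v) : ℤ) * colourSign (c w) =
      (if c w = c v then 1 else 0) - if c w ≠ c v then 1 else 0 := fun w ↦ by
    cases c v <;> cases c w <;> rfl
  have hcount : colourSign (c v) * signedCount (colourSign ∘ c) (A v) =
      (#{w ∈ ({w | c w = c v} : Finset (Fin n)) | A v w} : ℤ) -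
        #{w ∈ ({w | c w ≠ c v} : Finset (Fin n)) | A v w} := by
    simp only [signedCount, Function.comp_apply, mul_sum, hsign, sum_sub_distrib, sum_boole,
      filter_comm (fun w ↦ A v w = true)]
  have hdiag : #{w ∈ ({w | c w = c v} : Finset (Fin n)) | A v w} ≤
      #{w ∈ ({w | w ≠ v ∧ c w = c v} : Finset (Fin n)) | A v w} + 1 := by
    refine (card_le_card fun w hw ↦ ?_).trans (card_insert_le v _)
    grind
  rw [nearMajority, Set.mem_ofPred_eq, hcount]
  lia

lemma IsBisection.card_same_le_card_other {c : Fin n → Bool} (hc : IsBisection c) (v : Fin n) :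
    #{w | w ≠ v ∧ c w = c v} ≤ #{w | c w ≠ c v} := by
  have hbal : |(#{w | c w = true} : ℤ) - #{w | c w = false}| ≤ 1 := by
    simpa only [IsBisection, Set.ncard_eq_toFinset_card', Set.toFinset_ofPred] using hc
  have herase : #{w | w ≠ v ∧ c w = c v} + 1 = #{w | c w = c v} := by
    rw [← card_erase_add_one (by simp : v ∈ ({w | c w = c v} : Finset (Fin n)))]
    congr 2
    grind
  have hclasses : |(#{w | c w = c v} : ℤ) - #{w | c w ≠ c v}| ≤ 1 := by
    cases c v
    · simpa only [ne_eq, Bool.not_eq_false, abs_sub_comm] using hbal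
    · simpa only [ne_eq, Bool.not_eq_true] using hbal
  rw [abs_le] at hclasses
  lia

lemma choose_le_ncard_isBisection (n : ℕ) :
    n.choose (n / 2) ≤ {c : Fin n → Bool | IsBisection c}.ncard := by
  calc n.choose (n / 2)
      = (powersetCard (n / 2) (univ : Finset (Fin n)) : Set (Finset (Fin n))).ncard := by
        rw [Set.ncard_coe_finset, card_powersetCard, card_fin]
    _ ≤ {c : Fin n → Bool | IsBisection c}.ncard := by
        refine Set.ncard_le_ncard_of_injOn (fun s j ↦ decide (j ∈ s)) (fun s hs ↦ ?_)
          fun s _ t _ hst ↦ ?_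
        · have hcard : #s = n / 2 := by simpa using hs
          have htrue : {v | decide (v ∈ s) = true} = (s : Set (Fin n)) := by ext; simp
          have hfalse : {v | decide (v ∈ s) = false} = ((sᶜ : Finset (Fin n)) : Set (Fin n)) := by
            ext; simp
          rw [Set.mem_ofPred_eq, IsBisection, htrue, hfalse, Set.ncard_coe_finset,
            Set.ncard_coe_finset, card_compl, Fintype.card_fin, hcard, abs_le]
          lia
        · ext j
          simpa using congrFun hst j

lemma two_pow_le_succ_mul_ncard_isBisection (n : ℕ) :
    2 ^ n ≤ (n + 1) * {c : Fin n → Bool | IsBisection c}.ncard := by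
  calc 2 ^ n = ∑ k ∈ range (n + 1), n.choose k := (Nat.sum_range_choose n).symm
    _ ≤ ∑ _k ∈ range (n + 1), n.choose (n / 2) := by
        gcongr with k
        exact Nat.choose_le_middle k n
    _ = (n + 1) * n.choose (n / 2) := by simp
    _ ≤ (n + 1) * {c : Fin n → Bool | IsBisection c}.ncard := by
        gcongr
        exact choose_le_ncard_isBisection n

lemma IsBisection.half_pow_le_measureReal (hp : p ∈ Set.Icc (0 : ℝ) 1) {c : Fin n → Bool}
    (hc : IsBisection c) :
    (1 / 2) ^ n ≤ (diMeasure n p).real {A | ∀ v, MajorityAt A c v} := by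
  have := isProbabilityMeasure_bernoulliM_s12 hp
  calc (1 / 2 : ℝ) ^ n = ∏ _v : Fin n, 1 / 2 := by simp
    _ ≤ ∏ v, (Measure.pi fun _ ↦ bernoulliM p).real
          {r | #{w ∈ ({w | w ≠ v ∧ c w = c v} : Finset (Fin n)) | r w} ≤
            #{w ∈ ({w | c w ≠ c v} : Finset (Fin n)) | r w}} := by
        gcongr with v
        exact half_le_measureReal_card_filter_le _ (disjoint_filter.2 (by grind))
          (hc.card_same_le_card_other v)
    _ = (diMeasure n p).real {A | ∀ v, MajorityAt A c v} := by
        simp only [majorityAt_iff_card_le]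
        exact (measureReal_pi_setOf_forall_mem _ _).symm

lemma inv_succ_le_integral_numMajBisections (hp : p ∈ Set.Icc (0 : ℝ) 1) :
    ((n : ℝ) + 1)⁻¹ ≤ ∫ A, (numMajBisections n A : ℝ) ∂diMeasure n p := by
  classical
  have hcount : (2 : ℝ) ^ n ≤ (n + 1) * #{c : Fin n → Bool | IsBisection c} := by
    have h := two_pow_le_succ_mul_ncard_isBisection n
    rw [Set.ncard_eq_toFinset_card', Set.toFinset_ofPred] at h
    exact_mod_cast h
  calc ((n : ℝ) + 1)⁻¹ ≤ #{c : Fin n → Bool | IsBisection c} * (1 / 2 : ℝ) ^ n := by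
        rw [inv_le_iff_one_le_mul₀' (by positivity), ← mul_assoc, one_div, inv_pow,
          ← div_eq_mul_inv, one_le_div (by positivity)]
        exact hcount
    _ = ∑ c : Fin n → Bool with IsBisection c, (1 / 2 : ℝ) ^ n := by simp
    _ ≤ ∑ c : Fin n → Bool with IsBisection c,
          (diMeasure n p).real {A | IsBisection c ∧ ∀ v, MajorityAt A c v} :=
        sum_le_sum fun c hc ↦ by
          simpa only [(mem_filter.1 hc).2, true_and] using
            (mem_filter.1 hc).2.half_pow_le_measureReal hp
    _ ≤ ∑ c : Fin n → Bool, (diMeasure n p).real {A | IsBisection c ∧ ∀ v, MajorityAt A c v} :=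
        sum_le_univ_sum_of_nonneg fun _ ↦ measureReal_nonneg
    _ = ∫ A, (numMajBisections n A : ℝ) ∂diMeasure n p :=
        (integral_ncard_setOf _ fun _ ↦ .of_discrete).symm

lemma integral_sq_numMajBisections_le :
    ∫ A, (numMajBisections n A : ℝ) ^ 2 ∂diMeasure n p ≤
      ∫ A, (numMajColourings n A : ℝ) ^ 2 ∂diMeasure n p :=
  integral_mono .of_finite .of_finite fun A ↦
    pow_le_pow_left₀ (Nat.cast_nonneg _) (Nat.cast_le.2 (numMajBisections_le_numMajColourings A)) 2

lemma sq_numMajColourings_le (A : Fin n → Fin n → Bool) :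
    numMajColourings n A ^ 2 ≤ {g : Fin n → ℤˣ × ℤˣ | ∀ v, A v ∈
      nearMajority (Prod.fst ∘ g) (g v).1 ∩ nearMajority (Prod.snd ∘ g) (g v).2}.ncard := by
  rw [sq, numMajColourings, ← Set.ncard_prod]
  refine Set.ncard_le_ncard_of_injOn
    (fun c j ↦ (colourSign (c.1 j), colourSign (c.2 j))) (fun c hc v ↦ ?_) fun c _ d _ hcd ↦ ?_
  · exact ⟨(hc.1 v).mem_nearMajority, (hc.2 v).mem_nearMajority⟩
  · exact Prod.ext (funext fun j ↦ colourSign_injective (congrArg Prod.fst (congrFun hcd j)))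
      (funext fun j ↦ colourSign_injective (congrArg Prod.snd (congrFun hcd j)))

lemma integral_sq_numMajColourings_le (hp : p ∈ Set.Icc (0 : ℝ) 1) {η : ℝ}
    (hη : ∀ s : Fin n → ℤˣ,
      (Measure.pi fun _ ↦ bernoulliM p).real {r | |signedCount s r| ≤ 1} ≤ η) :
    ∫ A, (numMajColourings n A : ℝ) ^ 2 ∂diMeasure n p ≤ ((n : ℝ) + 1) ^ 4 * (1 + 3 * η) ^ n := by
  have := isProbabilityMeasure_bernoulliM_s12 hp
  have hη₀ : 0 ≤ η := measureReal_nonneg.trans (hη 1)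
  calc ∫ A, (numMajColourings n A : ℝ) ^ 2 ∂diMeasure n p
      ≤ ∫ A, ({g : Fin n → ℤˣ × ℤˣ | ∀ v, A v ∈ nearMajority (Prod.fst ∘ g) (g v).1 ∩
          nearMajority (Prod.snd ∘ g) (g v).2}.ncard : ℝ) ∂diMeasure n p :=
        integral_mono .of_finite .of_finite fun A ↦ by exact_mod_cast sq_numMajColourings_le A
    _ = ∑ g : Fin n → ℤˣ × ℤˣ, ∏ v, nearMajorityProb (bernoulliM p) g (g v) := by
        rw [integral_ncard_setOf _ fun _ ↦ .of_discrete]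
        exact sum_congr rfl fun g _ ↦ measureReal_pi_setOf_forall_mem _ _
    _ ≤ ((n : ℝ) + 1) ^ 4 * (1 + 3 * η) ^ n := by
        simpa using sum_prod_apply_le_of_comp_perm (q := nearMajorityProb (bernoulliM p))
          (fun _ _ ↦ measureReal_nonneg) (nearMajorityProb_comp_perm _)
          (sum_nearMajorityProb_le _ hη) (by positivity)

end MajorityColourings

section Asymptotics

lemma eventually_natCast_add_one_pow_le_exp {δ : ℝ} (hδ : 0 < δ) (m : ℕ) :
    ∀ᶠ n : ℕ in atTop, ((n : ℝ) + 1) ^ m ≤ Real.exp (δ * n) := by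
  have hshift : Tendsto (fun n : ℕ ↦ (n : ℝ) + 1) atTop atTop :=
    tendsto_atTop_add_const_right _ _ tendsto_natCast_atTop_atTop
  have hlittle := (isLittleO_pow_exp_pos_mul_atTop m hδ).comp_tendsto hshift
  filter_upwards [hlittle.bound (Real.exp_pos (-δ))] with n hn
  simp only [Function.comp_apply, Real.norm_eq_abs, Real.abs_exp, ← Real.exp_add] at hn
  refine (le_abs_self _).trans (hn.trans_eq ?_)
  ring_nf

variable {p : ℕ → ℝ}

lemma eventually_exp_le_integral_numMajBisections (hp : ∀ n, p n ∈ Set.Icc (0 : ℝ) 1) {ε : ℝ}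
    (hε : 0 < ε) :
    ∀ᶠ n : ℕ in atTop,
      Real.exp (-ε * n) ≤ ∫ A, (numMajBisections n A : ℝ) ∂diMeasure n (p n) := by
  filter_upwards [eventually_natCast_add_one_pow_le_exp hε 1] with n hn
  calc Real.exp (-ε * n) = (Real.exp (ε * n))⁻¹ := by rw [neg_mul, Real.exp_neg]
    _ ≤ ((n : ℝ) + 1)⁻¹ := inv_anti₀ (by positivity) (by simpa using hn)
    _ ≤ ∫ A, (numMajBisections n A : ℝ) ∂diMeasure n (p n) :=
      inv_succ_le_integral_numMajBisections (hp n)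

lemma eventually_integral_sq_numMajColourings_le_exp (hp : ∀ n, p n ∈ Set.Icc (0 : ℝ) 1)
    (hgrow : Tendsto (fun n : ℕ ↦ (n : ℝ) * p n * (1 - p n)) atTop atTop) {ε : ℝ} (hε : 0 < ε) :
    ∀ᶠ n : ℕ in atTop,
      ∫ A, (numMajColourings n A : ℝ) ^ 2 ∂diMeasure n (p n) ≤ Real.exp (ε * n) := by
  have hlim : Tendsto (fun n : ℕ ↦ 1 + 3 * (3 * √(π / (8 * (n * p n * (1 - p n)))))) atTop
      (nhds 1) := by
    have hdiv := (hgrow.const_mul_atTop (by norm_num : (0 : ℝ) < 8)).const_div_atTop π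
    simpa using ((hdiv.sqrt.const_mul 3).const_mul 3).const_add 1
  filter_upwards [eventually_natCast_add_one_pow_le_exp (half_pos hε) 4,
    hgrow.eventually_gt_atTop 0,
    hlim.eventually_le_const (Real.one_lt_exp_iff.2 (half_pos hε))] with n hpoly hpos hbase
  set η := 3 * √(π / (8 * (n * p n * (1 - p n))))
  calc ∫ A, (numMajColourings n A : ℝ) ^ 2 ∂diMeasure n (p n)
      ≤ ((n : ℝ) + 1) ^ 4 * (1 + 3 * η) ^ n :=
        integral_sq_numMajColourings_le (hp n) fun s ↦ by
          simpa using measureReal_abs_signedCount_le_one_le (hp n) (by simpa using hpos) s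
    _ ≤ Real.exp (ε / 2 * n) * Real.exp (ε / 2) ^ n := by gcongr
    _ = Real.exp (ε * n) := by
        rw [← Real.exp_nat_mul, ← Real.exp_add]
        ring_nf

end Asymptotics

theorem majority_bisection_moments_general (p : ℕ → ℝ) (hp : ∀ n, p n ∈ Set.Icc (0 : ℝ) 1) :
    (∀ ε : ℝ, 0 < ε → ∀ᶠ n : ℕ in atTop,
      Real.exp (-ε * n) ≤ ∫ A, (numMajBisections n A : ℝ) ∂diMeasure n (p n)) ∧
    (Tendsto (fun n : ℕ ↦ (n : ℝ) * p n * (1 - p n)) atTop atTop →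
      ∀ ε : ℝ, 0 < ε → ∀ᶠ n : ℕ in atTop,
        ∫ A, (numMajColourings n A : ℝ) ^ 2 ∂diMeasure n (p n) ≤ Real.exp (ε * n)) :=
  ⟨fun _ ↦ eventually_exp_le_integral_numMajBisections hp,
    fun hgrow _ ↦ eventually_integral_sq_numMajColourings_le_exp hp hgrow⟩

/-- If `n·pₙ·(1−pₙ) → ∞` and `Xₙ` is the number of majority bisections of
`D ~ 𝔻(n,pₙ)`, then `E[Xₙ] ≥ e^{−o(n)}` and `E[Xₙ²] ≤ e^{o(n)}`. -/
theorem majority_bisection_moments (p : ℕ → ℝ) (hp : ∀ n, p n ∈ Set.Icc (0 : ℝ) 1)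
    (hgrow : Tendsto (fun n : ℕ => (n : ℝ) * p n * (1 - p n)) atTop atTop) :
    (∀ ε : ℝ, 0 < ε → ∀ᶠ n : ℕ in atTop,
      Real.exp (-ε * n) ≤ ∫ A, (numMajBisections n A : ℝ) ∂(diMeasure n (p n))) ∧
    (∀ ε : ℝ, 0 < ε → ∀ᶠ n : ℕ in atTop,
      (∫ A, ((numMajBisections n A : ℝ)) ^ 2 ∂(diMeasure n (p n))) ≤ Real.exp (ε * n)) := by
  obtain ⟨hfirst, hsecond⟩ := majority_bisection_moments_general p hp
  exact ⟨hfirst, fun ε hε ↦ (hsecond hgrow ε hε).mono fun n ↦ integral_sq_numMajBisections_le.trans⟩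
end
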